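/- There exist positive constants C, c_a, c_b, c_c with the following property. Let n ≥ 2, θ ∈ (0, 1/2), 0 < μ < c_a · min{θ n^{-1}, n^{-5/4}}, let X₀ ∈ ℝ^{n×p} have i.i.d. BG(θ) entries, and suppose p ≥ (C/(μ²θ²)) n³ log(n/(μθ)). Then with probability at least 1 − c_b p^{-5}, the function q ↦ f(q; X₀) has exactly 2n local minimizers over the sphere S^{n−1}, and there is a bijection between these local minimizers and the signed standard basis vectors {±e_i : i = 1,…,n} such that each local minimizer q_star and its corresponding signed basis vector b satisfy ‖q_star − b‖ ≤ √2 · min{(c_c μ/θ)√(n log p / p), μ/16}. -/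

import Mathlib

open MeasureTheory ProbabilityTheory Real Matrix
open scoped RealInnerProductSpace ENNReal NNReal

noncomputable section

/-- The Bernoulli–Gaussian law `BG(θ)`: with probability `θ` a standard Gaussian,
with probability `1-θ` a point mass at `0`. -/
def bg (θ : ℝ) : Measure ℝ :=
  θ.toNNReal • gaussianReal 0 1 + (1 - θ).toNNReal • Measure.dirac 0

instance bg.instIsFiniteMeasure (θ : ℝ) : IsFiniteMeasure (bg θ) := by
  unfold bg; infer_instance

/-- Law of an `n × p` matrix with i.i.d. `BG(θ)` entries. -/
def bgMatrix (θ : ℝ) (n p : ℕ) : Measure (Fin n → Fin p → ℝ) :=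
  Measure.pi fun _ => Measure.pi fun _ => bg θ

/-- Law of a vector in `ℝ^n` with i.i.d. `BG(θ)` entries. -/
def bgVec (θ : ℝ) (n : ℕ) : Measure (Fin n → ℝ) :=
  Measure.pi fun _ => bg θ

/-- The smooth sparsity surrogate `h_μ(z) = μ log cosh (z/μ)`. -/
def hmu (μ z : ℝ) : ℝ := μ * Real.log (Real.cosh (z / μ))

/-- Reparametrization `q(w) = (w, √(1-‖w‖²))` with `w` in the unit ball of `ℝ^{n-1}`. -/
def qmap (n : ℕ) (w : EuclideanSpace ℝ (Fin (n - 1))) : Fin n → ℝ :=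
  fun i => if h : (i : ℕ) < n - 1 then w ⟨i, h⟩ else Real.sqrt (1 - ‖w‖ ^ 2)

/-- `f(q; Y) = (1/p) ∑ₖ h_μ(qᵀ yₖ)`. -/
def ffun (n p : ℕ) (μ : ℝ) (Y : Matrix (Fin n) (Fin p) ℝ)
    (q : EuclideanSpace ℝ (Fin n)) : ℝ :=
  (p : ℝ)⁻¹ * ∑ k : Fin p, hmu μ (∑ i : Fin n, q i * Y i k)

/-- `g(w; Y) = f(q(w); Y)`. -/
def gfun (n p : ℕ) (μ : ℝ) (Y : Matrix (Fin n) (Fin p) ℝ)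
    (w : EuclideanSpace ℝ (Fin (n - 1))) : ℝ :=
  (p : ℝ)⁻¹ * ∑ k : Fin p, hmu μ (∑ i : Fin n, qmap n w i * Y i k)

/-- Gradient `∇g(w; Y)` in `w`. -/
def gradg (n p : ℕ) (μ : ℝ) (Y : Matrix (Fin n) (Fin p) ℝ)
    (w : EuclideanSpace ℝ (Fin (n - 1))) : EuclideanSpace ℝ (Fin (n - 1)) :=
  gradient (gfun n p μ Y) w

/-- Hessian `∇²g(w; Y)` in `w`, as a continuous linear map. -/
def hessg (n p : ℕ) (μ : ℝ) (Y : Matrix (Fin n) (Fin p) ℝ)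
    (w : EuclideanSpace ℝ (Fin (n - 1))) :
    EuclideanSpace ℝ (Fin (n - 1)) →L[ℝ] EuclideanSpace ℝ (Fin (n - 1)) :=
  fderiv ℝ (gradg n p μ Y) w

/-- The set `Γ = {w : ‖w‖ < √((4n-1)/(4n))}`. -/
def GammaSet (n : ℕ) : Set (EuclideanSpace ℝ (Fin (n - 1))) :=
  {w | ‖w‖ < Real.sqrt ((4 * (n : ℝ) - 1) / (4 * n))}

/-- Spectral (`ℓ²→ℓ²` operator) norm of а matrix. -/
def specNorm {m k : ℕ} (M : Matrix (Fin m) (Fin k) ℝ) : ℝ :=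
  ‖LinearMap.toContinuousLinearMap (Matrix.toEuclideanLin M)‖

/-- Largest magnitude of an entry of a matrix. -/
def Minf {m k : ℕ} (M : Matrix (Fin m) (Fin k) ℝ) : ℝ := ⨆ i, ⨆ j, |M i j|

/-- Condition number: ratio of largest to smallest singular value. -/
def kappa {n : ℕ} (s : Fin n → ℝ) : ℝ := (⨆ i, s i) / (⨅ i, s i)

/-- Signed standard basis vectors `{± e_i}` of `ℝ^n`. -/
def SignedBasis (n : ℕ) : Set (EuclideanSpace ℝ (Fin n)) :=
  {b | ∃ i : Fin n, b = EuclideanSpace.single i (1 : ℝ) ∨ b = -EuclideanSpace.single i (1 : ℝ)}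

/-- Set of local minimizers of `f(·; Y)` over the unit sphere `S^{n-1}`. -/
def LocalMins (n p : ℕ) (μ : ℝ) (Y : Matrix (Fin n) (Fin p) ℝ) :
    Set (EuclideanSpace ℝ (Fin n)) :=
  {q | q ∈ Metric.sphere (0 : EuclideanSpace ℝ (Fin n)) 1 ∧
       IsLocalMinOn (ffun n p μ Y) (Metric.sphere (0 : EuclideanSpace ℝ (Fin n)) 1) q}

/-- Expected objective `E_x[h_μ(q(w)ᵀ x)]` for `x` with i.i.d. `BG(θ)` entries. -/
def Gexp (n : ℕ) (θ μ : ℝ) (w : EuclideanSpace ℝ (Fin (n - 1))) : ℝ :=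
  ∫ x, hmu μ (∑ i : Fin n, qmap n w i * x i) ∂(bgVec θ n)

/-!
Conditionally on the Bernoulli supports, `qᵀ x` is a centred Gaussian, so the population slope and
curvature of the objective are averages over random subsets of coordinates of Gaussian integrals of
`sech²`. Uniformly over base points in the unit ball and over directions, the empirical slope and
curvature deviate from them by at most a multiple of `ε ≍ √(n log p / p)`, except with probability
`5 p⁻⁵`.

Let `i` be a largest coordinate of a local minimizer `q`, and rotate `q` in the plane of `e_i` and
`e_j`. The first-order condition makes the population slope of this rotation small; if `q j` were
comparable to `q i`, the curvature would be too negative for a minimum, and if `q j` were smaller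
but larger than `μ`, the slope would be too large. Hence every local minimizer lies close to some
`± e_i`, and there the slope towards the pole forces the distance to the axis below
`min (ε μ / (c θ)) (μ / 16)`. Minimizing over such a cap yields a local minimizer in its interior,
and strict convexity of the objective along the great circles of the cap makes it the only one.
-/

/-- The squared hyperbolic secant, the derivative of `tanh`. -/
def sech2 (z : ℝ) : ℝ := (cosh z ^ 2)⁻¹

lemma sech2_pos (z : ℝ) : 0 < sech2 z :=
  inv_pos.2 (pow_pos (cosh_pos z) 2)

lemma abs_sech2 (z : ℝ) : |sech2 z| = sech2 z := abs_of_pos (sech2_pos z)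

lemma sech2_le_one (z : ℝ) : sech2 z ≤ 1 :=
  inv_le_one_of_one_le₀ (one_le_pow₀ (one_le_cosh z))

@[fun_prop]
lemma continuous_sech2 : Continuous sech2 :=
  (continuous_cosh.pow 2).inv₀ fun z => (pow_pos (cosh_pos z) 2).ne'

lemma sech2_le_sech2_of_abs_le {x y : ℝ} (h : |x| ≤ |y|) : sech2 y ≤ sech2 x :=
  inv_anti₀ (pow_pos (cosh_pos x) 2) (pow_le_pow_left₀ (cosh_pos x).le (cosh_le_cosh.2 h) 2)

lemma sech2_le_four_mul_exp (z : ℝ) : sech2 z ≤ 4 * exp (-(2 * |z|)) := by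
  have hcosh : exp |z| / 2 ≤ cosh z := by
    rw [← cosh_abs, cosh_eq]
    linarith [exp_pos (-|z|)]
  calc sech2 z ≤ ((exp |z| / 2) ^ 2)⁻¹ := by unfold sech2; gcongr
    _ = 4 * exp (-(2 * |z|)) := by
      rw [exp_neg, two_mul, exp_add]
      field_simp
      norm_num

lemma sech2_eq_one_sub_tanh_sq (z : ℝ) : sech2 z = 1 - tanh z ^ 2 := by
  have := cosh_pos z
  rw [tanh_eq_sinh_div_cosh, sech2]
  field_simp
  linarith [cosh_sq z]

lemma hasDerivAt_tanh (z : ℝ) : HasDerivAt tanh (sech2 z) z := by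
  have h := (hasDerivAt_sinh z).div (hasDerivAt_cosh z) (cosh_pos z).ne'
  refine (h.congr_deriv ?_).congr_of_eventuallyEq (.of_forall tanh_eq_sinh_div_cosh)
  rw [← sq, ← sq, cosh_sq, add_sub_cancel_left, ← cosh_sq, one_div, sech2]

@[fun_prop]
lemma continuous_tanh : Continuous tanh :=
  continuous_iff_continuousAt.2 fun z => (hasDerivAt_tanh z).continuousAt

lemma abs_tanh_le_one (z : ℝ) : |tanh z| ≤ 1 := (abs_tanh_lt_one z).le

lemma hasDerivAt_sech2 (z : ℝ) : HasDerivAt sech2 (-2 * tanh z * sech2 z) z := by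
  have h := ((hasDerivAt_tanh z).pow 2).const_sub 1
  refine (h.congr_deriv ?_).congr_of_eventuallyEq (.of_forall sech2_eq_one_sub_tanh_sq)
  ring

lemma abs_tanh_sub_le (x y : ℝ) : |tanh x - tanh y| ≤ |x - y| := by
  simpa using convex_univ.norm_image_sub_le_of_norm_hasDerivWithin_le (C := 1) (x := y) (y := x)
    (fun z _ => (hasDerivAt_tanh z).hasDerivWithinAt)
    (fun z _ => (abs_sech2 z).trans_le (sech2_le_one z)) trivial trivial

lemma abs_sech2_sub_le (x y : ℝ) : |sech2 x - sech2 y| ≤ 2 * |x - y| := by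
  refine convex_univ.norm_image_sub_le_of_norm_hasDerivWithin_le (x := y) (y := x)
    (fun z _ => (hasDerivAt_sech2 z).hasDerivWithinAt) (fun z _ => ?_) trivial trivial
  calc ‖-2 * tanh z * sech2 z‖ = 2 * |tanh z| * sech2 z := by simp [abs_sech2]
    _ ≤ 2 * 1 * 1 := by
      gcongr
      exacts [(sech2_pos z).le, abs_tanh_le_one z, sech2_le_one z]
    _ = 2 := by norm_num

lemma integrable_exp_neg_abs : Integrable fun u : ℝ => exp (-|u|) := by
  rw [← integrableOn_univ, ← Set.Iic_union_Ioi (a := (0 : ℝ)), integrableOn_union]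
  constructor
  · refine (integrableOn_exp_Iic 0).congr_fun (fun u hu => ?_) measurableSet_Iic
    simp only [abs_of_nonpos (Set.mem_Iic.1 hu), neg_neg]
  · refine (integrableOn_exp_neg_Ioi 0).congr_fun (fun u hu => ?_) measurableSet_Ioi
    simp only [abs_of_pos (Set.mem_Ioi.1 hu)]

lemma integrable_sech2_mul_abs_pow (k : ℕ) : Integrable fun u : ℝ => sech2 u * |u| ^ k := by
  refine (integrable_exp_neg_abs.const_mul (4 * k.factorial)).mono' (by fun_prop)
    (ae_of_all _ fun u => ?_)
  have hpow : |u| ^ k ≤ k.factorial * exp |u| :=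
    (div_le_iff₀' (by positivity)).1 (pow_div_factorial_le_exp |u| (abs_nonneg u) k)
  calc ‖sech2 u * |u| ^ k‖ = sech2 u * |u| ^ k := by simp [abs_sech2]
    _ ≤ 4 * exp (-(2 * |u|)) * (k.factorial * exp |u|) := by
      gcongr
      exact sech2_le_four_mul_exp u
    _ = 4 * k.factorial * exp (-|u|) := by
      rw [show -|u| = -(2 * |u|) + |u| by ring, exp_add]
      ring

lemma integrable_sech2 : Integrable sech2 := by simpa using integrable_sech2_mul_abs_pow 0

lemma integrable_sech2_mul_sq : Integrable fun u : ℝ => sech2 u * u ^ 2 := by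
  simpa using integrable_sech2_mul_abs_pow 2

/-- The total mass of `sech²`. -/
def sech2Mass : ℝ := ∫ u, sech2 u

/-- The second moment of the density `sech²`. -/
def sech2SecondMoment : ℝ := ∫ u, sech2 u * u ^ 2

lemma sech2Mass_nonneg : 0 ≤ sech2Mass := integral_nonneg fun u => (sech2_pos u).le

lemma sech2SecondMoment_nonneg : 0 ≤ sech2SecondMoment :=
  integral_nonneg fun u => mul_nonneg (sech2_pos u).le (sq_nonneg u)

lemma gaussianPDFReal_zero_one (v : ℝ) :
    gaussianPDFReal 0 1 v = (√(2 * π))⁻¹ * exp (-v ^ 2 / 2) := by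
  simp [gaussianPDFReal]

lemma inv_sqrt_two_pi_le_one : (√(2 * π))⁻¹ ≤ 1 :=
  inv_le_one_of_one_le₀ (one_le_sqrt.2 (by linarith [pi_gt_three]))

lemma gaussianPDFReal_zero_one_le (v : ℝ) : gaussianPDFReal 0 1 v ≤ (√(2 * π))⁻¹ := by
  rw [gaussianPDFReal_zero_one]
  exact mul_le_of_le_one_right (by positivity) (exp_le_one_iff.2 (by linarith [sq_nonneg v]))

lemma gaussianPDFReal_zero_one_le_one (v : ℝ) : gaussianPDFReal 0 1 v ≤ 1 :=
  (gaussianPDFReal_zero_one_le v).trans inv_sqrt_two_pi_le_one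

lemma hasDerivAt_gaussianPDFReal_zero_one (v : ℝ) :
    HasDerivAt (gaussianPDFReal 0 1) (-v * gaussianPDFReal 0 1 v) v := by
  have h := ((((hasDerivAt_id v).pow 2).neg.div_const 2).exp).const_mul (√(2 * π))⁻¹
  refine (h.congr_deriv ?_).congr_of_eventuallyEq (.of_forall gaussianPDFReal_zero_one)
  rw [gaussianPDFReal_zero_one]
  simp only [Pi.neg_apply, Pi.pow_apply, id_eq, Nat.cast_ofNat]
  ring

lemma integrable_gaussianReal_iff {f : ℝ → ℝ} :
    Integrable f (gaussianReal 0 1) ↔ Integrable fun v => f v * gaussianPDFReal 0 1 v := by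
  rw [gaussianReal_of_var_ne_zero _ one_ne_zero,
    integrable_withDensity_iff_integrable_smul' (measurable_gaussianPDF 0 1)
      (ae_of_all _ fun _ => gaussianPDF_lt_top)]
  simp [toReal_gaussianPDF, mul_comm]

lemma integral_gaussianReal_eq_integral_mul (f : ℝ → ℝ) :
    ∫ v, f v ∂gaussianReal 0 1 = ∫ v, f v * gaussianPDFReal 0 1 v := by
  rw [integral_gaussianReal_eq_integral_smul one_ne_zero]
  simp only [smul_eq_mul, mul_comm]

/-- Stein's identity. -/
lemma integral_mul_id_gaussianReal {f f' : ℝ → ℝ} (hf : ∀ v, HasDerivAt f (f' v) v)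
    (hfi : Integrable f (gaussianReal 0 1)) (hf'i : Integrable f' (gaussianReal 0 1))
    (hfv : Integrable (fun v => f v * v) (gaussianReal 0 1)) :
    ∫ v, f v * v ∂gaussianReal 0 1 = ∫ v, f' v ∂gaussianReal 0 1 := by
  rw [integrable_gaussianReal_iff] at hfi hf'i hfv
  have parts := integral_mul_deriv_eq_deriv_mul_of_integrable (fun v _ => hf v)
    (fun v _ => hasDerivAt_gaussianPDFReal_zero_one v)
    (hfv.neg.congr (ae_of_all _ fun v => by simp; ring)) hf'i hfi
  rw [integral_gaussianReal_eq_integral_mul, integral_gaussianReal_eq_integral_mul, ← neg_inj,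
    ← parts, ← integral_neg]
  congr 1 with v
  ring

/-- The Gaussian average `E sech²(τ V)`, `V ~ N(0, 1)`. -/
def meanSech2 (τ : ℝ) : ℝ := ∫ v, sech2 (τ * v) ∂gaussianReal 0 1

/-- The Gaussian average `E [sech²(τ V) V²]`, `V ~ N(0, 1)`. -/
def meanSech2MulSq (τ : ℝ) : ℝ := ∫ v, sech2 (τ * v) * v ^ 2 ∂gaussianReal 0 1

lemma integrable_sq_gaussianReal : Integrable (fun v : ℝ => v ^ 2) (gaussianReal 0 1) :=
  (memLp_id_gaussianReal' (μ := 0) (v := 1) 2 (by simp)).integrable_sq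

lemma integrable_meanSech2 (τ : ℝ) : Integrable (fun v => sech2 (τ * v)) (gaussianReal 0 1) :=
  .of_bound (by fun_prop) 1 (ae_of_all _ fun _ => (abs_sech2 _).trans_le (sech2_le_one _))

lemma integrable_meanSech2MulSq (τ : ℝ) :
    Integrable (fun v => sech2 (τ * v) * v ^ 2) (gaussianReal 0 1) :=
  integrable_sq_gaussianReal.bdd_mul (c := 1) (by fun_prop)
    (ae_of_all _ fun _ => (abs_sech2 _).trans_le (sech2_le_one _))

lemma sech2_mul_le_sech2_mul {α β : ℝ} (hα : 0 ≤ α) (h : α ≤ β) (v : ℝ) :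
    sech2 (β * v) ≤ sech2 (α * v) := by
  apply sech2_le_sech2_of_abs_le
  rw [abs_mul, abs_mul, abs_of_nonneg hα, abs_of_nonneg (hα.trans h)]
  gcongr

lemma meanSech2_le_of_le {α β : ℝ} (hα : 0 ≤ α) (h : α ≤ β) : meanSech2 β ≤ meanSech2 α :=
  integral_mono (integrable_meanSech2 β) (integrable_meanSech2 α) (sech2_mul_le_sech2_mul hα h)

lemma meanSech2MulSq_le_of_le {α β : ℝ} (hα : 0 ≤ α) (h : α ≤ β) :
    meanSech2MulSq β ≤ meanSech2MulSq α :=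
  integral_mono (integrable_meanSech2MulSq β) (integrable_meanSech2MulSq α) fun v =>
    mul_le_mul_of_nonneg_right (sech2_mul_le_sech2_mul hα h v) (sq_nonneg v)

lemma meanSech2_pos (τ : ℝ) : 0 < meanSech2 τ := by
  have hsupp : Function.support (fun v => sech2 (τ * v)) = Set.univ :=
    Set.eq_univ_of_forall fun v => (sech2_pos _).ne'
  rw [meanSech2, integral_pos_iff_support_of_nonneg (fun v => (sech2_pos _).le)
    (integrable_meanSech2 τ), hsupp]
  simp

lemma meanSech2MulSq_pos (τ : ℝ) : 0 < meanSech2MulSq τ := by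
  have hsupp : Function.support (fun v => sech2 (τ * v) * v ^ 2) = {0}ᶜ := by
    ext v
    simp [(sech2_pos _).ne']
  have := nullSingletonClass_gaussianReal (μ := 0) (v := 1) one_ne_zero
  rw [meanSech2MulSq, integral_pos_iff_support_of_nonneg
    (fun v => mul_nonneg (sech2_pos _).le (sq_nonneg v)) (integrable_meanSech2MulSq τ), hsupp,
    prob_compl_eq_one_sub (measurableSet_singleton _), measure_singleton]
  simp

lemma integrable_sech2_mul_gaussianPDFReal (τ : ℝ) :
    Integrable fun u : ℝ => sech2 u * gaussianPDFReal 0 1 (τ⁻¹ * u) := by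
  refine integrable_sech2.mul_bdd (c := 1)
    ((measurable_gaussianPDFReal 0 1).comp (measurable_const_mul _)).aestronglyMeasurable
    (ae_of_all _ fun u => ?_)
  rw [norm_eq_abs, abs_of_nonneg (gaussianPDFReal_nonneg _ _ _)]
  exact gaussianPDFReal_zero_one_le_one _

lemma mul_meanSech2 {τ : ℝ} (hτ : 0 < τ) :
    τ * meanSech2 τ = ∫ u, sech2 u * gaussianPDFReal 0 1 (τ⁻¹ * u) := by
  have hsubst := Measure.integral_comp_mul_left
    (fun u => sech2 u * gaussianPDFReal 0 1 (τ⁻¹ * u)) τ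
  simp only [inv_mul_cancel_left₀ hτ.ne', abs_of_pos (inv_pos.2 hτ), smul_eq_mul] at hsubst
  rw [meanSech2, integral_gaussianReal_eq_integral_mul, hsubst, mul_inv_cancel_left₀ hτ.ne']

lemma meanSech2_one_le_mul_meanSech2 {τ : ℝ} (hτ : 1 ≤ τ) : meanSech2 1 ≤ τ * meanSech2 τ := by
  rw [mul_meanSech2 (by linarith), ← one_mul (meanSech2 1), mul_meanSech2 one_pos]
  refine integral_mono (integrable_sech2_mul_gaussianPDFReal 1)
    (integrable_sech2_mul_gaussianPDFReal τ) fun u => ?_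
  refine mul_le_mul_of_nonneg_left ?_ (sech2_pos u).le
  have hinv : τ⁻¹ ≤ 1⁻¹ := inv_anti₀ one_pos hτ
  have : 0 ≤ τ⁻¹ := by positivity
  simp only [gaussianPDFReal_zero_one, mul_pow]
  gcongr

lemma mul_meanSech2_le {τ : ℝ} (hτ : 0 < τ) : τ * meanSech2 τ ≤ sech2Mass := by
  rw [mul_meanSech2 hτ]
  exact integral_mono (integrable_sech2_mul_gaussianPDFReal τ) integrable_sech2 fun u =>
    mul_le_of_le_one_right (sech2_pos u).le (gaussianPDFReal_zero_one_le_one _)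

lemma mul_meanSech2_sub_mul_meanSech2_le {α β : ℝ} (hα : 0 < α) (hβ : 0 < β) :
    β * meanSech2 β - α * meanSech2 α ≤ sech2SecondMoment / α ^ 2 := by
  have hpdf (u : ℝ) :
      gaussianPDFReal 0 1 (β⁻¹ * u) - gaussianPDFReal 0 1 (α⁻¹ * u) ≤ (α⁻¹ * u) ^ 2 := by
    have hlower : (√(2 * π))⁻¹ * (1 - (α⁻¹ * u) ^ 2) ≤ gaussianPDFReal 0 1 (α⁻¹ * u) := by
      rw [gaussianPDFReal_zero_one]
      gcongr
      linarith [add_one_le_exp (-(α⁻¹ * u) ^ 2 / 2), sq_nonneg (α⁻¹ * u)]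
    linarith [gaussianPDFReal_zero_one_le (β⁻¹ * u),
      mul_le_of_le_one_left (sq_nonneg (α⁻¹ * u)) inv_sqrt_two_pi_le_one]
  rw [mul_meanSech2 hα, mul_meanSech2 hβ, ← integral_sub (integrable_sech2_mul_gaussianPDFReal β)
    (integrable_sech2_mul_gaussianPDFReal α), sech2SecondMoment, ← integral_div]
  refine integral_mono ((integrable_sech2_mul_gaussianPDFReal β).sub
    (integrable_sech2_mul_gaussianPDFReal α)) (integrable_sech2_mul_sq.div_const _) fun u => ?_
  calc sech2 u * gaussianPDFReal 0 1 (β⁻¹ * u) - sech2 u * gaussianPDFReal 0 1 (α⁻¹ * u)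
      = sech2 u * (gaussianPDFReal 0 1 (β⁻¹ * u) - gaussianPDFReal 0 1 (α⁻¹ * u)) := by ring
    _ ≤ sech2 u * (α⁻¹ * u) ^ 2 := mul_le_mul_of_nonneg_left (hpdf u) (sech2_pos u).le
    _ = sech2 u * u ^ 2 / α ^ 2 := by field_simp

lemma pow_mul_meanSech2MulSq_le {τ : ℝ} (hτ : 0 < τ) :
    τ ^ 3 * meanSech2MulSq τ ≤ sech2SecondMoment := by
  have hi : Integrable fun v : ℝ => sech2 (τ * v) * v ^ 2 := by
    refine ((integrable_sech2_mul_sq.comp_mul_left' hτ.ne').const_mul (τ⁻¹ ^ 2)).congr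
      (ae_of_all _ fun v => ?_)
    field_simp
  have hmean : meanSech2MulSq τ ≤ ∫ v, sech2 (τ * v) * v ^ 2 := by
    have hnonneg (v : ℝ) : 0 ≤ sech2 (τ * v) * v ^ 2 := mul_nonneg (sech2_pos _).le (sq_nonneg v)
    rw [meanSech2MulSq, integral_gaussianReal_eq_integral_mul]
    exact integral_mono_of_nonneg
      (ae_of_all _ fun v => mul_nonneg (hnonneg v) (gaussianPDFReal_nonneg _ _ _)) hi
      (ae_of_all _ fun v => mul_le_of_le_one_right (hnonneg v) (gaussianPDFReal_zero_one_le_one _))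
  calc τ ^ 3 * meanSech2MulSq τ ≤ τ ^ 3 * ∫ v, sech2 (τ * v) * v ^ 2 := by gcongr
    _ = τ * ∫ v, sech2 (τ * v) * (τ * v) ^ 2 := by
      rw [← integral_const_mul, ← integral_const_mul]
      congr 1 with v
      ring
    _ = sech2SecondMoment := by
      rw [Measure.integral_comp_mul_left (fun u => sech2 u * u ^ 2) τ, abs_of_pos (inv_pos.2 hτ),
        smul_eq_mul, mul_inv_cancel_left₀ hτ.ne', sech2SecondMoment]

lemma integral_tanh_mul_gaussianReal (τ : ℝ) :
    ∫ v, tanh (τ * v) * v ∂gaussianReal 0 1 = τ * meanSech2 τ := by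
  have hbound : ∀ᵐ v ∂gaussianReal 0 1, ‖tanh (τ * v)‖ ≤ 1 :=
    ae_of_all _ fun _ => abs_tanh_le_one _
  have hid : Integrable (fun v : ℝ => v) (gaussianReal 0 1) :=
    (memLp_id_gaussianReal' (μ := 0) (v := 1) 1 (by simp)).integrable le_rfl
  rw [meanSech2, ← integral_const_mul]
  refine integral_mul_id_gaussianReal (fun v => ?_) (.of_bound (by fun_prop) 1 hbound)
    ((integrable_meanSech2 τ).const_mul τ) (hid.bdd_mul (by fun_prop) hbound)
  have hmul : HasDerivAt (fun v : ℝ => τ * v) τ v := by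
    simpa using (hasDerivAt_id v).const_mul τ
  exact ((hasDerivAt_tanh (τ * v)).comp v hmul).congr_deriv (mul_comm _ _)

/-- `τ ↦ τ * meanSech2 τ` is almost constant at large scales, so `meanSech2` decays like `1 / τ`. -/
lemma meanSech2_sub_ge_of_sq_le_two_mul_sq {α β : ℝ} (hα : 0 < α) (hβ : 1 ≤ β) (hαβ : α ≤ β)
    (h2 : β ^ 2 ≤ 2 * α ^ 2) (hK : 8 * sech2SecondMoment ≤ meanSech2 1 * (β ^ 2 - α ^ 2)) :
    meanSech2 1 / 4 * (β ^ 2 - α ^ 2) / β ^ 3 ≤ meanSech2 α - meanSech2 β := by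
  have hβ0 : 0 < β := by linarith
  have hA := meanSech2_pos 1
  have hM := sech2SecondMoment_nonneg
  have hanti := meanSech2_le_of_le hα.le hαβ
  suffices h : meanSech2 1 / 4 * (β ^ 2 - α ^ 2) / β ^ 2 ≤ β * (meanSech2 α - meanSech2 β) by
    rw [div_le_iff₀ (by positivity)] at h ⊢
    linarith
  calc meanSech2 1 / 4 * (β ^ 2 - α ^ 2) / β ^ 2
      ≤ (meanSech2 1 * (β * (β - α)) - 2 * sech2SecondMoment) / β ^ 2 := by
        gcongr
        nlinarith [mul_nonneg hA.le (sq_nonneg (β - α))]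
    _ = (β - α) * (meanSech2 1 / β) - sech2SecondMoment / (β ^ 2 / 2) := by field_simp
    _ ≤ (β - α) * meanSech2 β - sech2SecondMoment / α ^ 2 := by
        gcongr
        · exact (div_le_iff₀' hβ0).2 (meanSech2_one_le_mul_meanSech2 hβ)
        · linarith
    _ ≤ α * (meanSech2 α - meanSech2 β) := by
        linarith [mul_meanSech2_sub_mul_meanSech2_le hα hβ0]
    _ ≤ β * (meanSech2 α - meanSech2 β) := by gcongr

lemma exists_meanSech2_sub_ge : ∃ c K : ℝ, 0 < c ∧ 1 ≤ K ∧ ∀ α β : ℝ, 0 ≤ α → 0 ≤ β →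
    K ≤ β ^ 2 - α ^ 2 → c * (β ^ 2 - α ^ 2) / β ^ 3 ≤ meanSech2 α - meanSech2 β := by
  have hA := meanSech2_pos 1
  refine ⟨meanSech2 1 / 8, max 2 (16 * sech2SecondMoment / meanSech2 1), by positivity,
    le_max_of_le_left (by norm_num), fun α β hα hβ hK => ?_⟩
  obtain ⟨hK2, hKM⟩ := max_le_iff.1 hK
  rw [div_le_iff₀' hA] at hKM
  have hβ1 : 1 ≤ β := by nlinarith [sq_nonneg α]
  have hαβ : α ≤ β := by nlinarith
  have hd : 0 ≤ meanSech2 1 * (β ^ 2 - α ^ 2) := mul_nonneg hA.le (by linarith)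
  rcases le_or_gt (β ^ 2) (2 * α ^ 2) with h | h
  · have hα0 : 0 < α := hα.lt_of_ne fun h0 => by subst h0; nlinarith
    refine le_trans ?_ (meanSech2_sub_ge_of_sq_le_two_mul_sq hα0 hβ1 hαβ h (by linarith))
    gcongr ?_ / _
    linarith
  · -- monotonicity reduces widely separated scales to `β / √2` and `β`
    have hsq : (β / √2) ^ 2 = β ^ 2 / 2 := by rw [div_pow, sq_sqrt (by norm_num)]
    have hα' : α ≤ β / √2 := le_of_sq_le_sq (by linarith) (by positivity)
    have hβ' : β / √2 ≤ β := le_of_sq_le_sq (by nlinarith) hβ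
    have hnear := meanSech2_sub_ge_of_sq_le_two_mul_sq (α := β / √2) (by positivity) hβ1 hβ'
      (by linarith) (by rw [hsq]; nlinarith [mul_nonneg hA.le (sq_nonneg α)])
    refine le_trans ?_ (hnear.trans (by linarith [meanSech2_le_of_le hα hα']))
    rw [hsq]
    gcongr ?_ / _
    nlinarith [mul_nonneg hA.le (sq_nonneg α)]

lemma exists_meanSech2_sub_meanSech2MulSq_ge : ∃ c τ₀ : ℝ, 0 < c ∧ 1 ≤ τ₀ ∧ ∀ τ : ℝ, τ₀ ≤ τ →
    c / τ ≤ meanSech2 τ - meanSech2MulSq τ := by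
  have hA := meanSech2_pos 1
  refine ⟨meanSech2 1 / 2, max 1 (2 * sech2SecondMoment / meanSech2 1), by positivity,
    le_max_left _ _, fun τ hτ => ?_⟩
  obtain ⟨hτ1, hτM⟩ := max_le_iff.1 hτ
  have hτ0 : 0 < τ := by linarith
  rw [div_le_iff₀ hA] at hτM
  have hB : τ * meanSech2MulSq τ ≤ meanSech2 1 / 2 := by
    refine le_of_mul_le_mul_left ?_ (pow_pos hτ0 2)
    have hB3 := pow_mul_meanSech2MulSq_le hτ0
    have hττ : τ * meanSech2 1 ≤ τ ^ 2 * meanSech2 1 := by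
      gcongr
      exact le_self_pow₀ hτ1 two_ne_zero
    linarith
  rw [div_le_iff₀' hτ0]
  linarith [meanSech2_one_le_mul_meanSech2 hτ1]

section RandomSubset

variable {ι : Type*} [DecidableEq ι]

/-- The probability of drawing `R` when every element of `A` is kept independently with
probability `θ`. -/
def subsetWeight (θ : ℝ) (A R : Finset ι) : ℝ := θ ^ R.card * (1 - θ) ^ (A \ R).card

/-- The mean of `G` over a random subset of `A` in which every element is kept independently with
probability `θ`. -/
def subsetMean (θ : ℝ) (A : Finset ι) (G : Finset ι → ℝ) : ℝ :=
  ∑ R ∈ A.powerset, subsetWeight θ A R * G R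

lemma subsetWeight_nonneg {θ : ℝ} (h0 : 0 ≤ θ) (h1 : θ ≤ 1) (A R : Finset ι) :
    0 ≤ subsetWeight θ A R :=
  mul_nonneg (pow_nonneg h0 _) (pow_nonneg (sub_nonneg.2 h1) _)

lemma subsetMean_congr (θ : ℝ) {A : Finset ι} {G H : Finset ι → ℝ} (h : ∀ R ⊆ A, G R = H R) :
    subsetMean θ A G = subsetMean θ A H :=
  Finset.sum_congr rfl fun R hR => by rw [h R (Finset.mem_powerset.1 hR)]

lemma subsetMean_mono {θ : ℝ} (h0 : 0 ≤ θ) (h1 : θ ≤ 1) {A : Finset ι} {G H : Finset ι → ℝ}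
    (h : ∀ R ⊆ A, G R ≤ H R) : subsetMean θ A G ≤ subsetMean θ A H :=
  Finset.sum_le_sum fun R hR =>
    mul_le_mul_of_nonneg_left (h R (Finset.mem_powerset.1 hR)) (subsetWeight_nonneg h0 h1 A R)

lemma subsetMean_const_mul (θ : ℝ) (A : Finset ι) (c : ℝ) (G : Finset ι → ℝ) :
    subsetMean θ A (fun R => c * G R) = c * subsetMean θ A G := by
  simp only [subsetMean, Finset.mul_sum, mul_left_comm]

lemma subsetMean_add (θ : ℝ) (A : Finset ι) (G H : Finset ι → ℝ) :
    subsetMean θ A (fun R => G R + H R) = subsetMean θ A G + subsetMean θ A H := by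
  simp only [subsetMean, mul_add, Finset.sum_add_distrib]

lemma subsetMean_sub (θ : ℝ) (A : Finset ι) (G H : Finset ι → ℝ) :
    subsetMean θ A (fun R => G R - H R) = subsetMean θ A G - subsetMean θ A H := by
  simp only [subsetMean, mul_sub, Finset.sum_sub_distrib]

lemma subsetMean_const (θ : ℝ) (A : Finset ι) (c : ℝ) : subsetMean θ A (fun _ => c) = c := by
  have hbinom := Finset.prod_add (fun _ : ι => θ) (fun _ => 1 - θ) A
  simp only [add_sub_cancel, Finset.prod_const, one_pow] at hbinom
  simp only [subsetMean, subsetWeight, ← Finset.sum_mul, ← hbinom, one_mul]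

lemma subsetMean_insert (θ : ℝ) {A : Finset ι} {i : ι} (hi : i ∉ A) (G : Finset ι → ℝ) :
    subsetMean θ (insert i A) G = subsetMean θ A fun R => (1 - θ) * G R + θ * G (insert i R) := by
  unfold subsetMean subsetWeight
  rw [Finset.sum_powerset_insert hi, ← Finset.sum_add_distrib]
  refine Finset.sum_congr rfl fun R hR => ?_
  have hiR : i ∉ R := fun h => hi (Finset.mem_powerset.1 hR h)
  rw [Finset.insert_sdiff_of_notMem _ hiR, Finset.card_insert_of_notMem (by simp [hi]),
    Finset.card_insert_of_notMem hiR, Finset.insert_sdiff_insert, Finset.sdiff_insert_of_notMem hi]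
  ring

lemma subsetMean_sum (θ : ℝ) (A : Finset ι) (a : ι → ℝ) :
    subsetMean θ A (fun R => ∑ l ∈ R, a l) = θ * ∑ l ∈ A, a l := by
  induction A using Finset.induction_on with
  | empty => simp [subsetMean]
  | insert b A hb ih =>
    have hsplit : ∀ R ⊆ A, (1 - θ) * ∑ l ∈ R, a l + θ * ∑ l ∈ insert b R, a l
        = θ * a b + ∑ l ∈ R, a l := fun R hR => by
      rw [Finset.sum_insert fun h => hb (hR h)]
      ring
    rw [subsetMean_insert θ hb, subsetMean_congr θ hsplit, subsetMean_add, subsetMean_const, ih,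
      Finset.sum_insert hb, mul_add]

variable [Fintype ι]

lemma subsetMean_univ_eq_compl_singleton (θ : ℝ) (i : ι) (G : Finset ι → ℝ) :
    subsetMean θ Finset.univ G
      = subsetMean θ {i}ᶜ fun R => (1 - θ) * G R + θ * G (insert i R) := by
  rw [← subsetMean_insert θ (by simp), Finset.insert_compl_self]

lemma subsetMean_univ_eq_compl_pair (θ : ℝ) {i j : ι} (hij : i ≠ j) (G : Finset ι → ℝ) :
    subsetMean θ Finset.univ G = subsetMean θ {i, j}ᶜ fun R =>
      (1 - θ) * ((1 - θ) * G R + θ * G (insert i R))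
        + θ * ((1 - θ) * G (insert j R) + θ * G (insert i (insert j R))) := by
  have hinsert : insert j ({i, j}ᶜ : Finset ι) = {i}ᶜ := by
    ext l
    by_cases hl : l = j <;> simp [hl, hij.symm]
  rw [← subsetMean_insert θ (A := {i, j}ᶜ) (i := j) (by simp) fun R =>
    (1 - θ) * G R + θ * G (insert i R), hinsert, subsetMean_univ_eq_compl_singleton θ i]

end RandomSubset

section DotProduct

variable {ι : Type*} [Fintype ι]

@[fun_prop]
lemma continuous_dotProduct_left (a : ι → ℝ) : Continuous fun x : ι → ℝ => a ⬝ᵥ x := by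
  unfold dotProduct
  fun_prop

@[fun_prop]
lemma measurable_dotProduct_left (a : ι → ℝ) : Measurable fun x : ι → ℝ => a ⬝ᵥ x :=
  (continuous_dotProduct_left a).measurable

/-- The continuous linear functional `x ↦ a ⬝ᵥ x`. -/
def dotProductCLM (a : ι → ℝ) : (ι → ℝ) →L[ℝ] ℝ :=
  ⟨dotProductBilin ℝ ℝ a, continuous_dotProduct_left a⟩

end DotProduct

lemma sum_mul_eq_zero_of_sum_sq_eq_zero {ι : Type*} (S : Finset ι) {q : ι → ℝ} (v : ι → ℝ)
    (h : ∑ l ∈ S, q l ^ 2 = 0) :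
    ∑ l ∈ S, q l * v l = 0 := by
  rw [Finset.sum_eq_zero_iff_of_nonneg fun l _ => sq_nonneg _] at h
  exact Finset.sum_eq_zero fun l hl => by rw [pow_eq_zero_iff two_ne_zero |>.1 (h l hl), zero_mul]

section GaussianOn

variable {ι : Type*} [Fintype ι] [DecidableEq ι]

/-- The law of a vector with independent standard Gaussian entries on `S` and zeros off `S`. -/
def gaussianOn (S : Finset ι) : Measure (ι → ℝ) :=
  Measure.pi fun l => gaussianReal 0 (if l ∈ S then 1 else 0)

instance (S : Finset ι) : IsProbabilityMeasure (gaussianOn S) := by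
  unfold gaussianOn
  infer_instance

variable (S : Finset ι)

lemma map_eval_gaussianOn (i : ι) :
    (gaussianOn S).map (fun x => x i) = gaussianReal 0 (if i ∈ S then 1 else 0) :=
  (measurePreserving_eval (fun l => gaussianReal 0 (if l ∈ S then (1 : ℝ≥0) else 0)) i).map_eq

lemma iIndepFun_eval_gaussianOn : iIndepFun (fun i (x : ι → ℝ) => x i) (gaussianOn S) :=
  iIndepFun_pi (X := fun _ => id) fun _ => aemeasurable_id

lemma hasGaussianLaw_gaussianOn : HasGaussianLaw (fun x : ι → ℝ => x) (gaussianOn S) :=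
  iIndepFun.hasGaussianLaw (fun i => ⟨by rw [map_eval_gaussianOn]; infer_instance⟩)
    (iIndepFun_eval_gaussianOn S)

lemma hasGaussianLaw_dotProduct (a : ι → ℝ) :
    HasGaussianLaw (fun x => a ⬝ᵥ x) (gaussianOn S) :=
  (hasGaussianLaw_gaussianOn S).map_fun (dotProductCLM a)

lemma hasGaussianLaw_dotProduct_prod (a b : ι → ℝ) :
    HasGaussianLaw (fun x => (a ⬝ᵥ x, b ⬝ᵥ x)) (gaussianOn S) :=
  (hasGaussianLaw_gaussianOn S).map_fun ((dotProductCLM a).prod (dotProductCLM b))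

lemma memLp_dotProduct (a : ι → ℝ) : MemLp (fun x => a ⬝ᵥ x) 2 (gaussianOn S) :=
  (hasGaussianLaw_dotProduct S a).memLp_two

lemma memLp_eval (i : ι) : MemLp (fun x : ι → ℝ => x i) 2 (gaussianOn S) := by
  simpa using memLp_dotProduct S (Pi.single i 1)

lemma integral_eval_gaussianOn (i : ι) : ∫ x, x i ∂gaussianOn S = 0 := by
  rw [← integral_map (φ := fun x : ι → ℝ => x i) (f := fun y : ℝ => y)
    (measurable_pi_apply i).aemeasurable (by fun_prop), map_eval_gaussianOn]
  exact integral_id_gaussianReal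

lemma variance_eval_gaussianOn (i : ι) :
    Var[fun x : ι → ℝ => x i; gaussianOn S] = if i ∈ S then 1 else 0 := by
  have hmap := variance_map (μ := gaussianOn S) (Y := fun x : ι → ℝ => x i) (X := fun y : ℝ => y)
    (by fun_prop) (measurable_pi_apply i).aemeasurable
  rw [map_eval_gaussianOn, variance_fun_id_gaussianReal] at hmap
  rw [← Function.comp_def (fun y : ℝ => y), ← hmap]
  split_ifs <;> simp

lemma covariance_eval_gaussianOn (i j : ι) :
    cov[fun x : ι → ℝ => x i, fun x : ι → ℝ => x j; gaussianOn S]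
      = if i = j ∧ i ∈ S then 1 else 0 := by
  by_cases hij : i = j
  · subst hij
    rw [covariance_self (measurable_pi_apply i).aemeasurable, variance_eval_gaussianOn]
    simp only [true_and]
  · rw [if_neg (by tauto)]
    exact ((iIndepFun_eval_gaussianOn S).indepFun hij).covariance_eq_zero (memLp_eval S i)
      (memLp_eval S j)

lemma integral_dotProduct_gaussianOn (a : ι → ℝ) : ∫ x, a ⬝ᵥ x ∂gaussianOn S = 0 := by
  unfold dotProduct
  rw [integral_finsetSum _ fun i _ => ((memLp_eval S i).integrable (by norm_num)).const_mul _]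
  exact Finset.sum_eq_zero fun i _ => by
    rw [integral_const_mul, integral_eval_gaussianOn, mul_zero]

lemma covariance_dotProduct_gaussianOn (a b : ι → ℝ) :
    cov[fun x : ι → ℝ => a ⬝ᵥ x, fun x : ι → ℝ => b ⬝ᵥ x; gaussianOn S]
      = ∑ l ∈ S, a l * b l := by
  unfold dotProduct
  rw [covariance_fun_sum_fun_sum (fun i => (memLp_eval S i).const_mul _)
    (fun i => (memLp_eval S i).const_mul _)]
  simp_rw [covariance_const_mul_left, covariance_const_mul_right, covariance_eval_gaussianOn]
  rw [← Finset.sum_subset (Finset.subset_univ S) fun i _ hi => by simp [hi]]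
  exact Finset.sum_congr rfl fun i hi => by simp [hi]

lemma integral_dotProduct_sq_gaussianOn (a : ι → ℝ) :
    ∫ x, (a ⬝ᵥ x) ^ 2 ∂gaussianOn S = ∑ l ∈ S, a l ^ 2 := by
  have hcov := covariance_eq_sub (memLp_dotProduct S a) (memLp_dotProduct S a)
  simpa [covariance_dotProduct_gaussianOn, integral_dotProduct_gaussianOn, ← sq] using hcov.symm

lemma map_dotProduct_gaussianOn (a : ι → ℝ) :
    (gaussianOn S).map (fun x => a ⬝ᵥ x)
      = (gaussianReal 0 1).map fun y => √(∑ l ∈ S, a l ^ 2) * y := by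
  have hs : 0 ≤ ∑ l ∈ S, a l ^ 2 := Finset.sum_nonneg fun l _ => sq_nonneg (a l)
  have hvar : Var[fun x : ι → ℝ => a ⬝ᵥ x; gaussianOn S] = ∑ l ∈ S, a l ^ 2 := by
    simp only [← covariance_self (measurable_dotProduct_left a).aemeasurable,
      covariance_dotProduct_gaussianOn, sq]
  rw [(hasGaussianLaw_dotProduct S a).map_eq_gaussianReal, integral_dotProduct_gaussianOn,
    gaussianReal_map_const_mul, hvar, mul_zero]
  congr 1
  ext
  simp [sq_sqrt hs, hs]

lemma integral_comp_dotProduct_gaussianOn (a : ι → ℝ) {F : ℝ → ℝ} (hF : Measurable F) :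
    ∫ x, F (a ⬝ᵥ x) ∂gaussianOn S = ∫ y, F (√(∑ l ∈ S, a l ^ 2) * y) ∂gaussianReal 0 1 := by
  rw [← integral_map (by fun_prop) hF.aestronglyMeasurable, map_dotProduct_gaussianOn,
    integral_map (by fun_prop) hF.aestronglyMeasurable]

lemma integrable_comp_dotProduct_gaussianOn_iff (a : ι → ℝ) {F : ℝ → ℝ} (hF : Measurable F) :
    Integrable (fun x => F (a ⬝ᵥ x)) (gaussianOn S) ↔
      Integrable (fun y => F (√(∑ l ∈ S, a l ^ 2) * y)) (gaussianReal 0 1) := by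
  have hdot := integrable_map_measure (μ := gaussianOn S) (f := fun x => a ⬝ᵥ x)
    hF.aestronglyMeasurable (by fun_prop)
  rw [map_dotProduct_gaussianOn, integrable_map_measure hF.aestronglyMeasurable (by fun_prop)]
    at hdot
  exact hdot.symm

lemma integral_comp_dotProduct_mul_comp_dotProduct {a b : ι → ℝ} (hab : ∑ l ∈ S, a l * b l = 0)
    {F G : ℝ → ℝ} (hF : Measurable F) (hG : Measurable G) :
    ∫ x, F (a ⬝ᵥ x) * G (b ⬝ᵥ x) ∂gaussianOn S
      = (∫ x, F (a ⬝ᵥ x) ∂gaussianOn S) * ∫ x, G (b ⬝ᵥ x) ∂gaussianOn S := by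
  have hindep : IndepFun (fun x => a ⬝ᵥ x) (fun x => b ⬝ᵥ x) (gaussianOn S) :=
    (hasGaussianLaw_dotProduct_prod S a b).indepFun_of_covariance_eq_zero
      ((covariance_dotProduct_gaussianOn S a b).trans hab)
  exact (hindep.comp hF hG).integral_fun_mul_eq_mul_integral
    (hF.comp (measurable_dotProduct_left a)).aestronglyMeasurable
    (hG.comp (measurable_dotProduct_left b)).aestronglyMeasurable

end GaussianOn

section RegressionResidual

variable {ι : Type*} (S : Finset ι)

/-- The residual of `v` after regression on `q` within the coordinates in `S`. When `q` vanishes on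
`S`, division by zero makes the regression coefficient `0`, which is the intended value. -/
def regressionResidual (q v : ι → ℝ) : ι → ℝ :=
  v - ((∑ l ∈ S, q l * v l) / ∑ l ∈ S, q l ^ 2) • q

lemma dotProduct_eq_add_regressionResidual [Fintype ι] (q v x : ι → ℝ) : v ⬝ᵥ x =
    (∑ l ∈ S, q l * v l) / (∑ l ∈ S, q l ^ 2) * (q ⬝ᵥ x) + regressionResidual S q v ⬝ᵥ x := by
  rw [regressionResidual, sub_dotProduct, smul_dotProduct, smul_eq_mul, add_sub_cancel]

lemma sum_mul_regressionResidual (q v : ι → ℝ) : ∑ l ∈ S, q l * regressionResidual S q v l = 0 := by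
  have hexpand : ∑ l ∈ S, q l * regressionResidual S q v l = (∑ l ∈ S, q l * v l)
      - (∑ l ∈ S, q l * v l) / (∑ l ∈ S, q l ^ 2) * ∑ l ∈ S, q l ^ 2 := by
    simp only [regressionResidual, Pi.sub_apply, Pi.smul_apply, smul_eq_mul, mul_sub,
      Finset.sum_sub_distrib, Finset.mul_sum]
    congr 2 with l
    ring
  rw [hexpand, div_mul_cancel_of_imp (sum_mul_eq_zero_of_sum_sq_eq_zero S v), sub_self]

lemma sum_regressionResidual_sq (q v : ι → ℝ) : ∑ l ∈ S, regressionResidual S q v l ^ 2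
    = ∑ l ∈ S, v l ^ 2 - (∑ l ∈ S, q l * v l) ^ 2 / ∑ l ∈ S, q l ^ 2 := by
  have hexpand : ∑ l ∈ S, regressionResidual S q v l ^ 2 = ∑ l ∈ S, v l ^ 2
      - (∑ l ∈ S, q l * v l) / (∑ l ∈ S, q l ^ 2) * ∑ l ∈ S, q l * v l
      - (∑ l ∈ S, q l * v l) / (∑ l ∈ S, q l ^ 2) * ∑ l ∈ S, q l * regressionResidual S q v l := by
    simp only [Finset.mul_sum, ← Finset.sum_sub_distrib]
    refine Finset.sum_congr rfl fun l _ => ?_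
    simp only [regressionResidual, Pi.sub_apply, Pi.smul_apply, smul_eq_mul]
    ring
  rw [hexpand, sum_mul_regressionResidual]
  ring

end RegressionResidual

section GaussianRegression

variable {ι : Type*} [Fintype ι] [DecidableEq ι] (S : Finset ι) (μ : ℝ) (q v w : ι → ℝ)

lemma integrable_tanh_mul_dotProduct :
    Integrable (fun x => tanh (q ⬝ᵥ x / μ) * (v ⬝ᵥ x)) (gaussianOn S) :=
  ((memLp_dotProduct S v).integrable (by norm_num)).bdd_mul (c := 1) (by fun_prop)
    (ae_of_all _ fun _ => abs_tanh_le_one _)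

lemma integrable_sech2_mul_dotProduct_mul_dotProduct :
    Integrable (fun x => sech2 (q ⬝ᵥ x / μ) * ((v ⬝ᵥ x) * (w ⬝ᵥ x))) (gaussianOn S) :=
  ((memLp_dotProduct S v).integrable_mul (memLp_dotProduct S w)).bdd_mul (c := 1) (by fun_prop)
    (ae_of_all _ fun _ => (abs_sech2 _).trans_le (sech2_le_one _))

lemma integrable_sech2_mul_dotProduct_sq :
    Integrable (fun x => sech2 (q ⬝ᵥ x / μ) * (v ⬝ᵥ x) ^ 2) (gaussianOn S) := by
  simpa only [sq] using integrable_sech2_mul_dotProduct_mul_dotProduct S μ q v v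

lemma integral_tanh_mul_self :
    ∫ x, tanh (q ⬝ᵥ x / μ) * (q ⬝ᵥ x) ∂gaussianOn S
      = (∑ l ∈ S, q l ^ 2) * (meanSech2 (√(∑ l ∈ S, q l ^ 2) / μ) / μ) := by
  have hs : 0 ≤ ∑ l ∈ S, q l ^ 2 := Finset.sum_nonneg fun l _ => sq_nonneg _
  rw [integral_comp_dotProduct_gaussianOn S q (F := fun y => tanh (y / μ) * y) (by fun_prop)]
  simp only [mul_div_right_comm _ _ μ, mul_left_comm (tanh _)]
  rw [integral_const_mul, integral_tanh_mul_gaussianReal]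
  linear_combination meanSech2 (√(∑ l ∈ S, q l ^ 2) / μ) / μ * mul_self_sqrt hs

lemma integral_sech2_mul_self_sq :
    ∫ x, sech2 (q ⬝ᵥ x / μ) * (q ⬝ᵥ x) ^ 2 ∂gaussianOn S
      = (∑ l ∈ S, q l ^ 2) * meanSech2MulSq (√(∑ l ∈ S, q l ^ 2) / μ) := by
  have hs : 0 ≤ ∑ l ∈ S, q l ^ 2 := Finset.sum_nonneg fun l _ => sq_nonneg _
  rw [integral_comp_dotProduct_gaussianOn S q (F := fun y => sech2 (y / μ) * y ^ 2) (by fun_prop)]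
  simp only [mul_div_right_comm _ _ μ, mul_pow, sq_sqrt hs, mul_left_comm (sech2 _)]
  rw [integral_const_mul, meanSech2MulSq]

variable {S q w}

lemma integral_tanh_mul_eq_zero (hw : ∑ l ∈ S, q l * w l = 0) :
    ∫ x, tanh (q ⬝ᵥ x / μ) * (w ⬝ᵥ x) ∂gaussianOn S = 0 := by
  rw [integral_comp_dotProduct_mul_comp_dotProduct S hw (F := fun y => tanh (y / μ))
    (G := fun y => y) (by fun_prop) (by fun_prop), integral_dotProduct_gaussianOn, mul_zero]

lemma integral_sech2_mul_mul_eq_zero (hw : ∑ l ∈ S, q l * w l = 0) :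
    ∫ x, sech2 (q ⬝ᵥ x / μ) * ((q ⬝ᵥ x) * (w ⬝ᵥ x)) ∂gaussianOn S = 0 := by
  simp only [← mul_assoc]
  rw [integral_comp_dotProduct_mul_comp_dotProduct S hw (F := fun y => sech2 (y / μ) * y)
    (G := fun y => y) (by fun_prop) (by fun_prop), integral_dotProduct_gaussianOn, mul_zero]

lemma integral_sech2_mul_sq_of_orthogonal (hw : ∑ l ∈ S, q l * w l = 0) :
    ∫ x, sech2 (q ⬝ᵥ x / μ) * (w ⬝ᵥ x) ^ 2 ∂gaussianOn S
      = (∑ l ∈ S, w l ^ 2) * meanSech2 (√(∑ l ∈ S, q l ^ 2) / μ) := by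
  rw [integral_comp_dotProduct_mul_comp_dotProduct S hw (F := fun y => sech2 (y / μ))
    (G := fun y => y ^ 2) (by fun_prop) (by fun_prop), integral_dotProduct_sq_gaussianOn,
    integral_comp_dotProduct_gaussianOn S q (F := fun y => sech2 (y / μ)) (by fun_prop), mul_comm]
  simp only [mul_div_right_comm _ _ μ, meanSech2]

variable (S q)

lemma integral_tanh_mul_dotProduct :
    ∫ x, tanh (q ⬝ᵥ x / μ) * (v ⬝ᵥ x) ∂gaussianOn S
      = (∑ l ∈ S, q l * v l) * (meanSech2 (√(∑ l ∈ S, q l ^ 2) / μ) / μ) := by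
  set κ := (∑ l ∈ S, q l * v l) / ∑ l ∈ S, q l ^ 2 with hκ
  have hsplit (x : ι → ℝ) : tanh (q ⬝ᵥ x / μ) * (v ⬝ᵥ x)
      = κ * (tanh (q ⬝ᵥ x / μ) * (q ⬝ᵥ x))
        + tanh (q ⬝ᵥ x / μ) * (regressionResidual S q v ⬝ᵥ x) := by
    rw [dotProduct_eq_add_regressionResidual S q v x]
    ring
  simp_rw [hsplit]
  rw [integral_add ((integrable_tanh_mul_dotProduct S μ q q).const_mul _)
    (integrable_tanh_mul_dotProduct S μ q _), integral_const_mul, integral_tanh_mul_self,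
    integral_tanh_mul_eq_zero μ (sum_mul_regressionResidual S q v), add_zero, ← mul_assoc, hκ,
    div_mul_cancel_of_imp (sum_mul_eq_zero_of_sum_sq_eq_zero S v)]

lemma integral_sech2_mul_dotProduct_sq :
    ∫ x, sech2 (q ⬝ᵥ x / μ) * (v ⬝ᵥ x) ^ 2 ∂gaussianOn S
      = (∑ l ∈ S, v l ^ 2 - (∑ l ∈ S, q l * v l) ^ 2 / ∑ l ∈ S, q l ^ 2) *
          meanSech2 (√(∑ l ∈ S, q l ^ 2) / μ)
        + (∑ l ∈ S, q l * v l) ^ 2 / (∑ l ∈ S, q l ^ 2) *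
          meanSech2MulSq (√(∑ l ∈ S, q l ^ 2) / μ) := by
  set κ := (∑ l ∈ S, q l * v l) / ∑ l ∈ S, q l ^ 2 with hκ
  set w := regressionResidual S q v
  have hw : ∑ l ∈ S, q l * w l = 0 := sum_mul_regressionResidual S q v
  have hsplit (x : ι → ℝ) : sech2 (q ⬝ᵥ x / μ) * (v ⬝ᵥ x) ^ 2
      = κ ^ 2 * (sech2 (q ⬝ᵥ x / μ) * (q ⬝ᵥ x) ^ 2)
        + (2 * κ * (sech2 (q ⬝ᵥ x / μ) * ((q ⬝ᵥ x) * (w ⬝ᵥ x)))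
          + sech2 (q ⬝ᵥ x / μ) * (w ⬝ᵥ x) ^ 2) := by
    rw [dotProduct_eq_add_regressionResidual S q v x]
    ring
  have hcross := (integrable_sech2_mul_dotProduct_mul_dotProduct S μ q q w).const_mul (2 * κ)
  have hrest : Integrable (fun x => 2 * κ * (sech2 (q ⬝ᵥ x / μ) * ((q ⬝ᵥ x) * (w ⬝ᵥ x)))
      + sech2 (q ⬝ᵥ x / μ) * (w ⬝ᵥ x) ^ 2) (gaussianOn S) :=
    hcross.add (integrable_sech2_mul_dotProduct_sq S μ q w)
  have hκs : κ * ∑ l ∈ S, q l ^ 2 = ∑ l ∈ S, q l * v l :=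
    div_mul_cancel_of_imp (sum_mul_eq_zero_of_sum_sq_eq_zero S v)
  have hκ2 : κ ^ 2 * ∑ l ∈ S, q l ^ 2 = (∑ l ∈ S, q l * v l) ^ 2 / ∑ l ∈ S, q l ^ 2 := by
    rw [sq, mul_assoc, hκs, hκ, div_mul_eq_mul_div, ← sq]
  simp_rw [hsplit]
  rw [integral_add ((integrable_sech2_mul_dotProduct_sq S μ q q).const_mul _) hrest,
    integral_add hcross (integrable_sech2_mul_dotProduct_sq S μ q w), integral_const_mul,
    integral_const_mul, integral_sech2_mul_self_sq, integral_sech2_mul_mul_eq_zero μ hw,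
    integral_sech2_mul_sq_of_orthogonal μ hw, sum_regressionResidual_sq, ← mul_assoc, hκ2]
  ring

end GaussianRegression

section BernoulliGaussian

variable {n : ℕ} {θ : ℝ}

lemma bgVec_eq_sum_gaussianOn (h0 : 0 ≤ θ) (h1 : θ ≤ 1) : bgVec θ n =
    ∑ S : Finset (Fin n), ENNReal.ofReal (subsetWeight θ Finset.univ S) • gaussianOn S := by
  refine Measure.pi_eq fun s _ => ?_
  have hbg (i : Fin n) : bg θ (s i) = ENNReal.ofReal θ * gaussianReal 0 1 (s i)
      + ENNReal.ofReal (1 - θ) * gaussianReal 0 0 (s i) := by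
    rw [bg, gaussianReal_zero_var, Measure.add_apply]
    rfl
  have hpi (S : Finset (Fin n)) : gaussianOn S (Set.univ.pi s)
      = (∏ i ∈ S, gaussianReal 0 1 (s i)) * ∏ i ∈ Sᶜ, gaussianReal 0 0 (s i) := by
    rw [gaussianOn, Measure.pi_pi, ← Finset.prod_mul_prod_compl S]
    congr 1
    · exact Finset.prod_congr rfl fun i hi => by rw [if_pos hi]
    · exact Finset.prod_congr rfl fun i hi => by rw [if_neg (Finset.mem_compl.1 hi)]
  simp_rw [hbg, Fintype.prod_add, Measure.coe_finsetSum, Finset.sum_apply, Measure.smul_apply,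
    smul_eq_mul, hpi]
  refine Finset.sum_congr rfl fun S _ => ?_
  rw [Finset.prod_mul_distrib, Finset.prod_mul_distrib, Finset.prod_const, Finset.prod_const,
    subsetWeight, ← Finset.compl_eq_univ_sdiff, ENNReal.ofReal_mul (by positivity),
    ENNReal.ofReal_pow h0, ENNReal.ofReal_pow (by linarith)]
  ring

lemma integrable_bgVec (h0 : 0 ≤ θ) (h1 : θ ≤ 1) {F : (Fin n → ℝ) → ℝ}
    (hF : ∀ S, Integrable F (gaussianOn S)) : Integrable F (bgVec θ n) := by
  rw [bgVec_eq_sum_gaussianOn h0 h1, integrable_finsetSum_measure]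
  exact fun S _ => (hF S).smul_measure ENNReal.ofReal_ne_top

lemma integral_bgVec (h0 : 0 ≤ θ) (h1 : θ ≤ 1) {F : (Fin n → ℝ) → ℝ}
    (hF : ∀ S, Integrable F (gaussianOn S)) :
    ∫ x, F x ∂bgVec θ n = subsetMean θ Finset.univ fun S => ∫ x, F x ∂gaussianOn S := by
  rw [bgVec_eq_sum_gaussianOn h0 h1,
    integral_finsetSum_measure fun S _ => (hF S).smul_measure ENNReal.ofReal_ne_top,
    subsetMean, Finset.powerset_univ]
  refine Finset.sum_congr rfl fun S _ => ?_
  rw [integral_smul_measure, ENNReal.toReal_ofReal (subsetWeight_nonneg h0 h1 _ S), smul_eq_mul]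

/-- The population mean of the derivative of the objective at `q` along `v`. -/
def meanSlope (θ μ : ℝ) (q v : Fin n → ℝ) : ℝ :=
  ∫ x, tanh (q ⬝ᵥ x / μ) * (v ⬝ᵥ x) ∂bgVec θ n

/-- `μ` times the population mean of the second derivative of the objective at `q` along `v`. -/
def meanCurv (θ μ : ℝ) (q v : Fin n → ℝ) : ℝ :=
  ∫ x, sech2 (q ⬝ᵥ x / μ) * (v ⬝ᵥ x) ^ 2 ∂bgVec θ n

/-- The mean of `h_μ''` under a centred Gaussian of variance `s`. -/
def gaussianCurv (μ s : ℝ) : ℝ := meanSech2 (√s / μ) / μ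

lemma meanSlope_eq (h0 : 0 ≤ θ) (h1 : θ ≤ 1) (μ : ℝ) (q v : Fin n → ℝ) :
    meanSlope θ μ q v = subsetMean θ Finset.univ fun S =>
      (∑ l ∈ S, q l * v l) * gaussianCurv μ (∑ l ∈ S, q l ^ 2) := by
  rw [meanSlope, integral_bgVec h0 h1 fun S => integrable_tanh_mul_dotProduct S μ q v]
  simp only [integral_tanh_mul_dotProduct, gaussianCurv]

lemma meanCurv_eq (h0 : 0 ≤ θ) (h1 : θ ≤ 1) (μ : ℝ) (q v : Fin n → ℝ) :
    meanCurv θ μ q v = subsetMean θ Finset.univ fun S =>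
      (∑ l ∈ S, v l ^ 2 - (∑ l ∈ S, q l * v l) ^ 2 / ∑ l ∈ S, q l ^ 2) *
          meanSech2 (√(∑ l ∈ S, q l ^ 2) / μ)
        + (∑ l ∈ S, q l * v l) ^ 2 / (∑ l ∈ S, q l ^ 2) *
          meanSech2MulSq (√(∑ l ∈ S, q l ^ 2) / μ) := by
  rw [meanCurv, integral_bgVec h0 h1 fun S => integrable_sech2_mul_dotProduct_sq S μ q v]
  simp only [integral_sech2_mul_dotProduct_sq]

lemma integrable_exp_sq_gaussianReal :
    Integrable (fun y : ℝ => exp (y ^ 2 / 4)) (gaussianReal 0 1) := by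
  rw [integrable_gaussianReal_iff]
  refine ((integrable_exp_neg_mul_sq (by norm_num : (0 : ℝ) < 1 / 4)).const_mul
    (√(2 * π))⁻¹).congr (ae_of_all _ fun y => ?_)
  simp only [gaussianPDFReal_zero_one]
  rw [mul_left_comm, ← exp_add]
  ring_nf

/-- The moment `E exp (V² / 4)`, `V ~ N(0, 1)`, which controls all projections of a
Bernoulli–Gaussian vector. -/
def gaussianExpSqMoment : ℝ := ∫ y, exp (y ^ 2 / 4) ∂gaussianReal 0 1

section ExpSq

variable {v : Fin n → ℝ}

lemma exp_sqrt_mul_sq_le (S : Finset (Fin n)) (hv : ∑ l, v l ^ 2 ≤ 1) (y : ℝ) :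
    exp ((√(∑ l ∈ S, v l ^ 2) * y) ^ 2 / 4) ≤ exp (y ^ 2 / 4) := by
  have hS : ∑ l ∈ S, v l ^ 2 ≤ 1 :=
    (Finset.sum_le_univ_sum_of_nonneg fun _ => sq_nonneg _).trans hv
  rw [mul_pow, sq_sqrt (Finset.sum_nonneg fun l _ => sq_nonneg _)]
  gcongr
  exact mul_le_of_le_one_left (sq_nonneg y) hS

lemma integrable_exp_sq_gaussianOn (S : Finset (Fin n)) (hv : ∑ l, v l ^ 2 ≤ 1) :
    Integrable (fun x => exp ((v ⬝ᵥ x) ^ 2 / 4)) (gaussianOn S) := by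
  refine (integrable_comp_dotProduct_gaussianOn_iff S v (F := fun y => exp (y ^ 2 / 4))
    (by fun_prop)).2 (integrable_exp_sq_gaussianReal.mono' (by fun_prop) (ae_of_all _ fun y => ?_))
  rw [norm_eq_abs, abs_exp]
  exact exp_sqrt_mul_sq_le S hv y

lemma integral_exp_sq_gaussianOn_le (S : Finset (Fin n)) (hv : ∑ l, v l ^ 2 ≤ 1) :
    ∫ x, exp ((v ⬝ᵥ x) ^ 2 / 4) ∂gaussianOn S ≤ gaussianExpSqMoment := by
  rw [integral_comp_dotProduct_gaussianOn S v (F := fun y => exp (y ^ 2 / 4)) (by fun_prop)]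
  exact integral_mono_of_nonneg (ae_of_all _ fun _ => (exp_pos _).le)
    integrable_exp_sq_gaussianReal (ae_of_all _ (exp_sqrt_mul_sq_le S hv))

lemma integrable_exp_sq_bgVec (h0 : 0 ≤ θ) (h1 : θ ≤ 1) (hv : ∑ l, v l ^ 2 ≤ 1) :
    Integrable (fun x => exp ((v ⬝ᵥ x) ^ 2 / 4)) (bgVec θ n) :=
  integrable_bgVec h0 h1 fun S => integrable_exp_sq_gaussianOn S hv

lemma integral_exp_sq_bgVec_le (h0 : 0 ≤ θ) (h1 : θ ≤ 1) (hv : ∑ l, v l ^ 2 ≤ 1) :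
    ∫ x, exp ((v ⬝ᵥ x) ^ 2 / 4) ∂bgVec θ n ≤ gaussianExpSqMoment := by
  rw [integral_bgVec h0 h1 fun S => integrable_exp_sq_gaussianOn S hv]
  exact (subsetMean_mono h0 h1 fun S _ => integral_exp_sq_gaussianOn_le S hv).trans_eq
    (subsetMean_const θ _ _)

end ExpSq

end BernoulliGaussian

section GaussianCurv

variable {μ : ℝ}

lemma gaussianCurv_le_of_le (hμ : 0 < μ) {s t : ℝ} (hst : s ≤ t) :
    gaussianCurv μ t ≤ gaussianCurv μ s := by
  unfold gaussianCurv
  gcongr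
  exact meanSech2_le_of_le (by positivity) (by gcongr)

lemma gaussianCurv_pos (hμ : 0 < μ) (s : ℝ) : 0 < gaussianCurv μ s := div_pos (meanSech2_pos _) hμ

lemma sqrt_mul_gaussianCurv_le (hμ : 0 < μ) {s : ℝ} (hs : 0 < s) :
    √s * gaussianCurv μ s ≤ sech2Mass := by
  rw [gaussianCurv, ← mul_div_assoc, mul_div_right_comm]
  exact mul_meanSech2_le (by positivity)

lemma mul_gaussianCurv_le (hμ : 0 < μ) {s : ℝ} (hs : 0 ≤ s) (hs1 : s ≤ 1) :
    s * gaussianCurv μ s ≤ sech2Mass := by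
  rcases hs.eq_or_lt with rfl | h
  · simpa using sech2Mass_nonneg
  · refine le_trans ?_ (sqrt_mul_gaussianCurv_le hμ h)
    have := (gaussianCurv_pos hμ s).le
    gcongr
    exact le_sqrt_self_iff.2 hs1

lemma gaussianCurv_le_two_mul (hμ : 0 < μ) {s : ℝ} (hs : 3 / 4 ≤ s) :
    gaussianCurv μ s ≤ 2 * sech2Mass := by
  have hsqrt : 1 / 2 ≤ √s := le_sqrt_of_sq_le (by linarith)
  nlinarith [sqrt_mul_gaussianCurv_le hμ (s := s) (by linarith), gaussianCurv_pos hμ s]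

lemma le_gaussianCurv_sq_of_le (hμ : 0 < μ) {r : ℝ} (hr0 : 0 ≤ r) (hr : r ≤ μ) :
    meanSech2 1 / μ ≤ gaussianCurv μ (r ^ 2) := by
  rw [gaussianCurv, sqrt_sq hr0]
  gcongr
  exact meanSech2_le_of_le (by positivity) ((div_le_one hμ).2 hr)

lemma le_mul_gaussianCurv_sq (hμ : 0 < μ) {r : ℝ} (hr : μ ≤ r) :
    meanSech2 1 ≤ r * gaussianCurv μ (r ^ 2) := by
  rw [gaussianCurv, sqrt_sq (hμ.le.trans hr), ← mul_div_assoc, mul_div_right_comm]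
  exact meanSech2_one_le_mul_meanSech2 ((one_le_div hμ).2 hr)

end GaussianCurv

lemma exists_gaussianCurv_sub_ge : ∃ c K : ℝ, 0 < c ∧ 1 ≤ K ∧ ∀ μ a b : ℝ, 0 < μ → 0 ≤ a → b ≤ 1 →
    K * μ ^ 2 ≤ b - a → c * (b - a) ≤ gaussianCurv μ a - gaussianCurv μ b := by
  obtain ⟨c, K, hc, hK, h⟩ := exists_meanSech2_sub_ge
  refine ⟨c, K, hc, hK, fun μ a b hμ ha hb hab => ?_⟩
  have hsub : 0 < b - a := lt_of_lt_of_le (by positivity) hab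
  have hb0 : 0 < b := by linarith
  have hsqrt : 0 < √b := sqrt_pos.2 hb0
  have hsq : (√b / μ) ^ 2 - (√a / μ) ^ 2 = (b - a) / μ ^ 2 := by
    rw [div_pow, div_pow, sq_sqrt hb0.le, sq_sqrt ha, sub_div]
  have hgap := h (√a / μ) (√b / μ) (by positivity) (by positivity)
    (by rwa [hsq, le_div_iff₀ (by positivity)])
  rw [hsq] at hgap
  calc c * (b - a) ≤ c * (b - a) / √b ^ 3 :=
        le_div_self (by positivity) (by positivity) (pow_le_one₀ hsqrt.le (sqrt_le_one.2 hb))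
    _ = c * ((b - a) / μ ^ 2) / (√b / μ) ^ 3 / μ := by field_simp
    _ ≤ (meanSech2 (√a / μ) - meanSech2 (√b / μ)) / μ := by gcongr
    _ = gaussianCurv μ a - gaussianCurv μ b := by rw [gaussianCurv, gaussianCurv, sub_div]

/-- The difference `E h_μ''(z) - E (h_μ''(z) z²) / s` for `z` a centred Gaussian of
variance `s`. -/
def gaussianCurvGap (μ s : ℝ) : ℝ := (meanSech2 (√s / μ) - meanSech2MulSq (√s / μ)) / μ

lemma exists_gaussianCurvGap_ge : ∃ c τ₀ : ℝ, 0 < c ∧ 1 ≤ τ₀ ∧ ∀ μ s : ℝ, 0 < μ → τ₀ * μ ≤ √s →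
    s ≤ 1 → c ≤ gaussianCurvGap μ s := by
  obtain ⟨c, τ₀, hc, hτ₀, h⟩ := exists_meanSech2_sub_meanSech2MulSq_ge
  refine ⟨c, τ₀, hc, hτ₀, fun μ s hμ hτ hs => ?_⟩
  have hsqrt : 0 < √s := lt_of_lt_of_le (by positivity) hτ
  rw [gaussianCurvGap, le_div_iff₀ hμ]
  refine le_trans ?_ (h (√s / μ) ((le_div_iff₀ hμ).2 hτ))
  rw [div_div_eq_mul_div]
  exact le_div_self (by positivity) hsqrt (sqrt_le_one.2 hs)

section CoordinateSums

variable {ι : Type*}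

lemma sum_sq_le_sum_sq {A R : Finset ι} (q : ι → ℝ) (hR : R ⊆ A) :
    ∑ l ∈ R, q l ^ 2 ≤ ∑ l ∈ A, q l ^ 2 :=
  Finset.sum_le_sum_of_subset_of_nonneg hR fun _ _ _ => sq_nonneg _

lemma sum_sq_nonneg (q : ι → ℝ) (R : Finset ι) : 0 ≤ ∑ l ∈ R, q l ^ 2 :=
  Finset.sum_nonneg fun _ _ => sq_nonneg _

lemma sum_sq_add_sq_le_one [Fintype ι] {q : ι → ℝ} {R : Finset ι} {i : ι}
    (hq : ∑ l, q l ^ 2 ≤ 1) (hi : i ∉ R) : ∑ l ∈ R, q l ^ 2 + q i ^ 2 ≤ 1 := by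
  classical
  rw [add_comm, ← Finset.sum_insert (f := fun l => q l ^ 2) hi]
  exact (sum_sq_le_sum_sq q (Finset.subset_univ _)).trans hq

end CoordinateSums

section Pair

variable {ι : Type*} [DecidableEq ι]

/-- The vector `q i • e j - q j • e i`, tangent to the sphere at `q`. -/
def pairDir (q : ι → ℝ) (i j : ι) : ι → ℝ :=
  fun l => if l = j then q i else if l = i then -q j else 0

/-- The projection of `q` onto the coordinates `i` and `j`. -/
def pairProj (q : ι → ℝ) (i j : ι) : ι → ℝ :=
  fun l => if l = j then q j else if l = i then q i else 0

variable [Fintype ι]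

/-- The slope of the population objective along `pairDir`, divided by `q i * q j`. -/
def pairSlope (θ μ : ℝ) (q : ι → ℝ) (i j : ι) : ℝ :=
  θ * (1 - θ) * subsetMean θ {i, j}ᶜ fun R =>
    gaussianCurv μ (∑ l ∈ R, q l ^ 2 + q j ^ 2) - gaussianCurv μ (∑ l ∈ R, q l ^ 2 + q i ^ 2)

lemma notMem_of_subset_compl_pair {i j : ι} {R : Finset ι} (hR : R ⊆ {i, j}ᶜ) :
    i ∉ R ∧ j ∉ R :=
  ⟨fun h => by simpa using hR h, fun h => by simpa using hR h⟩

lemma sum_eq_zero_of_subset_compl_pair {i j : ι} {a : ι → ℝ}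
    (ha : ∀ l, l ≠ i → l ≠ j → a l = 0) {R : Finset ι} (hR : R ⊆ {i, j}ᶜ) : ∑ l ∈ R, a l = 0 :=
  Finset.sum_eq_zero fun _ hl => ha _
    (fun h => (notMem_of_subset_compl_pair hR).1 (h ▸ hl))
    (fun h => (notMem_of_subset_compl_pair hR).2 (h ▸ hl))

lemma pairSlope_nonneg {θ μ : ℝ} (hμ : 0 < μ) (h0 : 0 ≤ θ) (h1 : θ ≤ 1) {q : ι → ℝ} {i j : ι}
    (h : q j ^ 2 ≤ q i ^ 2) : 0 ≤ pairSlope θ μ q i j := by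
  refine mul_nonneg (mul_nonneg h0 (sub_nonneg.2 h1)) ?_
  rw [← subsetMean_const θ ({i, j}ᶜ : Finset ι) 0]
  exact subsetMean_mono h0 h1 fun R _ => sub_nonneg.2 (gaussianCurv_le_of_le hμ (by gcongr))

lemma exists_pairSlope_ge : ∃ c K : ℝ, 0 < c ∧ 1 ≤ K ∧
    ∀ {ι : Type*} [DecidableEq ι] [Fintype ι] {θ μ : ℝ} {q : ι → ℝ} {i j : ι},
      0 < θ → θ ≤ 1 / 2 → 0 < μ → ∑ l, q l ^ 2 ≤ 1 → q j ^ 2 ≤ q i ^ 2 / 4 →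
      K * μ ^ 2 ≤ q i ^ 2 → c * θ * q i ^ 2 ≤ pairSlope θ μ q i j := by
  obtain ⟨c, K, hc, hK, h⟩ := exists_gaussianCurv_sub_ge
  refine ⟨3 / 8 * c, 4 / 3 * K, by positivity, by linarith, ?_⟩
  intro ι _ _ θ μ q i j hθ hθ2 hμ hq hji hKμ
  have hgap : ∀ R ⊆ ({i, j}ᶜ : Finset ι), 3 / 4 * c * q i ^ 2 ≤
      gaussianCurv μ (∑ l ∈ R, q l ^ 2 + q j ^ 2)
        - gaussianCurv μ (∑ l ∈ R, q l ^ 2 + q i ^ 2) := by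
    intro R hR
    have hle := sum_sq_add_sq_le_one hq (notMem_of_subset_compl_pair hR).1
    have := sum_sq_nonneg q R
    refine le_trans ?_ (h μ _ _ hμ (by positivity) hle (by linarith))
    nlinarith
  have hmean := subsetMean_mono hθ.le (by linarith) hgap
  rw [subsetMean_const] at hmean
  calc 3 / 8 * c * θ * q i ^ 2 = θ * (1 / 2) * (3 / 4 * c * q i ^ 2) := by ring
    _ ≤ θ * (1 - θ) * (3 / 4 * c * q i ^ 2) := by gcongr; linarith
    _ ≤ pairSlope θ μ q i j := by
      have : 0 ≤ 1 - θ := by linarith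
      unfold pairSlope
      gcongr

/-- The part of the population curvature along `pairDir` carried by the coordinate `k` of the pair,
conditionally on the set of the other active coordinates. -/
def pairCurvGap (θ μ : ℝ) (q : ι → ℝ) (i j k : ι) : ℝ :=
  subsetMean θ {i, j}ᶜ fun R => q i ^ 2 * q j ^ 2 / (∑ l ∈ R, q l ^ 2 + q k ^ 2) *
    gaussianCurvGap μ (∑ l ∈ R, q l ^ 2 + q k ^ 2)

lemma exists_pairCurvGap_ge : ∃ c τ₀ : ℝ, 0 < c ∧ 1 ≤ τ₀ ∧
    ∀ {ι : Type*} [DecidableEq ι] [Fintype ι] {θ μ : ℝ} {q : ι → ℝ} {i j k : ι},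
      0 ≤ θ → θ ≤ 1 → 0 < μ → ∑ l, q l ^ 2 ≤ 1 → q i ^ 2 / 4 ≤ q j ^ 2 → τ₀ * μ ≤ |q i| →
      k = i ∨ k = j → c * q i ^ 4 ≤ pairCurvGap θ μ q i j k := by
  obtain ⟨c, τ₀, hc, hτ₀, h⟩ := exists_gaussianCurvGap_ge
  refine ⟨c / 4, 2 * τ₀, by positivity, by linarith, ?_⟩
  intro ι _ _ θ μ q i j k h0 h1 hμ hq hij hτ hk
  rw [← subsetMean_const θ ({i, j}ᶜ : Finset ι) (c / 4 * q i ^ 4)]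
  refine subsetMean_mono h0 h1 fun R hR => ?_
  have hkR : k ∉ R := by
    obtain ⟨hi, hj⟩ := notMem_of_subset_compl_pair hR
    rcases hk with rfl | rfl <;> assumption
  have hqk : q i ^ 2 / 4 ≤ q k ^ 2 := by
    rcases hk with rfl | rfl
    · linarith [sq_nonneg (q k)]
    · exact hij
  have hqi : 0 < |q i| := lt_of_lt_of_le (by positivity) hτ
  have hs1 := sum_sq_add_sq_le_one hq hkR
  have hs : q i ^ 2 / 4 ≤ ∑ l ∈ R, q l ^ 2 + q k ^ 2 := by linarith [sum_sq_nonneg q R]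
  set s := ∑ l ∈ R, q l ^ 2 + q k ^ 2
  have hs0 : 0 < s := lt_of_lt_of_le (by rw [← sq_abs]; positivity) hs
  have hsqrt : τ₀ * μ ≤ √s :=
    le_trans (by linarith) (le_sqrt_of_sq_le (x := |q i| / 2) (by rw [div_pow, sq_abs]; linarith))
  calc c / 4 * q i ^ 4 = q i ^ 2 * (q i ^ 2 / 4) * c := by ring
    _ ≤ q i ^ 2 * q j ^ 2 * c := by gcongr
    _ ≤ q i ^ 2 * q j ^ 2 / s * c := by gcongr; exact le_div_self (by positivity) hs0 hs1
    _ ≤ q i ^ 2 * q j ^ 2 / s * gaussianCurvGap μ s := by gcongr; exact h μ s hμ hsqrt hs1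

end Pair

section PairMoments

variable {n : ℕ} {θ : ℝ} {i j : Fin n}

lemma meanSlope_pairDir (h0 : 0 ≤ θ) (h1 : θ ≤ 1) (μ : ℝ) (q : Fin n → ℝ) (hij : i ≠ j) :
    meanSlope θ μ q (pairDir q i j) = q i * q j * pairSlope θ μ q i j := by
  rw [meanSlope_eq h0 h1, subsetMean_univ_eq_compl_pair θ hij, pairSlope, ← mul_assoc,
    ← subsetMean_const_mul]
  refine subsetMean_congr θ fun R hR => ?_
  obtain ⟨hi, hj⟩ := notMem_of_subset_compl_pair hR
  have hij' : i ∉ insert j R := by simp [hij, hi]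
  have hzero : ∑ l ∈ R, q l * pairDir q i j l = 0 :=
    sum_eq_zero_of_subset_compl_pair (fun l hi hj => by simp [pairDir, hi, hj]) hR
  have hdi : pairDir q i j i = -q j := by simp [pairDir, hij]
  have hdj : pairDir q i j j = q i := by simp [pairDir]
  simp only [Finset.sum_insert hij', Finset.sum_insert hi, Finset.sum_insert hj, hzero, hdi, hdj,
    add_comm (q i ^ 2) (∑ l ∈ R, q l ^ 2), add_comm (q j ^ 2) (∑ l ∈ R, q l ^ 2)]
  ring

lemma meanCurv_pairDir_sub_meanSlope_pairProj (h0 : 0 ≤ θ) (h1 : θ ≤ 1) (μ : ℝ) (q : Fin n → ℝ)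
    (hij : i ≠ j) :
    meanCurv θ μ q (pairDir q i j) / μ - meanSlope θ μ q (pairProj q i j)
      = (q i ^ 2 - q j ^ 2) * pairSlope θ μ q i j
        - θ * (1 - θ) * (pairCurvGap θ μ q i j i + pairCurvGap θ μ q i j j) := by
  rw [meanCurv_eq h0 h1, meanSlope_eq h0 h1, div_eq_inv_mul, ← subsetMean_const_mul,
    ← subsetMean_sub, subsetMean_univ_eq_compl_pair θ hij, pairSlope, mul_left_comm (_ - _),
    ← mul_sub, pairCurvGap, pairCurvGap, ← subsetMean_const_mul, ← subsetMean_add,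
    ← subsetMean_sub, ← subsetMean_const_mul]
  refine subsetMean_congr θ fun R hR => ?_
  obtain ⟨hi, hj⟩ := notMem_of_subset_compl_pair hR
  have hij' : i ∉ insert j R := by simp [hij, hi]
  have hdir : ∑ l ∈ R, q l * pairDir q i j l = 0 :=
    sum_eq_zero_of_subset_compl_pair (fun l hi hj => by simp [pairDir, hi, hj]) hR
  have hdirsq : ∑ l ∈ R, pairDir q i j l ^ 2 = 0 :=
    sum_eq_zero_of_subset_compl_pair (fun l hi hj => by simp [pairDir, hi, hj]) hR
  have hproj : ∑ l ∈ R, q l * pairProj q i j l = 0 :=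
    sum_eq_zero_of_subset_compl_pair (fun l hi hj => by simp [pairProj, hi, hj]) hR
  have hdi : pairDir q i j i = -q j := by simp [pairDir, hij]
  have hdj : pairDir q i j j = q i := by simp [pairDir]
  have hpi : pairProj q i j i = q i := by simp [pairProj, hij]
  have hpj : pairProj q i j j = q j := by simp [pairProj]
  simp only [Finset.sum_insert hij', Finset.sum_insert hi, Finset.sum_insert hj, hdir, hdirsq,
    hproj, hdi, hdj, hpi, hpj, gaussianCurv, gaussianCurvGap,
    add_comm (q i ^ 2) (∑ l ∈ R, q l ^ 2), add_comm (q j ^ 2) (∑ l ∈ R, q l ^ 2)]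
  ring

lemma exists_pair_curvature_le : ∃ c τ₀ : ℝ, 0 < c ∧ 1 ≤ τ₀ ∧
    ∀ {n : ℕ} {θ μ : ℝ} {q : Fin n → ℝ} {i j : Fin n}, i ≠ j → 0 < θ → θ ≤ 1 / 2 → 0 < μ →
      ∑ l, q l ^ 2 ≤ 1 → q i ^ 2 / 4 ≤ q j ^ 2 → q j ^ 2 ≤ q i ^ 2 → τ₀ * μ ≤ |q i| →
      meanCurv θ μ q (pairDir q i j) / μ - meanSlope θ μ q (pairProj q i j)
        ≤ q i ^ 2 * pairSlope θ μ q i j - c * θ * q i ^ 4 := by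
  obtain ⟨c, τ₀, hc, hτ₀, h⟩ := exists_pairCurvGap_ge
  refine ⟨c, τ₀, hc, hτ₀, ?_⟩
  intro n θ μ q i j hij hθ hθ2 hμ hq hij4 hji hτ
  have h1 : θ ≤ 1 := by linarith
  have hgapi := h hθ.le h1 hμ hq hij4 hτ (.inl rfl)
  have hgapj := h hθ.le h1 hμ hq hij4 hτ (.inr rfl)
  have hslope : 0 ≤ q j ^ 2 * pairSlope θ μ q i j :=
    mul_nonneg (sq_nonneg _) (pairSlope_nonneg hμ hθ.le h1 hji)
  have hgap : c * θ * q i ^ 4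
      ≤ θ * (1 - θ) * (pairCurvGap θ μ q i j i + pairCurvGap θ μ q i j j) := calc
    c * θ * q i ^ 4 = θ * (1 / 2) * (c * q i ^ 4 + c * q i ^ 4) := by ring
    _ ≤ θ * (1 - θ) * (pairCurvGap θ μ q i j i + pairCurvGap θ μ q i j j) := by
      gcongr
      linarith
  rw [meanCurv_pairDir_sub_meanSlope_pairProj hθ.le h1 μ q hij]
  linarith

end PairMoments

section Axis

/-- The direction from `q` away from the `i`-th axis, of length `√(1 - q i ^ 2)`. -/
def axisDir {ι : Type*} [Fintype ι] [DecidableEq ι] (q : ι → ℝ) (i : ι) : ι → ℝ :=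
  fun l => if l = i then -∑ k ∈ {i}ᶜ, q k ^ 2 else q i * q l

lemma sum_mul_axisDir_of_notMem {ι : Type*} [Fintype ι] [DecidableEq ι] (q : ι → ℝ) {i : ι}
    {R : Finset ι} (hi : i ∉ R) : ∑ l ∈ R, q l * axisDir q i l = q i * ∑ l ∈ R, q l ^ 2 := by
  rw [Finset.mul_sum]
  refine Finset.sum_congr rfl fun l hl => ?_
  have hne : l ≠ i := fun h => hi (h ▸ hl)
  rw [axisDir, if_neg hne]
  ring

variable {n : ℕ} {θ μ : ℝ} {q : Fin n → ℝ} {i : Fin n}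

lemma le_meanSlope_axisDir (hμ : 0 < μ) (h0 : 0 ≤ θ) (h1 : θ ≤ 1) (hi : 0 ≤ q i) :
    q i * (∑ k ∈ {i}ᶜ, q k ^ 2) * (θ * (1 - θ)) *
        (gaussianCurv μ (∑ k ∈ {i}ᶜ, q k ^ 2) - gaussianCurv μ (q i ^ 2))
      ≤ meanSlope θ μ q (axisDir q i) := by
  rw [meanSlope_eq h0 h1, subsetMean_univ_eq_compl_singleton θ i]
  set ρ := ∑ k ∈ {i}ᶜ, q k ^ 2
  have hpointwise : ∀ R ⊆ ({i}ᶜ : Finset (Fin n)),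
      q i * (1 - θ) * gaussianCurv μ ρ * (∑ l ∈ R, q l ^ 2)
        + q i * θ * gaussianCurv μ (q i ^ 2) * ((∑ l ∈ R, q l ^ 2) - ρ) ≤
      (1 - θ) * ((∑ l ∈ R, q l * axisDir q i l) * gaussianCurv μ (∑ l ∈ R, q l ^ 2))
        + θ * ((∑ l ∈ insert i R, q l * axisDir q i l) *
          gaussianCurv μ (∑ l ∈ insert i R, q l ^ 2)) := by
    intro R hR
    have hiR : i ∉ R := fun h => by simpa using hR h
    have hai : axisDir q i i = -ρ := if_pos rfl
    rw [Finset.sum_insert hiR, Finset.sum_insert hiR, sum_mul_axisDir_of_notMem q hiR, hai]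
    have hr0 := sum_sq_nonneg q R
    have hrρ : ∑ l ∈ R, q l ^ 2 ≤ ρ := sum_sq_le_sum_sq q hR
    set r := ∑ l ∈ R, q l ^ 2
    have hout : 0 ≤ (1 - θ) * (q i * r) * (gaussianCurv μ r - gaussianCurv μ ρ) :=
      mul_nonneg (mul_nonneg (sub_nonneg.2 h1) (by positivity))
        (sub_nonneg.2 (gaussianCurv_le_of_le hμ hrρ))
    have hin : 0 ≤ θ * (q i * (ρ - r)) *
        (gaussianCurv μ (q i ^ 2) - gaussianCurv μ (q i ^ 2 + r)) :=
      mul_nonneg (mul_nonneg h0 (mul_nonneg hi (sub_nonneg.2 hrρ)))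
        (sub_nonneg.2 (gaussianCurv_le_of_le hμ (le_add_of_nonneg_right hr0)))
    linarith
  refine le_trans (le_of_eq ?_) (subsetMean_mono h0 h1 hpointwise)
  rw [subsetMean_add, subsetMean_const_mul, subsetMean_const_mul, subsetMean_sub,
    subsetMean_const, subsetMean_sum θ _ fun l => q l ^ 2]
  ring

lemma mul_sum_sq_le_regression {ι : Type*} (S : Finset ι) (q v : ι → ℝ) {m a b : ℝ}
    (ha : m ≤ a) (hb : m ≤ b) : m * (∑ l ∈ S, v l ^ 2) ≤
      (∑ l ∈ S, v l ^ 2 - (∑ l ∈ S, q l * v l) ^ 2 / ∑ l ∈ S, q l ^ 2) * a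
        + (∑ l ∈ S, q l * v l) ^ 2 / (∑ l ∈ S, q l ^ 2) * b := by
  have hres : 0 ≤ ∑ l ∈ S, v l ^ 2 - (∑ l ∈ S, q l * v l) ^ 2 / ∑ l ∈ S, q l ^ 2 := by
    rw [← sum_regressionResidual_sq]
    exact Finset.sum_nonneg fun _ _ => sq_nonneg _
  have hreg : 0 ≤ (∑ l ∈ S, q l * v l) ^ 2 / ∑ l ∈ S, q l ^ 2 :=
    div_nonneg (sq_nonneg _) (Finset.sum_nonneg fun _ _ => sq_nonneg _)
  nlinarith

lemma le_meanCurv (hμ : 0 < μ) (h0 : 0 ≤ θ) (h1 : θ ≤ 1) (v : Fin n → ℝ)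
    (hi : ∑ k ∈ {i}ᶜ, q k ^ 2 ≤ μ ^ 2) :
    min (meanSech2 1) (meanSech2MulSq 1) * (θ * (1 - θ)) * ∑ k ∈ {i}ᶜ, v k ^ 2
      ≤ meanCurv θ μ q v := by
  rw [meanCurv_eq h0 h1, subsetMean_univ_eq_compl_singleton θ i]
  set m := min (meanSech2 1) (meanSech2MulSq 1)
  have hlhs : m * (θ * (1 - θ)) * ∑ k ∈ {i}ᶜ, v k ^ 2
      = subsetMean θ {i}ᶜ (fun R => (1 - θ) * (m * ∑ l ∈ R, v l ^ 2) + θ * 0) := by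
    rw [subsetMean_add, subsetMean_const_mul, subsetMean_const_mul,
      subsetMean_sum θ _ fun l => v l ^ 2, mul_zero, subsetMean_const]
    ring
  rw [hlhs]
  refine subsetMean_mono h0 h1 fun R hR => ?_
  have hscale : √(∑ l ∈ R, q l ^ 2) / μ ≤ 1 :=
    (div_le_one hμ).2 (sqrt_le_iff.2 ⟨hμ.le, (sum_sq_le_sum_sq q hR).trans hi⟩)
  have : 0 ≤ 1 - θ := sub_nonneg.2 h1
  gcongr
  · exact mul_sum_sq_le_regression R q v
      ((min_le_left _ _).trans (meanSech2_le_of_le (by positivity) hscale))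
      ((min_le_right _ _).trans (meanSech2MulSq_le_of_le (by positivity) hscale))
  · simpa only [zero_mul] using mul_sum_sq_le_regression (insert i R) q v
      (meanSech2_pos _).le (meanSech2MulSq_pos _).le

lemma meanSlope_self_le (hμ : 0 < μ) (h0 : 0 ≤ θ) (h1 : θ ≤ 1) (hq : ∑ l, q l ^ 2 ≤ 1) :
    meanSlope θ μ q q ≤ sech2Mass := by
  rw [meanSlope_eq h0 h1, ← subsetMean_const θ (Finset.univ : Finset (Fin n)) sech2Mass]
  refine subsetMean_mono h0 h1 fun R hR => ?_
  simp_rw [← sq]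
  exact mul_gaussianCurv_le hμ (sum_sq_nonneg q R) ((sum_sq_le_sum_sq q hR).trans hq)

lemma quarter_mul_le_meanSlope_axisDir (hμ : 0 < μ) (hθ : 0 ≤ θ) (hθ2 : θ ≤ 1 / 2)
    (hqi : 1 / 2 ≤ q i) {X : ℝ} (hX : 0 ≤ X)
    (hle : X ≤ (∑ k ∈ {i}ᶜ, q k ^ 2) *
      (gaussianCurv μ (∑ k ∈ {i}ᶜ, q k ^ 2) - gaussianCurv μ (q i ^ 2))) :
    1 / 4 * θ * X ≤ meanSlope θ μ q (axisDir q i) := by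
  refine le_trans ?_ (le_meanSlope_axisDir hμ hθ (by linarith) (by linarith))
  calc 1 / 4 * θ * X = 1 / 2 * (θ * (1 / 2)) * X := by ring
    _ ≤ q i * (θ * (1 - θ)) * ((∑ k ∈ {i}ᶜ, q k ^ 2) *
        (gaussianCurv μ (∑ k ∈ {i}ᶜ, q k ^ 2) - gaussianCurv μ (q i ^ 2))) := by
      have : 0 ≤ 1 - θ := by linarith
      gcongr
      linarith
    _ = _ := by ring

lemma exists_meanSlope_axisDir_ge : ∃ c δ : ℝ, 0 < c ∧ 0 < δ ∧
    ∀ {n : ℕ} {θ μ ρ : ℝ} {q : Fin n → ℝ} {i : Fin n}, 0 < θ → θ ≤ 1 / 2 → 0 < μ → μ ≤ δ →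
      1 / 2 ≤ q i → 3 / 4 ≤ q i ^ 2 → 0 ≤ ρ → ∑ k ∈ {i}ᶜ, q k ^ 2 = ρ ^ 2 → ρ ≤ δ →
      (ρ ≤ μ → c * θ * ρ ^ 2 / μ ≤ meanSlope θ μ q (axisDir q i)) ∧
      (μ ≤ ρ → c * θ * ρ ≤ meanSlope θ μ q (axisDir q i)) := by
  have hI := sech2Mass_nonneg
  have hA := meanSech2_pos 1
  have hI' : 0 < 4 * (sech2Mass + 1) := by linarith
  refine ⟨meanSech2 1 / 8, meanSech2 1 / (4 * (sech2Mass + 1)), by positivity, by positivity, ?_⟩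
  intro n θ μ ρ q i hθ hθ2 hμ hμδ hqi hqi2 hρ hsum hρδ
  have hfar := gaussianCurv_le_two_mul hμ hqi2
  rw [le_div_iff₀ hI'] at hμδ hρδ
  have hslope {X : ℝ} (hX : 0 ≤ X)
      (hle : X ≤ ρ ^ 2 * (gaussianCurv μ (ρ ^ 2) - gaussianCurv μ (q i ^ 2))) :
      1 / 4 * θ * X ≤ meanSlope θ μ q (axisDir q i) :=
    quarter_mul_le_meanSlope_axisDir hμ hθ.le hθ2 hqi hX (by rwa [hsum])
  refine ⟨fun hle => ?_, fun hle => ?_⟩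
  · have hnear := le_gaussianCurv_sq_of_le hμ hρ hle
    have hhalf : 2 * sech2Mass ≤ meanSech2 1 / μ / 2 := by
      rw [div_div, le_div_iff₀ (by positivity)]
      nlinarith
    have := hslope (X := ρ ^ 2 * (meanSech2 1 / μ / 2)) (by positivity) (by gcongr; linarith)
    exact le_trans (le_of_eq (by ring)) this
  · have hnear := le_mul_gaussianCurv_sq hμ hle
    have := hslope (X := ρ * (meanSech2 1 / 2)) (by positivity) (by nlinarith)
    exact le_trans (le_of_eq (by ring)) this

end Axis

section BernoulliGaussianLaw

variable {θ : ℝ}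

lemma isProbabilityMeasure_bg (h0 : 0 ≤ θ) (h1 : θ ≤ 1) : IsProbabilityMeasure (bg θ) := by
  have hmass : bg θ Set.univ = ENNReal.ofReal θ * gaussianReal 0 1 Set.univ
      + ENNReal.ofReal (1 - θ) * Measure.dirac (0 : ℝ) Set.univ := by
    rw [bg, Measure.add_apply]
    rfl
  constructor
  rw [hmass, measure_univ, measure_univ, mul_one, mul_one,
    ← ENNReal.ofReal_add h0 (sub_nonneg.2 h1), add_sub_cancel, ENNReal.ofReal_one]

lemma isProbabilityMeasure_bgVec (n : ℕ) (h0 : 0 ≤ θ) (h1 : θ ≤ 1) :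
    IsProbabilityMeasure (bgVec θ n) := by
  have := isProbabilityMeasure_bg h0 h1
  unfold bgVec
  infer_instance

/-- The law of `p` independent vectors in `ℝ^n` with i.i.d. `BG(θ)` entries: the columns of a
matrix distributed as `bgMatrix θ n p`. -/
def bgCols (θ : ℝ) (n p : ℕ) : Measure (Fin p → Fin n → ℝ) := Measure.pi fun _ => bgVec θ n

lemma isProbabilityMeasure_bgCols (n p : ℕ) (h0 : 0 ≤ θ) (h1 : θ ≤ 1) :
    IsProbabilityMeasure (bgCols θ n p) := by
  have := isProbabilityMeasure_bgVec n h0 h1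
  unfold bgCols
  infer_instance

/-- Both laws are the image of the product law of all entries under currying. -/
lemma bgMatrix_apply_eq_bgCols (h0 : 0 ≤ θ) (h1 : θ ≤ 1) {n p : ℕ}
    (G : Set (Fin n → Fin p → ℝ)) :
    bgMatrix θ n p G = bgCols θ n p {Y | (fun i k => Y k i) ∈ G} := by
  have := isProbabilityMeasure_bg h0 h1
  have hrows : bgMatrix θ n p = (Measure.infinitePi fun _ : Fin n × Fin p => bg θ).map
      (MeasurableEquiv.curry (Fin n) (Fin p) ℝ) := by
    rw [Measure.infinitePi_map_curry (fun _ _ => bg θ), bgMatrix]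
    simp_rw [Measure.infinitePi_eq_pi]
  have hcols : bgCols θ n p = (Measure.infinitePi fun _ : Fin p × Fin n => bg θ).map
      (MeasurableEquiv.curry (Fin p) (Fin n) ℝ) := by
    rw [Measure.infinitePi_map_curry (fun _ _ => bg θ), bgCols, bgVec]
    simp_rw [Measure.infinitePi_eq_pi]
  rw [hrows, ← Measure.infinitePi_map_piCongrLeft (fun _ : Fin n × Fin p => bg θ)
    (Equiv.prodComm (Fin p) (Fin n)), hcols, MeasurableEquiv.map_apply, MeasurableEquiv.map_apply,
    MeasurableEquiv.map_apply]
  rfl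

end BernoulliGaussianLaw

section Chernoff

lemma exp_le_one_add_add_sq_mul_exp_abs (x : ℝ) : exp x ≤ 1 + x + x ^ 2 * exp |x| := by
  have h := Complex.norm_exp_sub_sum_le_norm_mul_exp (x : ℂ) 2
  have hcast : Complex.exp x - ∑ m ∈ Finset.range 2, (x : ℂ) ^ m / (m.factorial : ℂ)
      = ((exp x - (1 + x) : ℝ) : ℂ) := by
    simp [Finset.sum_range_succ]
  rw [hcast, Complex.norm_real, Complex.norm_real, norm_eq_abs, norm_eq_abs, sq_abs] at h
  linarith [le_abs_self (exp x - (1 + x))]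

/-- A bound for half the variance proxy of a random variable `T` with `E exp (|T| / 4) ≤ K`:
for `|l| ≤ 1 / 16` one has `E exp (l (T - E T)) ≤ exp (subexpProxy K * l ^ 2)`. -/
def subexpProxy (K : ℝ) : ℝ := 512 * exp (K / 2) * K

variable {Ω : Type*} [MeasurableSpace Ω] {ν : Measure Ω} {T : Ω → ℝ} {K : ℝ}

lemma integrable_of_integrable_exp_abs (hT : Measurable T)
    (hexp : Integrable (fun x => exp (|T x| / 4)) ν) : Integrable T ν := by
  refine (hexp.const_mul 4).mono hT.aestronglyMeasurable (.of_forall fun x => ?_)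
  rw [norm_eq_abs, norm_eq_abs, abs_of_nonneg (a := 4 * exp (|T x| / 4)) (by positivity)]
  linarith [add_one_le_exp (|T x| / 4)]

lemma abs_integral_le_four_mul (hT : Measurable T)
    (hexp : Integrable (fun x => exp (|T x| / 4)) ν) (hK : ∫ x, exp (|T x| / 4) ∂ν ≤ K) :
    |∫ x, T x ∂ν| ≤ 4 * K := by
  calc |∫ x, T x ∂ν| ≤ ∫ x, |T x| ∂ν := abs_integral_le_integral_abs
    _ ≤ ∫ x, 4 * exp (|T x| / 4) ∂ν :=
      integral_mono (integrable_of_integrable_exp_abs hT hexp).abs (hexp.const_mul 4) fun x =>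
        show |T x| ≤ 4 * exp (|T x| / 4) by linarith [add_one_le_exp (|T x| / 4)]
    _ ≤ 4 * K := by
      rw [integral_const_mul]
      gcongr

lemma exp_mul_sub_le {l m : ℝ} (hl : |l| ≤ 1 / 16) (hm : |m| ≤ 4 * K) (t : ℝ) :
    exp (l * (t - m))
      ≤ 1 + l * (t - m) + l ^ 2 * (512 * exp (K / 2) * exp (|t| / 4)) := by
  refine (exp_le_one_add_add_sq_mul_exp_abs _).trans ?_
  have hsub : |t - m| ≤ |t| + 4 * K := (abs_sub _ _).trans (by linarith)
  set y := t - m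
  have hexp : exp |l * y| ≤ exp (|y| / 16) := by
    rw [abs_mul]
    gcongr
    nlinarith [abs_nonneg y]
  have hsq : y ^ 2 ≤ 512 * exp (|y| / 16) := by
    have := quadratic_le_exp_of_nonneg (x := |y| / 16) (by positivity)
    rw [← sq_abs y]
    nlinarith [abs_nonneg y]
  have hprod : y ^ 2 * exp |l * y| ≤ 512 * exp (K / 2) * exp (|t| / 4) := by
    calc y ^ 2 * exp |l * y| ≤ 512 * exp (|y| / 16) * exp (|y| / 16) := by gcongr
      _ = 512 * exp (|y| / 8) := by
        rw [mul_assoc, ← exp_add]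
        ring_nf
      _ ≤ 512 * exp (K / 2 + |t| / 4) := by
        gcongr
        linarith [abs_nonneg t]
      _ = 512 * exp (K / 2) * exp (|t| / 4) := by rw [exp_add, mul_assoc]
  rw [mul_pow, mul_assoc]
  gcongr

variable {p : ℕ}

/-- The deviation of the empirical mean of `f` over the sample `x` from its expectation. -/
def sampleDeviation (ν : Measure Ω) {p : ℕ} (x : Fin p → Ω) (f : Ω → ℝ) : ℝ :=
  (p : ℝ)⁻¹ * ∑ k, f (x k) - ∫ y, f y ∂ν

lemma sampleDeviation_const_mul (x : Fin p → Ω) (c : ℝ) (f : Ω → ℝ) :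
    sampleDeviation ν x (fun y => c * f y) = c * sampleDeviation ν x f := by
  rw [sampleDeviation, sampleDeviation, integral_const_mul, ← Finset.mul_sum]
  ring

lemma abs_sampleDeviation_sub_le {f g w : Ω → ℝ} (hf : Integrable f ν) (hg : Integrable g ν)
    (hw : Integrable w ν) {c : ℝ} (hfg : ∀ y, |f y - g y| ≤ c * w y) (x : Fin p → Ω) :
    |sampleDeviation ν x f - sampleDeviation ν x g|
      ≤ c * ((p : ℝ)⁻¹ * ∑ k, w (x k) + ∫ y, w y ∂ν) := by
  have hsample : |(p : ℝ)⁻¹ * ∑ k, f (x k) - (p : ℝ)⁻¹ * ∑ k, g (x k)|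
      ≤ c * ((p : ℝ)⁻¹ * ∑ k, w (x k)) := by
    calc |(p : ℝ)⁻¹ * ∑ k, f (x k) - (p : ℝ)⁻¹ * ∑ k, g (x k)|
        = (p : ℝ)⁻¹ * |∑ k, (f (x k) - g (x k))| := by
          rw [← mul_sub, ← Finset.sum_sub_distrib, abs_mul, abs_of_nonneg (by positivity)]
      _ ≤ (p : ℝ)⁻¹ * ∑ k, c * w (x k) := by
        gcongr
        exact (Finset.abs_sum_le_sum_abs _ _).trans (Finset.sum_le_sum fun k _ => hfg _)
      _ = c * ((p : ℝ)⁻¹ * ∑ k, w (x k)) := by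
        rw [← Finset.mul_sum]
        ring
  have hmean : |∫ y, f y ∂ν - ∫ y, g y ∂ν| ≤ c * ∫ y, w y ∂ν := by
    rw [← integral_sub hf hg, ← integral_const_mul]
    exact abs_integral_le_integral_abs.trans
      (integral_mono (hf.sub hg).abs (hw.const_mul c) hfg)
  rw [mul_add, sampleDeviation, sampleDeviation, sub_sub_sub_comm]
  exact (abs_sub _ _).trans (add_le_add hsample hmean)

variable [IsProbabilityMeasure ν]

lemma one_le_of_integral_exp_abs_le (hexp : Integrable (fun x => exp (|T x| / 4)) ν)
    (hK : ∫ x, exp (|T x| / 4) ∂ν ≤ K) : 1 ≤ K := by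
  refine le_trans ?_ hK
  calc (1 : ℝ) = ∫ _, (1 : ℝ) ∂ν := by simp
    _ ≤ ∫ x, exp (|T x| / 4) ∂ν :=
      integral_mono (integrable_const 1) hexp fun x => one_le_exp (by positivity)

lemma integrable_exp_mul_sub_integral (hT : Measurable T)
    (hexp : Integrable (fun x => exp (|T x| / 4)) ν) {l : ℝ} (hl : |l| ≤ 1 / 16) :
    Integrable (fun x => exp (l * (T x - ∫ y, T y ∂ν))) ν := by
  have hTi := integrable_of_integrable_exp_abs hT hexp
  have hbound := ((integrable_const (1 : ℝ)).add
    ((hTi.sub (integrable_const (∫ y, T y ∂ν))).const_mul l)).add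
    ((hexp.const_mul (512 * exp ((∫ x, exp (|T x| / 4) ∂ν) / 2))).const_mul (l ^ 2))
  refine hbound.mono' (by fun_prop) (.of_forall fun x => ?_)
  rw [norm_eq_abs, abs_exp]
  exact exp_mul_sub_le hl (abs_integral_le_four_mul hT hexp le_rfl) (T x)

lemma integral_exp_mul_sub_integral_le (hT : Measurable T)
    (hexp : Integrable (fun x => exp (|T x| / 4)) ν) (hK : ∫ x, exp (|T x| / 4) ∂ν ≤ K)
    {l : ℝ} (hl : |l| ≤ 1 / 16) :
    ∫ x, exp (l * (T x - ∫ y, T y ∂ν)) ∂ν ≤ exp (subexpProxy K * l ^ 2) := by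
  have hTi := integrable_of_integrable_exp_abs hT hexp
  set m := ∫ y, T y ∂ν with hm
  have hsub : Integrable (fun x => T x - m) ν := hTi.sub (integrable_const m)
  have hlin : Integrable (fun x => 1 + l * (T x - m)) ν :=
    (integrable_const 1).add (hsub.const_mul l)
  have hquad : Integrable (fun x => l ^ 2 * (512 * exp (K / 2) * exp (|T x| / 4))) ν :=
    (hexp.const_mul _).const_mul _
  calc ∫ x, exp (l * (T x - m)) ∂ν
      ≤ ∫ x, (1 + l * (T x - m) + l ^ 2 * (512 * exp (K / 2) * exp (|T x| / 4))) ∂ν :=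
        integral_mono (integrable_exp_mul_sub_integral hT hexp hl) (hlin.add hquad) fun x =>
          exp_mul_sub_le hl (abs_integral_le_four_mul hT hexp hK) (T x)
    _ = 1 + l ^ 2 * (512 * exp (K / 2) * ∫ x, exp (|T x| / 4) ∂ν) := by
      rw [integral_add hlin hquad, integral_add (integrable_const 1) (hsub.const_mul l),
        integral_const_mul, integral_const_mul, integral_const_mul,
        integral_sub hTi (integrable_const m)]
      simp only [integral_const, probReal_univ, smul_eq_mul, one_mul, ← hm, sub_self, mul_zero,
        add_zero]
    _ ≤ 1 + l ^ 2 * (512 * exp (K / 2) * K) := by gcongr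
    _ ≤ exp (subexpProxy K * l ^ 2) := by
      rw [subexpProxy]
      linarith [add_one_le_exp (512 * exp (K / 2) * K * l ^ 2)]

lemma mgf_sum_sub_integral_le (hT : Measurable T)
    (hexp : Integrable (fun x => exp (|T x| / 4)) ν) (hK : ∫ x, exp (|T x| / 4) ∂ν ≤ K)
    {l : ℝ} (hl : |l| ≤ 1 / 16) :
    mgf (fun x : Fin p → Ω => ∑ k, (T (x k) - ∫ y, T y ∂ν)) (Measure.pi fun _ => ν) l
      ≤ exp (p * (subexpProxy K * l ^ 2)) := by
  rw [mgf]
  simp_rw [Finset.mul_sum, exp_sum]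
  rw [integral_fintype_prod_eq_pow fun y => exp (l * (T y - ∫ y, T y ∂ν)), Fintype.card_fin,
    exp_nat_mul]
  exact pow_le_pow_left₀ (integral_nonneg fun x => (exp_pos _).le)
    (integral_exp_mul_sub_integral_le hT hexp hK hl) p

lemma measureReal_le_sampleDeviation_le (hT : Measurable T)
    (hexp : Integrable (fun x => exp (|T x| / 4)) ν) (hK : ∫ x, exp (|T x| / 4) ∂ν ≤ K)
    (hp : 0 < p) {t : ℝ} (ht : 0 ≤ t) (htK : t ≤ subexpProxy K / 8) :
    (Measure.pi fun _ : Fin p => ν).real {x | t ≤ sampleDeviation ν x T}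
      ≤ exp (-(p * t ^ 2 / (4 * subexpProxy K))) := by
  have hK0 : 0 < K := by linarith [one_le_of_integral_exp_abs_le hexp hK]
  have hproxy : 0 < subexpProxy K := by unfold subexpProxy; positivity
  have hp' : (0 : ℝ) < p := by exact_mod_cast hp
  set l := t / (2 * subexpProxy K) with hl
  have hl0 : 0 ≤ l := by positivity
  have hl1 : |l| ≤ 1 / 16 := by
    rw [abs_of_nonneg hl0, hl, div_le_iff₀ (by positivity)]
    linarith
  have hset : {x : Fin p → Ω | t ≤ sampleDeviation ν x T}
      = {x | p * t ≤ ∑ k, (T (x k) - ∫ y, T y ∂ν)} := by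
    ext x
    simp only [sampleDeviation, Set.mem_ofPred_eq, Finset.sum_sub_distrib, Finset.sum_const,
      Finset.card_univ, Fintype.card_fin, nsmul_eq_mul]
    rw [← mul_le_mul_iff_right₀ hp', mul_sub, mul_inv_cancel_left₀ hp'.ne']
  have hint : Integrable (fun x : Fin p → Ω => exp (l * ∑ k, (T (x k) - ∫ y, T y ∂ν)))
      (Measure.pi fun _ => ν) := by
    simp_rw [Finset.mul_sum, exp_sum]
    exact Integrable.fintype_prod fun _ => integrable_exp_mul_sub_integral hT hexp hl1
  rw [hset]
  calc (Measure.pi fun _ : Fin p => ν).real {x | p * t ≤ ∑ k, (T (x k) - ∫ y, T y ∂ν)}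
      ≤ exp (-l * (p * t))
          * mgf (fun x => ∑ k, (T (x k) - ∫ y, T y ∂ν)) (Measure.pi fun _ => ν) l :=
        measure_ge_le_exp_mul_mgf (p * t) hl0 hint
    _ ≤ exp (-l * (p * t)) * exp (p * (subexpProxy K * l ^ 2)) := by
      gcongr
      exact mgf_sum_sub_integral_le hT hexp hK hl1
    _ = exp (-(p * t ^ 2 / (4 * subexpProxy K))) := by
      rw [← exp_add, hl]
      congr 1
      field_simp
      ring

lemma measureReal_le_abs_sampleDeviation_le (hT : Measurable T)
    (hexp : Integrable (fun x => exp (|T x| / 4)) ν) (hK : ∫ x, exp (|T x| / 4) ∂ν ≤ K)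
    (hp : 0 < p) {t : ℝ} (ht : 0 ≤ t) (htK : t ≤ subexpProxy K / 8) :
    (Measure.pi fun _ : Fin p => ν).real {x | t ≤ |sampleDeviation ν x T|}
      ≤ 2 * exp (-(p * t ^ 2 / (4 * subexpProxy K))) := by
  have hupper := measureReal_le_sampleDeviation_le hT hexp hK hp ht htK
  have hlower := measureReal_le_sampleDeviation_le (T := fun x => -1 * T x) (hT.const_mul _)
    (by simpa only [neg_one_mul, abs_neg] using hexp)
    (by simpa only [neg_one_mul, abs_neg] using hK) hp ht htK
  have hunion : {x : Fin p → Ω | t ≤ |sampleDeviation ν x T|} ⊆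
      {x | t ≤ sampleDeviation ν x T} ∪ {x | t ≤ sampleDeviation ν x fun y => -1 * T y} := by
    refine fun x hx => (le_abs.1 (show t ≤ |_| from hx)).imp_right fun h => ?_
    rwa [Set.mem_ofPred_eq, sampleDeviation_const_mul, neg_one_mul]
  refine (measureReal_mono hunion).trans ((measureReal_union_le _ _).trans ?_)
  linarith

lemma mul_measureReal_le_average_le {w : Ω → ℝ} (hw : Integrable w ν) (hw0 : ∀ x, 0 ≤ w x)
    (hp : 0 < p) (a : ℝ) :
    a * (Measure.pi fun _ : Fin p => ν).real {x | a ≤ (p : ℝ)⁻¹ * ∑ k, w (x k)}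
      ≤ ∫ y, w y ∂ν := by
  have : (0 : ℝ) < p := by exact_mod_cast hp
  have hint (k : Fin p) : Integrable (fun x : Fin p → Ω => w (x k)) (Measure.pi fun _ => ν) :=
    integrable_comp_eval (μ := fun _ : Fin p => ν) hw
  have hintegral (k : Fin p) :
      ∫ x : Fin p → Ω, w (x k) ∂Measure.pi (fun _ => ν) = ∫ y, w y ∂ν :=
    integral_comp_eval (μ := fun _ : Fin p => ν) hw.aestronglyMeasurable
  calc a * (Measure.pi fun _ : Fin p => ν).real {x | a ≤ (p : ℝ)⁻¹ * ∑ k, w (x k)}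
      ≤ ∫ x : Fin p → Ω, (p : ℝ)⁻¹ * ∑ k, w (x k) ∂Measure.pi (fun _ => ν) :=
        mul_meas_ge_le_integral_of_nonneg
          (.of_forall fun x => mul_nonneg (by positivity) (Finset.sum_nonneg fun k _ => hw0 _))
          ((integrable_finsetSum _ fun k _ => hint k).const_mul _) a
    _ = ∫ y, w y ∂ν := by
      rw [integral_const_mul, integral_finsetSum _ fun k _ => hint k]
      simp only [hintegral, Finset.sum_const, Finset.card_univ, Fintype.card_fin, nsmul_eq_mul]
      field_simp

end Chernoff

section GrowthWeight

/-- The weight controlling how fast the empirical quantities vary with the direction. -/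
def growthWeight {ι : Type*} [Fintype ι] (x : ι → ℝ) : ℝ := (1 + ∑ i, |x i|) ^ 3

lemma growthWeight_nonneg {ι : Type*} [Fintype ι] (x : ι → ℝ) : 0 ≤ growthWeight x := by
  unfold growthWeight
  positivity

lemma abs_pow_three_le_mul_exp (t : ℝ) : |t| ^ 3 ≤ 33 * exp (t ^ 2 / 4) := by
  have hexp := quadratic_le_exp_of_nonneg (x := t ^ 2 / 4) (by positivity)
  rw [← sq_abs] at hexp ⊢
  set y := |t|
  have hy : 0 ≤ y := abs_nonneg _
  nlinarith [sq_nonneg (y ^ 2 - y), sq_nonneg (y - 1), sq_nonneg y,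
    mul_nonneg hy (sq_nonneg (y - 1))]

lemma growthWeight_le {ι : Type*} [Fintype ι] (x : ι → ℝ) :
    growthWeight x ≤ 4 + 132 * Fintype.card ι ^ 2 * ∑ i, exp (x i ^ 2 / 4) := by
  have hsum : 0 ≤ ∑ i, |x i| := Finset.sum_nonneg fun i _ => abs_nonneg _
  have hpower : (∑ i, |x i|) ^ 3 ≤ Fintype.card ι ^ 2 * ∑ i, |x i| ^ 3 := by
    simpa using pow_sum_le_card_mul_sum_pow (s := Finset.univ) (f := fun i => |x i|)
      (fun i _ => abs_nonneg _) 2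
  calc growthWeight x ≤ 2 ^ 2 * (1 ^ 3 + (∑ i, |x i|) ^ 3) := add_pow_le zero_le_one hsum 3
    _ ≤ 2 ^ 2 * (1 ^ 3 + Fintype.card ι ^ 2 * ∑ i, 33 * exp (x i ^ 2 / 4)) := by
      gcongr
      refine hpower.trans ?_
      gcongr with i
      exact abs_pow_three_le_mul_exp (x i)
    _ = 4 + 132 * Fintype.card ι ^ 2 * ∑ i, exp (x i ^ 2 / 4) := by
      rw [← Finset.mul_sum]
      ring

lemma one_le_gaussianExpSqMoment : 1 ≤ gaussianExpSqMoment := by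
  calc (1 : ℝ) = ∫ _, (1 : ℝ) ∂gaussianReal 0 1 := by simp
    _ ≤ gaussianExpSqMoment := integral_mono (integrable_const _) integrable_exp_sq_gaussianReal
      fun y => one_le_exp (by positivity)

variable {n : ℕ} {θ : ℝ}

lemma integrable_exp_eval_sq_bgVec (h0 : 0 ≤ θ) (h1 : θ ≤ 1) (i : Fin n) :
    Integrable (fun x => exp (x i ^ 2 / 4)) (bgVec θ n) := by
  simpa using integrable_exp_sq_bgVec h0 h1 (v := Pi.single i (1 : ℝ)) (by simp [Pi.single_apply])

lemma integral_exp_eval_sq_bgVec_le (h0 : 0 ≤ θ) (h1 : θ ≤ 1) (i : Fin n) :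
    ∫ x, exp (x i ^ 2 / 4) ∂bgVec θ n ≤ gaussianExpSqMoment := by
  simpa using integral_exp_sq_bgVec_le h0 h1 (v := Pi.single i (1 : ℝ)) (by simp [Pi.single_apply])

lemma integrable_sum_exp_eval_sq_bgVec (h0 : 0 ≤ θ) (h1 : θ ≤ 1) :
    Integrable (fun x => 4 + 132 * (n : ℝ) ^ 2 * ∑ i, exp (x i ^ 2 / 4)) (bgVec θ n) := by
  have := isProbabilityMeasure_bgVec n h0 h1
  exact (integrable_const 4).add
    ((integrable_finsetSum _ fun i _ => integrable_exp_eval_sq_bgVec h0 h1 i).const_mul _)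

lemma integrable_growthWeight_bgVec (h0 : 0 ≤ θ) (h1 : θ ≤ 1) :
    Integrable (growthWeight (ι := Fin n)) (bgVec θ n) := by
  have hcont : Continuous (growthWeight (ι := Fin n)) :=
    (continuous_const.add (continuous_finsetSum _ fun i _ => (continuous_apply i).abs)).pow 3
  refine (integrable_sum_exp_eval_sq_bgVec h0 h1).mono' hcont.aestronglyMeasurable
    (.of_forall fun x => ?_)
  rw [norm_eq_abs, abs_of_nonneg (growthWeight_nonneg x)]
  simpa using growthWeight_le x

lemma integral_growthWeight_bgVec_le (h0 : 0 ≤ θ) (h1 : θ ≤ 1) (hn : 1 ≤ n) :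
    ∫ x, growthWeight x ∂bgVec θ n ≤ 136 * n ^ 3 * gaussianExpSqMoment := by
  have := isProbabilityMeasure_bgVec n h0 h1
  have hint (i : Fin n) := integrable_exp_eval_sq_bgVec h0 h1 i
  have hn' : (1 : ℝ) ≤ n := by exact_mod_cast hn
  have hone : 1 ≤ (n : ℝ) ^ 3 * gaussianExpSqMoment :=
    one_le_mul_of_one_le_of_one_le (one_le_pow₀ hn') one_le_gaussianExpSqMoment
  calc ∫ x, growthWeight x ∂bgVec θ n
      ≤ ∫ x, (4 + 132 * (n : ℝ) ^ 2 * ∑ i, exp (x i ^ 2 / 4)) ∂bgVec θ n :=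
        integral_mono (integrable_growthWeight_bgVec h0 h1)
          (integrable_sum_exp_eval_sq_bgVec h0 h1) fun x => by simpa using growthWeight_le x
    _ = 4 + 132 * (n : ℝ) ^ 2 * ∑ i : Fin n, ∫ x, exp (x i ^ 2 / 4) ∂bgVec θ n := by
      rw [integral_add (integrable_const 4)
          ((integrable_finsetSum _ fun i _ => hint i).const_mul _), integral_const_mul,
        integral_finsetSum _ fun i _ => hint i]
      simp
    _ ≤ 4 + 132 * (n : ℝ) ^ 2 * ∑ _ : Fin n, gaussianExpSqMoment := by
      gcongr
      exact integral_exp_eval_sq_bgVec_le h0 h1 i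
    _ ≤ 136 * n ^ 3 * gaussianExpSqMoment := by
      rw [Finset.sum_const, Finset.card_univ, Fintype.card_fin, nsmul_eq_mul]
      linarith

end GrowthWeight

section Grid

lemma exists_round_toward_zero {N : ℕ} (hN : 0 < N) {a : ℝ} (ha : |a| ≤ 1) :
    ∃ z ∈ Finset.Icc (-(N : ℤ)) N, |(z : ℝ) / N| ≤ |a| ∧ |a - (z : ℝ) / N| ≤ 1 / N := by
  have hN' : (0 : ℝ) < N := by exact_mod_cast hN
  wlog h0 : 0 ≤ a generalizing a
  · obtain ⟨z, hz, hle, hsub⟩ := this (a := -a) (by rwa [abs_neg]) (by linarith)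
    refine ⟨-z, ?_, ?_, ?_⟩
    · rw [Finset.mem_Icc] at hz ⊢
      omega
    · rw [abs_neg] at hle
      rwa [Int.cast_neg, neg_div, abs_neg]
    · rwa [← abs_neg, Int.cast_neg, neg_div, neg_sub, ← neg_add', add_comm, neg_add']
  have hfloor0 : 0 ≤ ⌊a * N⌋ := Int.floor_nonneg.2 (by positivity)
  have hfloor0' : (0 : ℝ) ≤ ⌊a * N⌋ := by exact_mod_cast hfloor0
  have hfloor := Int.floor_le (a * N)
  have hlt := Int.lt_floor_add_one (a * N)
  rw [abs_of_nonneg h0] at ha ⊢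
  refine ⟨⌊a * N⌋, Finset.mem_Icc.2 ⟨by omega, ?_⟩, ?_, ?_⟩
  · have : (⌊a * N⌋ : ℝ) ≤ (N : ℝ) := hfloor.trans (mul_le_of_le_one_left hN'.le ha)
    exact_mod_cast this
  · rwa [abs_of_nonneg (by positivity), div_le_iff₀ hN']
  · rw [show a - (⌊a * N⌋ : ℝ) / N = (a * N - ⌊a * N⌋) / N by field_simp, abs_div,
      abs_of_nonneg (sub_nonneg.2 hfloor), abs_of_pos hN']
    gcongr
    linarith

/-- The points of the closed Euclidean unit ball of `ℝ^n` with coordinates in `N⁻¹ ℤ`. -/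
def ballGrid (n N : ℕ) : Finset (Fin n → ℝ) :=
  {b ∈ Fintype.piFinset fun _ => (Finset.Icc (-(N : ℤ)) N).image fun z : ℤ => (z : ℝ) / N |
    ∑ l, b l ^ 2 ≤ 1}

lemma abs_le_one_of_sum_sq_le_one {ι : Type*} [Fintype ι] {a : ι → ℝ} (ha : ∑ l, a l ^ 2 ≤ 1)
    (l : ι) : |a l| ≤ 1 := by
  rw [← sq_le_one_iff_abs_le_one]
  exact (Finset.single_le_sum (f := fun l => a l ^ 2) (fun _ _ => sq_nonneg _)
    (Finset.mem_univ l)).trans ha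

variable {n N : ℕ}

lemma exists_mem_ballGrid (hN : 0 < N) {a : Fin n → ℝ} (ha : ∑ l, a l ^ 2 ≤ 1) :
    ∃ b ∈ ballGrid n N, ∀ l, |a l - b l| ≤ 1 / N := by
  choose z hz hle hsub using
    fun l => exists_round_toward_zero hN (abs_le_one_of_sum_sq_le_one ha l)
  refine ⟨fun l => z l / N, Finset.mem_filter.2 ⟨Fintype.mem_piFinset.2 fun l =>
    Finset.mem_image_of_mem _ (hz l), ?_⟩, hsub⟩
  exact (Finset.sum_le_sum fun l _ => sq_le_sq.2 (hle l)).trans ha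

lemma card_ballGrid_le (n N : ℕ) : (ballGrid n N).card ≤ (2 * N + 1) ^ n := by
  refine (Finset.card_filter_le _ _).trans ?_
  rw [Fintype.card_piFinset_const]
  refine Nat.pow_le_pow_left (Finset.card_image_le.trans ?_) n
  rw [Int.card_Icc]
  omega

end Grid

section UniformDeviation

/-- The proxy of `subexpProxy` shared by the statistics to which the uniform bound applies. -/
def statProxy : ℝ := subexpProxy (2 * gaussianExpSqMoment)

lemma le_statProxy : 1024 * gaussianExpSqMoment ≤ statProxy := by
  have hmoment := one_le_gaussianExpSqMoment
  have hexp : 1 ≤ exp (2 * gaussianExpSqMoment / 2) := one_le_exp (by linarith)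
  unfold statProxy subexpProxy
  nlinarith

/-- The level below which all deviations are kept, uniformly over the directions. -/
def devLevel (n p : ℕ) : ℝ := 640 * statProxy * √(n * log p / p)

lemma devLevel_nonneg (n p : ℕ) : 0 ≤ devLevel n p := by
  have : 0 ≤ statProxy := by linarith [le_statProxy, one_le_gaussianExpSqMoment]
  unfold devLevel
  positivity

variable {n p : ℕ}

lemma one_le_log_of_three_le (hp : 3 ≤ p) : 1 ≤ log p := by
  rw [le_log_iff_exp_le (by positivity)]
  have : (3 : ℝ) ≤ p := by exact_mod_cast hp
  linarith [exp_one_lt_d9]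

lemma div_le_devLevel (hn : 1 ≤ n) (hp : 3 ≤ p) :
    655360 * gaussianExpSqMoment / p ≤ devLevel n p := by
  have hproxy := le_statProxy
  have hmoment := one_le_gaussianExpSqMoment
  have hp' : (3 : ℝ) ≤ p := by exact_mod_cast hp
  have hsqrt : 1 / (p : ℝ) ≤ √(n * log p / p) := by
    apply le_sqrt_of_sq_le
    rw [div_pow, one_pow, div_le_div_iff₀ (by positivity) (by positivity)]
    have : 1 ≤ n * log p :=
      one_le_mul_of_one_le_of_one_le (by exact_mod_cast hn) (one_le_log_of_three_le hp)
    nlinarith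
  calc 655360 * gaussianExpSqMoment / p = 640 * (1024 * gaussianExpSqMoment) * (1 / p) := by ring
    _ ≤ 640 * statProxy * √(n * log p / p) := by
      have : 0 ≤ statProxy := by linarith
      gcongr

/-- Statistics `T q v` of a vector `x`, indexed by two directions `q` and `v`, that have at most
quadratic growth in `v ⬝ᵥ x` and are Lipschitz in the directions up to a polynomial weight. -/
structure IsDirectionalStatistic (L : ℝ) {ι : Type*} [Fintype ι]
    (T : (ι → ℝ) → (ι → ℝ) → (ι → ℝ) → ℝ) : Prop where
  measurable : ∀ q v, Measurable (T q v)
  abs_le : ∀ q v x, |T q v x| ≤ 1 + (v ⬝ᵥ x) ^ 2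
  abs_sub_le : ∀ {q v q' v' : ι → ℝ} {η : ℝ}, 0 ≤ η → (∀ l, |v l| ≤ 1) → (∀ l, |v' l| ≤ 1) →
    (∀ l, |q l - q' l| ≤ η) → (∀ l, |v l - v' l| ≤ η) →
    ∀ x, |T q v x - T q' v' x| ≤ L * η * growthWeight x

variable {θ L : ℝ} {T : (Fin n → ℝ) → (Fin n → ℝ) → (Fin n → ℝ) → ℝ}

namespace IsDirectionalStatistic

lemma exp_abs_le {ι : Type*} [Fintype ι] {T : (ι → ℝ) → (ι → ℝ) → (ι → ℝ) → ℝ}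
    (hT : IsDirectionalStatistic L T) (q v x : ι → ℝ) :
    exp (|T q v x| / 4) ≤ 2 * exp ((v ⬝ᵥ x) ^ 2 / 4) := by
  have hexp : exp (1 / 4) ≤ 2 := by
    rw [← le_log_iff_exp_le (by norm_num)]
    linarith [log_two_gt_d9]
  calc exp (|T q v x| / 4) ≤ exp (1 / 4 + (v ⬝ᵥ x) ^ 2 / 4) := by
        gcongr
        linarith [hT.abs_le q v x]
    _ = exp (1 / 4) * exp ((v ⬝ᵥ x) ^ 2 / 4) := exp_add _ _
    _ ≤ 2 * exp ((v ⬝ᵥ x) ^ 2 / 4) := by gcongr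

lemma integrable_exp_abs (hT : IsDirectionalStatistic L T) (h0 : 0 ≤ θ) (h1 : θ ≤ 1)
    (q : Fin n → ℝ) {v : Fin n → ℝ} (hv : ∑ l, v l ^ 2 ≤ 1) :
    Integrable (fun x => exp (|T q v x| / 4)) (bgVec θ n) := by
  have hmeas := hT.measurable q v
  refine ((integrable_exp_sq_bgVec h0 h1 hv).const_mul 2).mono' (by fun_prop)
    (.of_forall fun x => ?_)
  rw [norm_eq_abs, abs_exp]
  exact hT.exp_abs_le q v x

lemma integral_exp_abs_le (hT : IsDirectionalStatistic L T) (h0 : 0 ≤ θ) (h1 : θ ≤ 1)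
    (q : Fin n → ℝ) {v : Fin n → ℝ} (hv : ∑ l, v l ^ 2 ≤ 1) :
    ∫ x, exp (|T q v x| / 4) ∂bgVec θ n ≤ 2 * gaussianExpSqMoment := by
  calc ∫ x, exp (|T q v x| / 4) ∂bgVec θ n
      ≤ ∫ x, 2 * exp ((v ⬝ᵥ x) ^ 2 / 4) ∂bgVec θ n :=
        integral_mono (hT.integrable_exp_abs h0 h1 q hv)
          ((integrable_exp_sq_bgVec h0 h1 hv).const_mul 2) (hT.exp_abs_le q v)
    _ ≤ 2 * gaussianExpSqMoment := by
      rw [integral_const_mul]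
      gcongr
      exact integral_exp_sq_bgVec_le h0 h1 hv

lemma integrable (hT : IsDirectionalStatistic L T) (h0 : 0 ≤ θ) (h1 : θ ≤ 1)
    (q : Fin n → ℝ) {v : Fin n → ℝ} (hv : ∑ l, v l ^ 2 ≤ 1) :
    Integrable (T q v) (bgVec θ n) :=
  integrable_of_integrable_exp_abs (hT.measurable q v) (hT.integrable_exp_abs h0 h1 q hv)

lemma measureReal_half_devLevel_le (hT : IsDirectionalStatistic L T) (h0 : 0 ≤ θ) (h1 : θ ≤ 1)
    (hp : 3 ≤ p) (hdev : devLevel n p ≤ 1) (q : Fin n → ℝ) {v : Fin n → ℝ}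
    (hv : ∑ l, v l ^ 2 ≤ 1) :
    (bgCols θ n p).real {X | devLevel n p / 2 ≤ |sampleDeviation (bgVec θ n) X (T q v)|}
      ≤ 2 / (p : ℝ) ^ (40 * n) := by
  have := isProbabilityMeasure_bgVec n h0 h1
  have hproxy : 1024 ≤ statProxy := by linarith [le_statProxy, one_le_gaussianExpSqMoment]
  have hlog := one_le_log_of_three_le hp
  have hp0 : (0 : ℝ) < p := by positivity
  have hexponent :
      p * (devLevel n p / 2) ^ 2 / (4 * statProxy) = 25600 * statProxy * (n * log p) := by
    unfold devLevel
    rw [div_pow, mul_pow, sq_sqrt (by positivity)]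
    field_simp
    ring
  have hpow : (p : ℝ) ^ (40 * n) = exp (40 * (n * log p)) := by
    rw [← exp_log (pow_pos hp0 (40 * n)), log_pow]
    push_cast
    ring_nf
  calc (bgCols θ n p).real {X | devLevel n p / 2 ≤ |sampleDeviation (bgVec θ n) X (T q v)|}
      ≤ 2 * exp (-(p * (devLevel n p / 2) ^ 2 / (4 * statProxy))) :=
        measureReal_le_abs_sampleDeviation_le (hT.measurable q v)
          (hT.integrable_exp_abs h0 h1 q hv) (hT.integral_exp_abs_le h0 h1 q hv) (by omega)
          (by linarith [devLevel_nonneg n p])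
          (show devLevel n p / 2 ≤ statProxy / 8 by linarith)
    _ = 2 * exp (-(25600 * statProxy * (n * log p))) := by rw [hexponent]
    _ ≤ 2 * exp (-(40 * (n * log p))) := by
      gcongr
      linarith
    _ = 2 / (p : ℝ) ^ (40 * n) := by rw [hpow, Real.exp_neg, div_eq_mul_inv]

end IsDirectionalStatistic

/-- The event that the weights of the sample are atypically large on average. -/
def heavySamples (n p : ℕ) : Set (Fin p → Fin n → ℝ) :=
  {X | p ^ 5 * (136 * n ^ 3 * gaussianExpSqMoment) ≤ (p : ℝ)⁻¹ * ∑ k, growthWeight (X k)}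

/-- The event that `T q v` deviates by half of `devLevel n p` for some `q` and `v` in the grid of
the unit ball with resolution `p ^ 14`. -/
def gridDeviationSet (θ : ℝ) (n p : ℕ) (T : (Fin n → ℝ) → (Fin n → ℝ) → (Fin n → ℝ) → ℝ) :
    Set (Fin p → Fin n → ℝ) :=
  ⋃ z ∈ ballGrid n (p ^ 14) ×ˢ ballGrid n (p ^ 14),
    {X | devLevel n p / 2 ≤ |sampleDeviation (bgVec θ n) X (T z.1 z.2)|}

lemma measureReal_heavySamples_le (h0 : 0 ≤ θ) (h1 : θ ≤ 1) (hn : 1 ≤ n) (hp : 0 < p) :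
    (bgCols θ n p).real (heavySamples n p) ≤ 1 / p ^ 5 := by
  have := isProbabilityMeasure_bgVec n h0 h1
  have hmoment := one_le_gaussianExpSqMoment
  have hmean : 0 < 136 * (n : ℝ) ^ 3 * gaussianExpSqMoment := by positivity
  have hmarkov := (mul_measureReal_le_average_le (integrable_growthWeight_bgVec (n := n) h0 h1)
    growthWeight_nonneg hp (p ^ 5 * (136 * n ^ 3 * gaussianExpSqMoment))).trans
    (integral_growthWeight_bgVec_le h0 h1 hn)
  rw [le_div_iff₀ (by positivity)]
  refine le_of_mul_le_mul_left ?_ hmean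
  calc _ = p ^ 5 * (136 * n ^ 3 * gaussianExpSqMoment)
          * (bgCols θ n p).real (heavySamples n p) := by ring
    _ ≤ 136 * n ^ 3 * gaussianExpSqMoment := hmarkov
    _ = _ := (mul_one _).symm

lemma IsDirectionalStatistic.measureReal_gridDeviationSet_le (hT : IsDirectionalStatistic L T)
    (h0 : 0 ≤ θ) (h1 : θ ≤ 1) (hn : 1 ≤ n) (hp : 3 ≤ p) (hdev : devLevel n p ≤ 1) :
    (bgCols θ n p).real (gridDeviationSet θ n p T) ≤ 2 / p ^ 5 := by
  have hp' : (3 : ℝ) ≤ p := by exact_mod_cast hp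
  have hcard : (ballGrid n (p ^ 14)).card ≤ p ^ (15 * n) := by
    refine (card_ballGrid_le n _).trans ?_
    rw [pow_mul]
    have : 3 * p ^ 14 ≤ p ^ 15 := by
      rw [pow_succ' p 14]
      gcongr
    have : 1 ≤ p ^ 14 := Nat.one_le_pow _ _ (by omega)
    gcongr
    omega
  have hcard' : ((ballGrid n (p ^ 14)).card : ℝ) ≤ (p : ℝ) ^ (15 * n) := by exact_mod_cast hcard
  calc (bgCols θ n p).real (gridDeviationSet θ n p T)
      ≤ ∑ z ∈ ballGrid n (p ^ 14) ×ˢ ballGrid n (p ^ 14), 2 / (p : ℝ) ^ (40 * n) := by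
        refine (measureReal_biUnion_finset_le _ _).trans (Finset.sum_le_sum fun z hz => ?_)
        exact hT.measureReal_half_devLevel_le h0 h1 hp hdev z.1
          (Finset.mem_filter.1 (Finset.mem_product.1 hz).2).2
    _ = (ballGrid n (p ^ 14)).card * (ballGrid n (p ^ 14)).card * (2 / (p : ℝ) ^ (40 * n)) := by
      rw [Finset.sum_const, Finset.card_product, nsmul_eq_mul, Nat.cast_mul]
    _ ≤ (p : ℝ) ^ (15 * n) * (p : ℝ) ^ (15 * n) * (2 / (p : ℝ) ^ (40 * n)) := by gcongr
    _ = 2 / (p : ℝ) ^ (10 * n) := by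
      rw [← pow_add, show 40 * n = (15 * n + 15 * n) + 10 * n by ring, pow_add _ (15 * n + 15 * n)]
      field_simp
    _ ≤ 2 / (p : ℝ) ^ 5 := by
      gcongr
      · linarith
      · omega

/-- Moving `q` and `v` to nearest grid points costs at most half of `devLevel n p`. -/
lemma grid_error_le_half_devLevel (hn : 1 ≤ n) (hnp : n ≤ p) (hp : 3 ≤ p) :
    4 * p * (1 / ((p ^ 14 : ℕ) : ℝ)) * (p ^ 5 * (136 * n ^ 3 * gaussianExpSqMoment)
      + 136 * n ^ 3 * gaussianExpSqMoment) ≤ devLevel n p / 2 := by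
  have hmoment := one_le_gaussianExpSqMoment
  have hp' : (3 : ℝ) ≤ p := by exact_mod_cast hp
  have hnp' : (n : ℝ) ≤ p := by exact_mod_cast hnp
  have hpow : (1 : ℝ) ≤ p ^ 5 := one_le_pow₀ (by linarith)
  calc 4 * p * (1 / ((p ^ 14 : ℕ) : ℝ)) * (p ^ 5 * (136 * n ^ 3 * gaussianExpSqMoment)
        + 136 * n ^ 3 * gaussianExpSqMoment)
      = 4 * p * (1 / p ^ 14) * ((p ^ 5 + 1) * (136 * n ^ 3 * gaussianExpSqMoment)) := by
        push_cast
        ring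
    _ ≤ 4 * p * (1 / p ^ 14) * ((p ^ 5 + p ^ 5) * (136 * p ^ 3 * gaussianExpSqMoment)) := by
      gcongr
    _ = 1088 * gaussianExpSqMoment / p ^ 5 := by
      field_simp
      ring
    _ ≤ 1088 * gaussianExpSqMoment / p := by
      gcongr
      exact le_self_pow₀ (by linarith) (by norm_num)
    _ ≤ 655360 * gaussianExpSqMoment / p / 2 := by
      rw [div_right_comm]
      gcongr
      linarith
    _ ≤ devLevel n p / 2 := by linarith [div_le_devLevel hn hp]

lemma IsDirectionalStatistic.abs_sampleDeviation_le (hT : IsDirectionalStatistic (4 * p) T)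
    (h0 : 0 ≤ θ) (h1 : θ ≤ 1) (hn : 1 ≤ n) (hnp : n ≤ p) (hp : 3 ≤ p)
    {X : Fin p → Fin n → ℝ} (hlight : X ∉ heavySamples n p)
    (hgrid : X ∉ gridDeviationSet θ n p T) {q v : Fin n → ℝ} (hq : ∑ l, q l ^ 2 ≤ 1)
    (hv : ∑ l, v l ^ 2 ≤ 1) :
    |sampleDeviation (bgVec θ n) X (T q v)| ≤ devLevel n p := by
  have hN : 0 < p ^ 14 := by positivity
  obtain ⟨q', hq', hqq'⟩ := exists_mem_ballGrid hN hq
  obtain ⟨v', hv', hvv'⟩ := exists_mem_ballGrid hN hv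
  have hv'1 := (Finset.mem_filter.1 hv').2
  have hdev' : |sampleDeviation (bgVec θ n) X (T q' v')| < devLevel n p / 2 := by
    simp only [gridDeviationSet, Set.mem_iUnion, Set.mem_ofPred_eq, not_exists, not_le] at hgrid
    exact hgrid (q', v') (Finset.mem_product.2 ⟨hq', hv'⟩)
  have hweight : (p : ℝ)⁻¹ * ∑ k, growthWeight (X k)
      ≤ p ^ 5 * (136 * n ^ 3 * gaussianExpSqMoment) := (not_le.1 hlight).le
  have hmove : |sampleDeviation (bgVec θ n) X (T q v) - sampleDeviation (bgVec θ n) X (T q' v')|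
      ≤ devLevel n p / 2 := by
    refine (abs_sampleDeviation_sub_le (hT.integrable h0 h1 q hv) (hT.integrable h0 h1 q' hv'1)
      (integrable_growthWeight_bgVec h0 h1) (hT.abs_sub_le (by positivity)
        (abs_le_one_of_sum_sq_le_one hv) (abs_le_one_of_sum_sq_le_one hv'1) hqq' hvv') X).trans ?_
    refine le_trans ?_ (grid_error_le_half_devLevel hn hnp hp)
    gcongr
    exact integral_growthWeight_bgVec_le h0 h1 hn
  linarith [abs_sub_abs_le_abs_sub (sampleDeviation (bgVec θ n) X (T q v))
    (sampleDeviation (bgVec θ n) X (T q' v'))]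

end UniformDeviation

section DirectionalStatistics

variable {ι : Type*} [Fintype ι]

/-- The slope at `q` of the loss of a single sample `x`, in direction `v`. -/
def slopeTerm (μ : ℝ) (q v x : ι → ℝ) : ℝ := tanh (q ⬝ᵥ x / μ) * (v ⬝ᵥ x)

/-- The curvature at `q` of the loss of a single sample `x` in direction `v`, multiplied
by `μ`. -/
def curvTerm (μ : ℝ) (q v x : ι → ℝ) : ℝ := sech2 (q ⬝ᵥ x / μ) * (v ⬝ᵥ x) ^ 2

lemma slopeTerm_smul (μ r : ℝ) (q v : ι → ℝ) :
    slopeTerm μ q (r • v) = fun x => r * slopeTerm μ q v x := by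
  ext x
  simp only [slopeTerm, smul_dotProduct, smul_eq_mul]
  ring

lemma curvTerm_smul (μ r : ℝ) (q v : ι → ℝ) :
    curvTerm μ q (r • v) = fun x => r ^ 2 * curvTerm μ q v x := by
  ext x
  simp only [curvTerm, smul_dotProduct, smul_eq_mul]
  ring

lemma abs_dotProduct_le {a : ι → ℝ} {η : ℝ} (ha : ∀ l, |a l| ≤ η) (x : ι → ℝ) :
    |a ⬝ᵥ x| ≤ η * ∑ l, |x l| := by
  rw [Finset.mul_sum]
  refine (Finset.abs_sum_le_sum_abs _ _).trans (Finset.sum_le_sum fun l _ => ?_)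
  rw [abs_mul]
  exact mul_le_mul_of_nonneg_right (ha l) (abs_nonneg _)

lemma abs_dotProduct_sub_le {a b : ι → ℝ} {η : ℝ} (hab : ∀ l, |a l - b l| ≤ η) (x : ι → ℝ) :
    |a ⬝ᵥ x - b ⬝ᵥ x| ≤ η * ∑ l, |x l| := by
  rw [← sub_dotProduct]
  exact abs_dotProduct_le hab x

lemma abs_dotProduct_div_sub_le {μ : ℝ} (hμ : 0 < μ) {a b : ι → ℝ} {η : ℝ}
    (hab : ∀ l, |a l - b l| ≤ η) (x : ι → ℝ) :
    |a ⬝ᵥ x / μ - b ⬝ᵥ x / μ| ≤ η / μ * ∑ l, |x l| := by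
  rw [← sub_div, abs_div, abs_of_pos hμ, div_mul_eq_mul_div]
  gcongr
  exact abs_dotProduct_sub_le hab x

lemma IsDirectionalStatistic.mono {L L' : ℝ} (hL : L ≤ L')
    {T : (ι → ℝ) → (ι → ℝ) → (ι → ℝ) → ℝ} (hT : IsDirectionalStatistic L T) :
    IsDirectionalStatistic L' T where
  measurable := hT.measurable
  abs_le := hT.abs_le
  abs_sub_le hη hv hv' hqq hvv x := by
    have := growthWeight_nonneg x
    exact (hT.abs_sub_le hη hv hv' hqq hvv x).trans (by gcongr)

variable {μ : ℝ}

lemma abs_slopeTerm_sub_le (hμ : 0 < μ) (hμ1 : μ ≤ 1) {q v q' v' : ι → ℝ} {η : ℝ} (hη : 0 ≤ η)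
    (hv : ∀ l, |v l| ≤ 1) (hqq : ∀ l, |q l - q' l| ≤ η) (hvv : ∀ l, |v l - v' l| ≤ η)
    (x : ι → ℝ) : |slopeTerm μ q v x - slopeTerm μ q' v' x| ≤ 4 / μ * η * growthWeight x := by
  have hL : 0 ≤ ∑ l, |x l| := Finset.sum_nonneg fun l _ => abs_nonneg _
  have hv_dot := abs_dotProduct_le hv x
  have hv_sub := abs_dotProduct_sub_le hvv x
  have htanh := (abs_tanh_sub_le _ _).trans (abs_dotProduct_div_sub_le hμ hqq x)
  have hημ : η ≤ η / μ := le_div_self hη hμ hμ1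
  unfold slopeTerm growthWeight
  set L := ∑ l, |x l|
  calc |tanh (q ⬝ᵥ x / μ) * (v ⬝ᵥ x) - tanh (q' ⬝ᵥ x / μ) * (v' ⬝ᵥ x)|
      = |(tanh (q ⬝ᵥ x / μ) - tanh (q' ⬝ᵥ x / μ)) * (v ⬝ᵥ x)
          + tanh (q' ⬝ᵥ x / μ) * (v ⬝ᵥ x - v' ⬝ᵥ x)| := by congr 1; ring
    _ ≤ |tanh (q ⬝ᵥ x / μ) - tanh (q' ⬝ᵥ x / μ)| * |v ⬝ᵥ x|
          + |tanh (q' ⬝ᵥ x / μ)| * |v ⬝ᵥ x - v' ⬝ᵥ x| := by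
      rw [← abs_mul, ← abs_mul]
      exact abs_add_le _ _
    _ ≤ (η / μ * L) * (1 * L) + 1 * (η / μ * L) := by
      gcongr
      · exact abs_tanh_le_one _
      · exact hv_sub.trans (by gcongr)
    _ ≤ η / μ * (4 * (1 + L) ^ 3) := by
      have : L ^ 2 + L ≤ 4 * (1 + L) ^ 3 := by nlinarith [pow_nonneg hL 3, pow_nonneg hL 2]
      calc _ = η / μ * (L ^ 2 + L) := by ring
        _ ≤ _ := by gcongr
    _ = 4 / μ * η * (1 + L) ^ 3 := by ring

lemma abs_curvTerm_sub_le (hμ : 0 < μ) (hμ1 : μ ≤ 1) {q v q' v' : ι → ℝ} {η : ℝ} (hη : 0 ≤ η)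
    (hv : ∀ l, |v l| ≤ 1) (hv' : ∀ l, |v' l| ≤ 1) (hqq : ∀ l, |q l - q' l| ≤ η)
    (hvv : ∀ l, |v l - v' l| ≤ η) (x : ι → ℝ) :
    |curvTerm μ q v x - curvTerm μ q' v' x| ≤ 4 / μ * η * growthWeight x := by
  have hL : 0 ≤ ∑ l, |x l| := Finset.sum_nonneg fun l _ => abs_nonneg _
  have hv_dot := abs_dotProduct_le hv x
  have hv_sub := abs_dotProduct_sub_le hvv x
  have hv_add : |v ⬝ᵥ x + v' ⬝ᵥ x| ≤ 2 * ∑ l, |x l| :=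
    (abs_add_le _ _).trans (by linarith [abs_dotProduct_le hv' x])
  have hsech := (abs_sech2_sub_le _ _).trans
    (mul_le_mul_of_nonneg_left (abs_dotProduct_div_sub_le hμ hqq x) zero_le_two)
  have hημ : η ≤ η / μ := le_div_self hη hμ hμ1
  unfold curvTerm growthWeight
  set L := ∑ l, |x l|
  calc |sech2 (q ⬝ᵥ x / μ) * (v ⬝ᵥ x) ^ 2 - sech2 (q' ⬝ᵥ x / μ) * (v' ⬝ᵥ x) ^ 2|
      = |(sech2 (q ⬝ᵥ x / μ) - sech2 (q' ⬝ᵥ x / μ)) * (v ⬝ᵥ x) ^ 2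
          + sech2 (q' ⬝ᵥ x / μ) * ((v ⬝ᵥ x - v' ⬝ᵥ x) * (v ⬝ᵥ x + v' ⬝ᵥ x))| := by
        congr 1; ring
    _ ≤ |sech2 (q ⬝ᵥ x / μ) - sech2 (q' ⬝ᵥ x / μ)| * |v ⬝ᵥ x| ^ 2
          + |sech2 (q' ⬝ᵥ x / μ)| * (|v ⬝ᵥ x - v' ⬝ᵥ x| * |v ⬝ᵥ x + v' ⬝ᵥ x|) := by
      rw [← abs_pow, ← abs_mul, ← abs_mul, ← abs_mul]
      exact abs_add_le _ _
    _ ≤ (2 * (η / μ * L)) * (1 * L) ^ 2 + 1 * ((η / μ * L) * (2 * L)) := by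
      gcongr
      · rw [abs_sech2]
        exact sech2_le_one _
      · exact hv_sub.trans (by gcongr)
    _ ≤ η / μ * (4 * (1 + L) ^ 3) := by
      have : 2 * L ^ 3 + 2 * L ^ 2 ≤ 4 * (1 + L) ^ 3 := by
        nlinarith [pow_nonneg hL 3, pow_nonneg hL 2]
      calc _ = η / μ * (2 * L ^ 3 + 2 * L ^ 2) := by ring
        _ ≤ _ := by gcongr
    _ = 4 / μ * η * (1 + L) ^ 3 := by ring

lemma isDirectionalStatistic_slopeTerm (hμ : 0 < μ) (hμ1 : μ ≤ 1) :
    IsDirectionalStatistic (4 / μ) (slopeTerm (ι := ι) μ) where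
  measurable q v := by
    unfold slopeTerm
    fun_prop
  abs_le q v x := by
    have := abs_tanh_le_one (q ⬝ᵥ x / μ)
    rw [slopeTerm, abs_mul, ← sq_abs (v ⬝ᵥ x)]
    nlinarith [abs_nonneg (v ⬝ᵥ x), sq_nonneg (|v ⬝ᵥ x| - 1)]
  abs_sub_le hη hv _ hqq hvv := abs_slopeTerm_sub_le hμ hμ1 hη hv hqq hvv

lemma isDirectionalStatistic_curvTerm (hμ : 0 < μ) (hμ1 : μ ≤ 1) :
    IsDirectionalStatistic (4 / μ) (curvTerm (ι := ι) μ) where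
  measurable q v := by
    unfold curvTerm
    fun_prop
  abs_le q v x := by
    have := sech2_le_one (q ⬝ᵥ x / μ)
    rw [curvTerm, abs_mul, abs_sech2, abs_sq]
    nlinarith [sq_nonneg (v ⬝ᵥ x)]
  abs_sub_le hη hv hv' hqq hvv := abs_curvTerm_sub_le hμ hμ1 hη hv hv' hqq hvv

end DirectionalStatistics

section EmpiricalMeans

/-- The empirical counterpart of `meanSlope`. -/
def empSlope (μ : ℝ) {ι : Type*} [Fintype ι] {p : ℕ} (X : Fin p → ι → ℝ) (q v : ι → ℝ) : ℝ :=
  (p : ℝ)⁻¹ * ∑ k, slopeTerm μ q v (X k)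

/-- The empirical counterpart of `meanCurv`. -/
def empCurv (μ : ℝ) {ι : Type*} [Fintype ι] {p : ℕ} (X : Fin p → ι → ℝ) (q v : ι → ℝ) : ℝ :=
  (p : ℝ)⁻¹ * ∑ k, curvTerm μ q v (X k)

/-- The empirical slopes and curvatures are within `ε` of their means, uniformly over base points
`q` in the unit ball and over directions `v` of norm `r`. -/
def UniformlyClose (θ μ ε : ℝ) {n p : ℕ} (X : Fin p → Fin n → ℝ) : Prop :=
  ∀ (q v : Fin n → ℝ) (r : ℝ), ∑ l, q l ^ 2 ≤ 1 → 0 ≤ r → ∑ l, v l ^ 2 = r ^ 2 →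
    |empSlope μ X q v - meanSlope θ μ q v| ≤ ε * r ∧
      |empCurv μ X q v - meanCurv θ μ q v| ≤ ε * r ^ 2

variable {n p : ℕ} {θ μ ε : ℝ}

lemma exists_smul_of_sum_sq_eq {ι : Type*} [Fintype ι] {v : ι → ℝ} {r : ℝ}
    (hv : ∑ l, v l ^ 2 = r ^ 2) : ∃ u : ι → ℝ, ∑ l, u l ^ 2 ≤ 1 ∧ v = r • u := by
  rcases eq_or_ne r 0 with rfl | hr
  · rw [zero_pow two_ne_zero, Finset.sum_eq_zero_iff_of_nonneg fun _ _ => sq_nonneg _] at hv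
    refine ⟨0, by simp, funext fun l => ?_⟩
    simpa using hv l (Finset.mem_univ l)
  · refine ⟨r⁻¹ • v, ?_, by rw [smul_inv_smul₀ hr]⟩
    simp only [Pi.smul_apply, smul_eq_mul, mul_pow]
    rw [← Finset.mul_sum, hv, ← mul_pow, inv_mul_cancel₀ hr, one_pow]

lemma uniformlyClose_of_unit_directions {X : Fin p → Fin n → ℝ}
    (hslope : ∀ q v : Fin n → ℝ, ∑ l, q l ^ 2 ≤ 1 → ∑ l, v l ^ 2 ≤ 1 →
      |sampleDeviation (bgVec θ n) X (slopeTerm μ q v)| ≤ ε)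
    (hcurv : ∀ q v : Fin n → ℝ, ∑ l, q l ^ 2 ≤ 1 → ∑ l, v l ^ 2 ≤ 1 →
      |sampleDeviation (bgVec θ n) X (curvTerm μ q v)| ≤ ε) :
    UniformlyClose θ μ ε X := by
  intro q v r hq hr hv
  obtain ⟨u, hu, rfl⟩ := exists_smul_of_sum_sq_eq hv
  constructor
  · change |sampleDeviation (bgVec θ n) X (slopeTerm μ q (r • u))| ≤ ε * r
    rw [slopeTerm_smul, sampleDeviation_const_mul, abs_mul, abs_of_nonneg hr, mul_comm]
    exact mul_le_mul_of_nonneg_right (hslope q u hq hu) hr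
  · change |sampleDeviation (bgVec θ n) X (curvTerm μ q (r • u))| ≤ ε * r ^ 2
    rw [curvTerm_smul, sampleDeviation_const_mul, abs_mul, abs_sq, mul_comm]
    exact mul_le_mul_of_nonneg_right (hcurv q u hq hu) (sq_nonneg r)

lemma measureReal_not_uniformlyClose_le (h0 : 0 ≤ θ) (h1 : θ ≤ 1) (hn : 1 ≤ n) (hnp : n ≤ p)
    (hp : 3 ≤ p) (hμ : 0 < μ) (hμ1 : μ ≤ 1) (hμp : 1 ≤ p * μ) (hdev : devLevel n p ≤ 1) :
    (bgCols θ n p).real {X | ¬ UniformlyClose θ μ (devLevel n p) X} ≤ 5 / p ^ 5 := by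
  have hL : 4 / μ ≤ 4 * p := by
    rw [div_le_iff₀ hμ]
    linarith
  have hslope := (isDirectionalStatistic_slopeTerm (ι := Fin n) hμ hμ1).mono hL
  have hcurv := (isDirectionalStatistic_curvTerm (ι := Fin n) hμ hμ1).mono hL
  have := isProbabilityMeasure_bgCols n p h0 h1
  have hsub : {X | ¬ UniformlyClose θ μ (devLevel n p) X} ⊆ heavySamples n p ∪
      (gridDeviationSet θ n p (slopeTerm μ) ∪ gridDeviationSet θ n p (curvTerm μ)) := by
    intro X hX
    by_contra hmem
    simp only [Set.mem_union, not_or] at hmem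
    obtain ⟨hlight, hgrid, hgrid'⟩ := hmem
    exact hX (uniformlyClose_of_unit_directions
      (fun q v => hslope.abs_sampleDeviation_le h0 h1 hn hnp hp hlight hgrid)
      (fun q v => hcurv.abs_sampleDeviation_le h0 h1 hn hnp hp hlight hgrid'))
  calc (bgCols θ n p).real {X | ¬ UniformlyClose θ μ (devLevel n p) X}
      ≤ 1 / (p : ℝ) ^ 5 + (2 / (p : ℝ) ^ 5 + 2 / (p : ℝ) ^ 5) := by
        refine (measureReal_mono hsub).trans ((measureReal_union_le _ _).trans ?_)
        exact add_le_add (measureReal_heavySamples_le h0 h1 hn (by omega))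
          ((measureReal_union_le _ _).trans (add_le_add
            (hslope.measureReal_gridDeviationSet_le h0 h1 hn hp hdev)
            (hcurv.measureReal_gridDeviationSet_le h0 h1 hn hp hdev)))
    _ = 5 / (p : ℝ) ^ 5 := by ring

lemma le_bgMatrix_of_uniformlyClose (h0 : 0 ≤ θ) (h1 : θ ≤ 1) (hn : 1 ≤ n) (hnp : n ≤ p)
    (hp : 3 ≤ p) (hμ : 0 < μ) (hμ1 : μ ≤ 1) (hμp : 1 ≤ p * μ) (hdev : devLevel n p ≤ 1)
    {G : Set (Fin n → Fin p → ℝ)} (hG : ∀ X : Fin p → Fin n → ℝ,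
      UniformlyClose θ μ (devLevel n p) X → (fun i k => X k i) ∈ G) :
    ENNReal.ofReal (1 - 5 / (p : ℝ) ^ 5) ≤ bgMatrix θ n p G := by
  have := isProbabilityMeasure_bgCols n p h0 h1
  have hbad := measureReal_not_uniformlyClose_le h0 h1 hn hnp hp hμ hμ1 hμp hdev
  have hcover : Set.univ ⊆ {X | (fun i k => X k i) ∈ G} ∪
      {X : Fin p → Fin n → ℝ | ¬ UniformlyClose θ μ (devLevel n p) X} :=
    fun X _ => (em (UniformlyClose θ μ (devLevel n p) X)).imp (hG X) id
  have htotal := (measureReal_mono (μ := bgCols θ n p) hcover).trans (measureReal_union_le _ _)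
  rw [probReal_univ] at htotal
  rw [bgMatrix_apply_eq_bgCols h0 h1, ← ofReal_measureReal]
  exact ENNReal.ofReal_le_ofReal (by linarith)

end EmpiricalMeans

section SampleSize

lemma mul_log_le_of_mul_log_le {a x : ℝ} (ha : 0 < a) (hx : 0 < x)
    (h : 2 * (a * log (2 * a)) ≤ x) : a * log x ≤ x := by
  have hlog := Real.log_le_sub_one_of_pos (show 0 < x / (2 * a) by positivity)
  rw [Real.log_div hx.ne' (by positivity)] at hlog
  have : a * (x / (2 * a)) = x / 2 := by field_simp
  nlinarith

variable {n p : ℕ} {s : ℝ}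

lemma max_le_cube_div_sq (hn : 2 ≤ n) (hs : 0 < s) (hs1 : s ≤ 1) :
    max (n : ℝ) 8 ≤ (n : ℝ) ^ 3 / s ^ 2 := by
  have hn' : (2 : ℝ) ≤ n := by exact_mod_cast hn
  calc max (n : ℝ) 8 ≤ (n : ℝ) ^ 3 :=
        max_le (le_self_pow₀ (by linarith) (by norm_num))
          (by calc (8 : ℝ) = 2 ^ 3 := by norm_num
                _ ≤ (n : ℝ) ^ 3 := by gcongr)
    _ ≤ (n : ℝ) ^ 3 / s ^ 2 := le_div_self (by positivity) (by positivity) (pow_le_one₀ hs.le hs1)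

lemma one_le_log_div (hn : 2 ≤ n) (hs : 0 < s) (hs2 : s ≤ 1 / 2) : 1 ≤ log (n / s) := by
  have hn' : (2 : ℝ) ≤ n := by exact_mod_cast hn
  have hdiv : 4 ≤ n / s := by
    rw [le_div_iff₀ hs]
    linarith
  rw [Real.le_log_iff_exp_le (by positivity)]
  linarith [Real.exp_one_lt_d9]

lemma log_cube_div_sq_le (hn : 0 < n) (hs : 0 < s) (hs1 : s ≤ 1) :
    log ((n : ℝ) ^ 3 / s ^ 2) ≤ 3 * log (n / s) := by
  have : log s ≤ 0 := Real.log_nonpos hs.le hs1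
  rw [Real.log_div (by positivity) (by positivity), Real.log_div (by positivity) hs.ne',
    Real.log_pow, Real.log_pow]
  push_cast
  linarith

lemma mul_cube_div_sq_mul_log_le {B : ℝ} (hB : 1 ≤ B) (hn : 2 ≤ n) (hs : 0 < s)
    (hs2 : s ≤ 1 / 2) (hp0 : 0 < p)
    (hp : 2 * B * (log (2 * B) + 3) * ((n : ℝ) ^ 3 / s ^ 2) * log (n / s) ≤ p) :
    B * ((n : ℝ) ^ 3 / s ^ 2) * log p ≤ p := by
  have hlogB : 0 ≤ log (2 * B) := Real.log_nonneg (by linarith)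
  have hlog := one_le_log_div hn hs hs2
  have hlogA := log_cube_div_sq_le (n := n) (by omega) hs (by linarith)
  have hA : 0 < (n : ℝ) ^ 3 / s ^ 2 := by positivity
  set A := (n : ℝ) ^ 3 / s ^ 2
  refine mul_log_le_of_mul_log_le (by positivity) (by exact_mod_cast hp0) ?_
  calc 2 * (B * A * log (2 * (B * A))) = 2 * (B * A * (log (2 * B) + log A)) := by
        rw [← mul_assoc 2 B A, Real.log_mul (by positivity) hA.ne']
    _ ≤ 2 * (B * A * ((log (2 * B) + 3) * log (n / s))) := by
      gcongr
      nlinarith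
    _ = 2 * B * (log (2 * B) + 3) * A * log (n / s) := by ring
    _ ≤ p := hp

lemma devLevel_le_of_mul_log_le {δ : ℝ} (hδ : 0 < δ) (hs : 0 < s) (hn : 0 < n) (hp0 : 0 < p)
    (hp : (640 * statProxy / δ) ^ 2 * ((n : ℝ) ^ 3 / s ^ 2) * log p ≤ p) :
    devLevel n p ≤ δ * (s / n) := by
  have hproxy : 0 < statProxy := by linarith [le_statProxy, one_le_gaussianExpSqMoment]
  have hp0' : (0 : ℝ) < p := by exact_mod_cast hp0
  have hsq : n * log p / p ≤ (δ * (s / n) / (640 * statProxy)) ^ 2 := by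
    rw [div_le_iff₀ hp0']
    calc n * log p = (δ * (s / n) / (640 * statProxy)) ^ 2
          * ((640 * statProxy / δ) ^ 2 * ((n : ℝ) ^ 3 / s ^ 2) * log p) := by field_simp
      _ ≤ (δ * (s / n) / (640 * statProxy)) ^ 2 * p := by gcongr
  calc devLevel n p ≤ 640 * statProxy * (δ * (s / n) / (640 * statProxy)) := by
        unfold devLevel
        gcongr
        exact Real.sqrt_le_iff.2 ⟨by positivity, hsq⟩
    _ = δ * (s / n) := by field_simp

lemma one_le_cube_div_sq_mul {n : ℕ} {μ θ : ℝ} (hn : 1 ≤ n) (hμ : 0 < μ) (hμ1 : μ ≤ 1)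
    (hθ : 0 < θ) (hθ1 : θ ≤ 1) : 1 ≤ (n : ℝ) ^ 3 / (μ * θ) ^ 2 * μ := by
  have hcube : (1 : ℝ) ≤ (n : ℝ) ^ 3 := one_le_pow₀ (by exact_mod_cast hn)
  have hsq : (μ * θ) ^ 2 ≤ μ :=
    calc (μ * θ) ^ 2 = μ * (μ * θ ^ 2) := by ring
      _ ≤ μ := mul_le_of_le_one_right hμ.le
        (mul_le_one₀ hμ1 (by positivity) (pow_le_one₀ hθ.le hθ1))
  rw [div_mul_eq_mul_div, one_le_div (by positivity)]
  exact hsq.trans (le_mul_of_one_le_left hμ.le hcube)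

lemma exists_sample_size {δ : ℝ} (hδ : 0 < δ) : ∃ C, 0 < C ∧ ∀ (n p : ℕ) (θ μ : ℝ), 2 ≤ n →
    0 < θ → θ ≤ 1 / 2 → 0 < μ → μ ≤ 1 →
    C / (μ ^ 2 * θ ^ 2) * (n : ℝ) ^ 3 * log ((n : ℝ) / (μ * θ)) ≤ (p : ℝ) →
    devLevel n p ≤ δ * (μ * θ / n) ∧ n ≤ p ∧ 3 ≤ p ∧ 1 ≤ p * μ := by
  set B := (640 * statProxy / δ) ^ 2 + 1
  have hB : 1 ≤ B := le_add_of_nonneg_left (sq_nonneg _)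
  have hlogB : 0 ≤ log (2 * B) := Real.log_nonneg (by linarith)
  refine ⟨2 * B * (log (2 * B) + 3), by positivity, fun n p θ μ hn hθ hθ2 hμ hμ1 hp => ?_⟩
  have hs : 0 < μ * θ := by positivity
  have hs2 : μ * θ ≤ 1 / 2 := (mul_le_of_le_one_left hθ.le hμ1).trans hθ2
  have hA := max_le_cube_div_sq hn hs (by linarith)
  have hp' : 2 * B * (log (2 * B) + 3) * ((n : ℝ) ^ 3 / (μ * θ) ^ 2) * log (n / (μ * θ)) ≤ p := by
    rw [mul_pow]
    exact (by ring : _ = _).trans_le hp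
  have hAp : (n : ℝ) ^ 3 / (μ * θ) ^ 2 ≤ p := by
    refine le_trans ?_ hp'
    have hlog := one_le_log_div hn hs hs2
    have : 1 ≤ 2 * B * (log (2 * B) + 3) := by nlinarith
    exact (le_mul_of_one_le_left (by positivity) this).trans
      (le_mul_of_one_le_right (by positivity) hlog)
  have hnp : (n : ℝ) ≤ p := (le_max_left _ _).trans (hA.trans hAp)
  have h8p : (8 : ℝ) ≤ p := (le_max_right _ _).trans (hA.trans hAp)
  have hp0 : 0 < p := by exact_mod_cast (by linarith : (0 : ℝ) < p)
  refine ⟨devLevel_le_of_mul_log_le hδ hs (by omega) hp0 ?_, by exact_mod_cast hnp, ?_, ?_⟩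
  · have : 0 ≤ log p := Real.log_natCast_nonneg p
    refine le_trans ?_ (mul_cube_div_sq_mul_log_le hB hn hs hs2 hp0 hp')
    gcongr
    exact le_add_of_nonneg_right zero_le_one
  · exact_mod_cast (by linarith : (3 : ℝ) ≤ p)
  · calc 1 ≤ (n : ℝ) ^ 3 / (μ * θ) ^ 2 * μ :=
          one_le_cube_div_sq_mul (by omega) hμ hμ1 hθ (by linarith)
      _ ≤ p * μ := by gcongr

end SampleSize

section Objective

variable {ι : Type*} [Fintype ι] {p : ℕ} {μ : ℝ} {X : Fin p → ι → ℝ} {q : ι → ℝ}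

/-- The objective `f(q; X)` of the data set with columns `X k`, as a function on `ι → ℝ`. -/
def objective (μ : ℝ) (X : Fin p → ι → ℝ) (q : ι → ℝ) : ℝ :=
  (p : ℝ)⁻¹ * ∑ k, hmu μ (q ⬝ᵥ X k)

/-- Local minimality of the objective over the unit sphere, in coordinates: the sphere is the
Euclidean one `q ⬝ᵥ q = 1`, whereas `nhds q` is taken in the product topology of `ι → ℝ`. -/
def IsSphereLocalMin (μ : ℝ) (X : Fin p → ι → ℝ) (q : ι → ℝ) : Prop :=
  q ⬝ᵥ q = 1 ∧ ∀ᶠ q' in nhds q, q' ⬝ᵥ q' = 1 → objective μ X q ≤ objective μ X q'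

lemma dotProduct_self_eq_sum_sq (v : ι → ℝ) : v ⬝ᵥ v = ∑ l, v l ^ 2 := by
  simp only [dotProduct, sq]

lemma IsSphereLocalMin.sum_sq (h : IsSphereLocalMin μ X q) : ∑ l, q l ^ 2 = 1 := by
  rw [← dotProduct_self_eq_sum_sq, h.1]

lemma hasDerivAt_hmu (hμ : μ ≠ 0) (z : ℝ) : HasDerivAt (hmu μ) (tanh (z / μ)) z := by
  have hdiv : HasDerivAt (fun z : ℝ => z / μ) (1 / μ) z := (hasDerivAt_id z).div_const μ
  refine ((hdiv.cosh.log (Real.cosh_pos _).ne').const_mul μ).congr_deriv ?_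
  rw [Real.tanh_eq_sinh_div_cosh]
  field_simp

@[fun_prop]
lemma continuous_hmu : Continuous (hmu μ) := by
  unfold hmu
  exact continuous_const.mul ((Real.continuous_cosh.comp (continuous_id.div_const μ)).log
    fun z => (Real.cosh_pos _).ne')

lemma continuous_objective : Continuous (objective μ X) := by
  unfold objective dotProduct
  fun_prop

lemma objective_neg (q : ι → ℝ) : objective μ X (-q) = objective μ X q := by
  simp only [objective, hmu, neg_dotProduct, neg_div, Real.cosh_neg]

lemma IsSphereLocalMin.neg (h : IsSphereLocalMin μ X q) : IsSphereLocalMin μ X (-q) := by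
  refine ⟨by simpa only [neg_dotProduct, dotProduct_neg, neg_neg] using h.1, ?_⟩
  have htendsto : Filter.Tendsto (fun q' : ι → ℝ => -q') (nhds (-q)) (nhds q) := by
    simpa only [neg_neg] using (continuous_neg (G := ι → ℝ)).tendsto (-q)
  filter_upwards [htendsto.eventually h.2] with q' hq' hunit
  rw [objective_neg, ← objective_neg q']
  exact hq' (by simpa only [neg_dotProduct, dotProduct_neg, neg_neg] using hunit)

lemma empSlope_smul (q v : ι → ℝ) (r : ℝ) : empSlope μ X q (r • v) = r * empSlope μ X q v := by
  simp only [empSlope, slopeTerm_smul, ← Finset.mul_sum]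
  ring

end Objective

section CircleArc

variable {ι : Type*} {z a b : ι → ℝ}

/-- The circle `t ↦ z + cos t • a + sin t • b`, used to move along the sphere. -/
def circleArc (z a b : ι → ℝ) (t : ℝ) : ι → ℝ := z + cos t • a + sin t • b

/-- The velocity of `circleArc z a b`. -/
def circleVelocity (a b : ι → ℝ) (t : ℝ) : ι → ℝ := -sin t • a + cos t • b

lemma circleArc_zero : circleArc z a b 0 = z + a := by
  simp [circleArc]

lemma circleVelocity_zero : circleVelocity a b 0 = b := by
  simp [circleVelocity]

lemma continuous_circleArc : Continuous (circleArc z a b) := by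
  unfold circleArc
  fun_prop

variable [Fintype ι]

lemma circleArc_dotProduct_self (hza : z ⬝ᵥ a = 0) (hzb : z ⬝ᵥ b = 0) (hab : a ⬝ᵥ b = 0)
    (haa : a ⬝ᵥ a = b ⬝ᵥ b) (t : ℝ) :
    circleArc z a b t ⬝ᵥ circleArc z a b t = z ⬝ᵥ z + a ⬝ᵥ a := by
  simp only [circleArc, add_dotProduct, dotProduct_add, smul_dotProduct, dotProduct_smul,
    smul_eq_mul, dotProduct_comm a z, dotProduct_comm b z, dotProduct_comm b a, hza, hzb, hab]
  rw [← haa]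
  linear_combination (a ⬝ᵥ a) * Real.sin_sq_add_cos_sq t

lemma hasDerivAt_circleArc_dotProduct (z a b x : ι → ℝ) (t : ℝ) :
    HasDerivAt (fun t => circleArc z a b t ⬝ᵥ x) (circleVelocity a b t ⬝ᵥ x) t := by
  simp only [circleArc, circleVelocity, add_dotProduct, smul_dotProduct, smul_eq_mul]
  exact (((Real.hasDerivAt_cos t).mul_const _).const_add _).add
    ((Real.hasDerivAt_sin t).mul_const _)

lemma hasDerivAt_circleVelocity_dotProduct (a b x : ι → ℝ) (t : ℝ) :
    HasDerivAt (fun t => circleVelocity a b t ⬝ᵥ x) (-((cos t • a + sin t • b) ⬝ᵥ x)) t := by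
  simp only [circleVelocity, add_dotProduct, smul_dotProduct, smul_eq_mul]
  refine (((Real.hasDerivAt_sin t).neg.mul_const _).add
    ((Real.hasDerivAt_cos t).mul_const _)).congr_deriv ?_
  ring

variable {p : ℕ} {μ : ℝ} (X : Fin p → ι → ℝ)

lemma hasDerivAt_objective_circleArc (hμ : μ ≠ 0) (z a b : ι → ℝ) (t : ℝ) :
    HasDerivAt (fun t => objective μ X (circleArc z a b t))
      (empSlope μ X (circleArc z a b t) (circleVelocity a b t)) t := by
  refine HasDerivAt.const_mul _ (HasDerivAt.fun_sum fun k _ => ?_)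
  exact (hasDerivAt_hmu hμ _).comp t (hasDerivAt_circleArc_dotProduct z a b (X k) t)

lemma hasDerivAt_empSlope_circleArc (μ : ℝ) (z a b : ι → ℝ) (t : ℝ) :
    HasDerivAt (fun t => empSlope μ X (circleArc z a b t) (circleVelocity a b t))
      (empCurv μ X (circleArc z a b t) (circleVelocity a b t) / μ
        - empSlope μ X (circleArc z a b t) (cos t • a + sin t • b)) t := by
  have hterm : ∀ k,
      HasDerivAt (fun t => slopeTerm μ (circleArc z a b t) (circleVelocity a b t) (X k))
        (curvTerm μ (circleArc z a b t) (circleVelocity a b t) (X k) / μ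
          - slopeTerm μ (circleArc z a b t) (cos t • a + sin t • b) (X k)) t := by
    intro k
    have harg := (hasDerivAt_circleArc_dotProduct z a b (X k) t).div_const μ
    refine (((hasDerivAt_tanh _).comp t harg).mul
      (hasDerivAt_circleVelocity_dotProduct a b (X k) t)).congr_deriv ?_
    simp only [curvTerm, slopeTerm, Function.comp]
    ring
  refine (HasDerivAt.const_mul _ (HasDerivAt.fun_sum fun k _ => hterm k)).congr_deriv ?_
  simp only [empSlope, empCurv, Finset.sum_sub_distrib, ← Finset.sum_div]
  ring

end CircleArc

section NecessaryConditions

lemma second_deriv_nonneg_of_isLocalMin {φ φ' : ℝ → ℝ} {d x : ℝ}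
    (hφ : ∀ t, HasDerivAt φ (φ' t) t) (hφ' : HasDerivAt φ' d x) (hmin : IsLocalMin φ x) :
    0 ≤ d := by
  have hcrit := hmin.hasDerivAt_eq_zero (hφ x)
  by_contra! hd
  have hderiv : deriv φ = φ' := funext fun t => (hφ t).deriv
  have hmax : IsLocalMax φ x :=
    isLocalMax_of_deriv_deriv_neg (by rwa [hderiv, hφ'.deriv]) (by rw [hderiv, hcrit])
      (hφ x).continuousAt
  -- A point that is both a local minimum and a local maximum has a constant neighbourhood.
  have hconst : φ =ᶠ[nhds x] fun _ => φ x := by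
    filter_upwards [hmin, hmax] with t h_ge h_le using le_antisymm h_le h_ge
  have hφ'_zero : φ' =ᶠ[nhds x] fun _ => 0 := by
    simpa only [hderiv, deriv_const'] using hconst.deriv
  have hd_zero := hφ'_zero.deriv_eq
  rw [hφ'.deriv, deriv_const] at hd_zero
  exact hd.ne hd_zero

variable {ι : Type*} [Fintype ι] {p : ℕ} {μ : ℝ} {X : Fin p → ι → ℝ} {q z a b : ι → ℝ}

lemma IsSphereLocalMin.isLocalMin_circleArc (h : IsSphereLocalMin μ X q) (hza : z ⬝ᵥ a = 0)
    (hzb : z ⬝ᵥ b = 0) (hab : a ⬝ᵥ b = 0) (haa : a ⬝ᵥ a = b ⬝ᵥ b) (hq : z + a = q) :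
    IsLocalMin (fun t => objective μ X (circleArc z a b t)) 0 := by
  have hzero : circleArc z a b 0 = q := circleArc_zero.trans hq
  have htendsto : Filter.Tendsto (circleArc z a b) (nhds 0) (nhds q) := by
    rw [← hzero]
    exact continuous_circleArc.tendsto 0
  have hunit : z ⬝ᵥ z + a ⬝ᵥ a = 1 := by
    rw [← circleArc_dotProduct_self hza hzb hab haa 0, hzero, h.1]
  filter_upwards [htendsto.eventually h.2] with t ht
  rw [hzero]
  exact ht (by rw [circleArc_dotProduct_self hza hzb hab haa, hunit])

lemma IsSphereLocalMin.circleArc_conditions (hμ : μ ≠ 0) (h : IsSphereLocalMin μ X q)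
    (hza : z ⬝ᵥ a = 0) (hzb : z ⬝ᵥ b = 0) (hab : a ⬝ᵥ b = 0) (haa : a ⬝ᵥ a = b ⬝ᵥ b)
    (hq : z + a = q) :
    empSlope μ X q b = 0 ∧ 0 ≤ empCurv μ X q b / μ - empSlope μ X q a := by
  have hmin := h.isLocalMin_circleArc hza hzb hab haa hq
  have hderiv := hasDerivAt_objective_circleArc X hμ z a b
  have hderiv2 := hasDerivAt_empSlope_circleArc X μ z a b 0
  have hfirst := hmin.hasDerivAt_eq_zero (hderiv 0)
  have hsecond := second_deriv_nonneg_of_isLocalMin hderiv hderiv2 hmin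
  simp only [circleArc_zero, circleVelocity_zero, hq] at hfirst hsecond
  exact ⟨hfirst, by simpa using hsecond⟩

lemma IsSphereLocalMin.empSlope_eq_zero (hμ : μ ≠ 0) (h : IsSphereLocalMin μ X q) {v : ι → ℝ}
    (hv : q ⬝ᵥ v = 0) : empSlope μ X q v = 0 := by
  rcases eq_or_ne v 0 with rfl | hv0
  · simp [empSlope, slopeTerm]
  have hpos : 0 < v ⬝ᵥ v :=
    lt_of_le_of_ne (Finset.sum_nonneg fun i _ => mul_self_nonneg _)
      fun h0 => hv0 (dotProduct_self_eq_zero.1 h0.symm)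
  have hr : 0 < √(v ⬝ᵥ v) := Real.sqrt_pos.2 hpos
  have hnormalized : (√(v ⬝ᵥ v))⁻¹ • v ⬝ᵥ (√(v ⬝ᵥ v))⁻¹ • v = 1 := by
    rw [smul_dotProduct, dotProduct_smul, smul_eq_mul, smul_eq_mul, ← mul_assoc, ← mul_inv,
      Real.mul_self_sqrt hpos.le, inv_mul_cancel₀ hpos.ne']
  have hslope := (h.circleArc_conditions hμ (z := 0) (a := q) (zero_dotProduct _)
    (zero_dotProduct _) (by rw [dotProduct_smul, hv, smul_zero]) (h.1.trans hnormalized.symm)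
    (zero_add q)).1
  rw [empSlope_smul] at hslope
  exact (mul_eq_zero.1 hslope).resolve_left (inv_pos.2 hr).ne'

end NecessaryConditions

lemma mem_sphere_iff_dotProduct_self {ι : Type*} [Fintype ι] (x : EuclideanSpace ℝ ι) :
    x ∈ Metric.sphere (0 : EuclideanSpace ℝ ι) 1 ↔ x.ofLp ⬝ᵥ x.ofLp = 1 := by
  rw [mem_sphere_zero_iff_norm, EuclideanSpace.norm_eq, Real.sqrt_eq_one,
    dotProduct_self_eq_sum_sq]
  simp only [Real.norm_eq_abs, sq_abs]

lemma mem_localMins_iff {n p : ℕ} {μ : ℝ} (X : Fin p → Fin n → ℝ)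
    (q : EuclideanSpace ℝ (Fin n)) :
    q ∈ LocalMins n p μ (Matrix.of fun i k => X k i) ↔ IsSphereLocalMin μ X q.ofLp := by
  have hobj : ∀ x : EuclideanSpace ℝ (Fin n),
      ffun n p μ (Matrix.of fun i k => X k i) x = objective μ X x.ofLp := fun x => rfl
  have hmap : Filter.map (fun x : EuclideanSpace ℝ (Fin n) => x.ofLp) (nhds q) = nhds q.ofLp :=
    (EuclideanSpace.equiv (Fin n) ℝ).toHomeomorph.map_nhds_eq q
  unfold LocalMins IsSphereLocalMin
  rw [Set.mem_ofPred_eq, mem_sphere_iff_dotProduct_self, ← hmap, Filter.eventually_map,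
    IsLocalMinOn, IsMinFilter, eventually_nhdsWithin_iff]
  simp only [mem_sphere_iff_dotProduct_self, hobj]

section PairRotation

variable {ι : Type*} [Fintype ι] {q : ι → ℝ} {i j : ι}

lemma exists_forall_sq_le_sq [Nonempty ι] (q : ι → ℝ) :
    ∃ i, (∀ j, q j ^ 2 ≤ q i ^ 2) ∧ ∑ l, q l ^ 2 ≤ Fintype.card ι * q i ^ 2 := by
  obtain ⟨i, hi⟩ := Finite.exists_max fun i => q i ^ 2
  exact ⟨i, hi, (Finset.sum_le_card_nsmul _ _ _ fun j _ => hi j).trans_eq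
    (by rw [Finset.card_univ, nsmul_eq_mul])⟩

lemma sqrt_sq_add_sq_le {x y : ℝ} (h : y ^ 2 ≤ x ^ 2) : √(x ^ 2 + y ^ 2) ≤ 3 / 2 * |x| := by
  refine Real.sqrt_le_iff.2 ⟨by positivity, ?_⟩
  rw [mul_pow, sq_abs]
  linarith [sq_nonneg x]

lemma dotProduct_eq_of_pair_support {u : ι → ℝ} (hij : i ≠ j)
    (hu : ∀ l, l ≠ i → l ≠ j → u l = 0) (w : ι → ℝ) : u ⬝ᵥ w = u i * w i + u j * w j :=
  Finset.sum_eq_add i j hij (fun l _ hl => by rw [hu l hl.1 hl.2, zero_mul]) (by simp) (by simp)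

variable [DecidableEq ι]

lemma sq_add_sum_compl (v : ι → ℝ) (i : ι) : v i ^ 2 + ∑ k ∈ {i}ᶜ, v k ^ 2 = ∑ l, v l ^ 2 := by
  rw [← Finset.sum_add_sum_compl {i}, Finset.sum_singleton]

lemma pairDir_dotProduct (hij : i ≠ j) (w : ι → ℝ) :
    pairDir q i j ⬝ᵥ w = -q j * w i + q i * w j := by
  rw [dotProduct_eq_of_pair_support hij fun l hi hj => by simp [pairDir, hi, hj]]
  simp [pairDir, hij]

lemma pairProj_dotProduct (hij : i ≠ j) (w : ι → ℝ) :
    pairProj q i j ⬝ᵥ w = q i * w i + q j * w j := by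
  rw [dotProduct_eq_of_pair_support hij fun l hi hj => by simp [pairProj, hi, hj]]
  simp [pairProj, hij]

lemma pairDir_dotProduct_self (hij : i ≠ j) :
    pairDir q i j ⬝ᵥ pairDir q i j = q i ^ 2 + q j ^ 2 := by
  rw [pairDir_dotProduct hij]
  simp only [pairDir, ↓reduceIte, if_neg hij]
  ring

lemma pairProj_dotProduct_self (hij : i ≠ j) :
    pairProj q i j ⬝ᵥ pairProj q i j = q i ^ 2 + q j ^ 2 := by
  rw [pairProj_dotProduct hij]
  simp only [pairProj, ↓reduceIte, if_neg hij]
  ring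

variable {p : ℕ} {μ : ℝ} {X : Fin p → ι → ℝ}

lemma IsSphereLocalMin.pair_conditions (hμ : μ ≠ 0) (h : IsSphereLocalMin μ X q) (hij : i ≠ j) :
    empSlope μ X q (pairDir q i j) = 0 ∧
      0 ≤ empCurv μ X q (pairDir q i j) / μ - empSlope μ X q (pairProj q i j) := by
  refine h.circleArc_conditions hμ (z := q - pairProj q i j) ?_ ?_ ?_ ?_ (sub_add_cancel _ _)
  · rw [dotProduct_comm, pairProj_dotProduct hij]
    simp [pairProj, hij]
  · rw [dotProduct_comm, pairDir_dotProduct hij]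
    simp [pairProj, hij]
  · rw [pairProj_dotProduct hij]
    simp only [pairDir, ↓reduceIte, if_neg hij]
    ring
  · rw [pairDir_dotProduct_self hij, pairProj_dotProduct_self hij]

end PairRotation

section WellSampled

variable {n p : ℕ} {δ θ μ ε : ℝ} {X : Fin p → Fin n → ℝ} {q : Fin n → ℝ} {i j : Fin n}

/-- The regime in which the landscape is analysed: the smoothing level `μ` is at most
`δ * (θ / n)`, and the sample statistics of the columns of `X` match the population ones up to a
relative error `ε` of at most `δ * (μ * θ / n)`. -/
structure WellSampled (δ θ μ ε : ℝ) (X : Fin p → Fin n → ℝ) : Prop where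
  dim_pos : 0 < n
  theta_pos : 0 < θ
  theta_le_half : θ ≤ 1 / 2
  mu_pos : 0 < μ
  mu_le : μ ≤ δ * (θ / n)
  eps_nonneg : 0 ≤ ε
  eps_le : ε ≤ δ * (μ * θ / n)
  close : UniformlyClose θ μ ε X

namespace WellSampled

lemma mono {δ' : ℝ} (hδ : δ ≤ δ') (h : WellSampled δ θ μ ε X) : WellSampled δ' θ μ ε X where
  __ := h
  mu_le := by
    have := h.theta_pos
    exact h.mu_le.trans (by gcongr)
  eps_le := by
    have := h.theta_pos
    have := h.mu_pos
    exact h.eps_le.trans (by gcongr)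

lemma theta_le_one (h : WellSampled δ θ μ ε X) : θ ≤ 1 :=
  h.theta_le_half.trans (by norm_num)

lemma delta_pos (h : WellSampled δ θ μ ε X) : 0 < δ := by
  have := h.theta_pos
  exact pos_of_mul_pos_left (h.mu_pos.trans_le h.mu_le) (by positivity)

lemma mu_le_div (h : WellSampled δ θ μ ε X) : μ ≤ δ * (1 / n) := by
  have := h.delta_pos
  exact h.mu_le.trans (by gcongr; exact h.theta_le_one)

lemma one_div_dim_le_one (h : WellSampled δ θ μ ε X) : 1 / (n : ℝ) ≤ 1 :=
  div_le_one_of_le₀ (by exact_mod_cast h.dim_pos) (Nat.cast_nonneg n)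

lemma mu_le_delta (h : WellSampled δ θ μ ε X) : μ ≤ δ :=
  h.mu_le_div.trans (mul_le_of_le_one_right h.delta_pos.le h.one_div_dim_le_one)

lemma mu_le_mul_sq (h : WellSampled δ θ μ ε X) (hi : 1 / (n : ℝ) ≤ q i ^ 2) :
    μ ≤ δ * q i ^ 2 :=
  h.mu_le_div.trans (mul_le_mul_of_nonneg_left hi h.delta_pos.le)

lemma eps_le_mul_sq (h : WellSampled δ θ μ ε X) (hi : 1 / (n : ℝ) ≤ q i ^ 2) :
    ε ≤ δ * (μ * θ * q i ^ 2) := by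
  have := h.theta_pos
  have := h.mu_pos
  have := h.delta_pos
  calc ε ≤ δ * (μ * θ * (1 / n)) := by simpa only [mul_one_div] using h.eps_le
    _ ≤ δ * (μ * θ * q i ^ 2) := by gcongr

end WellSampled

lemma IsSphereLocalMin.abs_mul_pairSlope_le (hX : WellSampled δ θ μ ε X)
    (h : IsSphereLocalMin μ X q) (hij : i ≠ j) (hi : q i ≠ 0) (hji : q j ^ 2 ≤ q i ^ 2) :
    |q j| * pairSlope θ μ q i j ≤ 3 / 2 * ε := by
  have hε := hX.eps_nonneg
  have hclose := (hX.close q (pairDir q i j) √(q i ^ 2 + q j ^ 2) h.sum_sq.le (by positivity) (by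
    rw [← dotProduct_self_eq_sum_sq, pairDir_dotProduct_self hij,
      Real.sq_sqrt (by positivity)])).1
  rw [(h.pair_conditions hX.mu_pos.ne' hij).1, zero_sub, abs_neg,
    meanSlope_pairDir hX.theta_pos.le hX.theta_le_one μ q hij, abs_mul, abs_mul, abs_of_nonneg
    (pairSlope_nonneg hX.mu_pos hX.theta_pos.le hX.theta_le_one hji)] at hclose
  refine le_of_mul_le_mul_left ?_ (abs_pos.2 hi)
  calc |q i| * (|q j| * pairSlope θ μ q i j) = |q i| * |q j| * pairSlope θ μ q i j := by ring
    _ ≤ ε * √(q i ^ 2 + q j ^ 2) := hclose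
    _ ≤ ε * (3 / 2 * |q i|) := by gcongr; exact sqrt_sq_add_sq_le hji
    _ = |q i| * (3 / 2 * ε) := by ring

lemma IsSphereLocalMin.neg_le_pair_curvature (hX : WellSampled δ θ μ ε X)
    (h : IsSphereLocalMin μ X q) (hij : i ≠ j) (hji : q j ^ 2 ≤ q i ^ 2) :
    -(ε * (2 * q i ^ 2 / μ + 3 / 2 * |q i|)) ≤
      meanCurv θ μ q (pairDir q i j) / μ - meanSlope θ μ q (pairProj q i j) := by
  have hε := hX.eps_nonneg
  have hμ := hX.mu_pos
  have hr_sq : √(q i ^ 2 + q j ^ 2) ^ 2 = q i ^ 2 + q j ^ 2 := Real.sq_sqrt (by positivity)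
  have hcurv := (hX.close q (pairDir q i j) _ h.sum_sq.le (Real.sqrt_nonneg _) (by
    rw [← dotProduct_self_eq_sum_sq, pairDir_dotProduct_self hij, hr_sq])).2
  have hslope := (hX.close q (pairProj q i j) _ h.sum_sq.le (Real.sqrt_nonneg _) (by
    rw [← dotProduct_self_eq_sum_sq, pairProj_dotProduct_self hij, hr_sq])).1
  have hcurv_div : empCurv μ X q (pairDir q i j) / μ ≤
      meanCurv θ μ q (pairDir q i j) / μ + ε * (2 * q i ^ 2 / μ) := by
    rw [← mul_div_assoc, ← add_div]
    gcongr
    calc empCurv μ X q (pairDir q i j)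
        ≤ meanCurv θ μ q (pairDir q i j) + ε * (q i ^ 2 + q j ^ 2) := by
          rw [← hr_sq]
          linarith [(abs_le.1 hcurv).2]
      _ ≤ meanCurv θ μ q (pairDir q i j) + ε * (2 * q i ^ 2) := by
          gcongr
          linarith
  have hslope_err : ε * √(q i ^ 2 + q j ^ 2) ≤ ε * (3 / 2 * |q i|) := by
    gcongr
    exact sqrt_sq_add_sq_le hji
  linarith [(h.pair_conditions hμ.ne' hij).2, (abs_le.1 hslope).1]

end WellSampled

section Localization

lemma IsSphereLocalMin.sq_mul_pairSlope_le (h : IsSphereLocalMin μ X q)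
    (hX : WellSampled δ θ μ ε X) (hij : i ≠ j) (hqi : q i ≠ 0) (hji : q j ^ 2 ≤ q i ^ 2)
    (hj : q i ^ 2 / 4 ≤ q j ^ 2) : q i ^ 2 * pairSlope θ μ q i j ≤ 3 * (ε * |q i|) := by
  have hP := pairSlope_nonneg hX.mu_pos hX.theta_pos.le hX.theta_le_one hji
  have hj_abs : |q i| ≤ 2 * |q j| := by
    refine (abs_le_of_sq_le_sq' ?_ (by positivity)).2
    rw [mul_pow, sq_abs, sq_abs]
    linarith
  have hbound := h.abs_mul_pairSlope_le hX hij hqi hji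
  calc q i ^ 2 * pairSlope θ μ q i j = |q i| * (|q i| * pairSlope θ μ q i j) := by
        rw [← sq_abs]; ring
    _ ≤ |q i| * (2 * |q j| * pairSlope θ μ q i j) := by gcongr
    _ ≤ 3 * (ε * |q i|) := by nlinarith [abs_nonneg (q i)]

lemma exists_sq_lt_sq_div_four_of_isSphereLocalMin : ∃ δ : ℝ, 0 < δ ∧
    ∀ {n p : ℕ} {θ μ ε : ℝ} {X : Fin p → Fin n → ℝ} {q : Fin n → ℝ} {i j : Fin n},
      WellSampled δ θ μ ε X → IsSphereLocalMin μ X q → i ≠ j → 1 / (n : ℝ) ≤ q i ^ 2 →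
      q j ^ 2 ≤ q i ^ 2 → q j ^ 2 < q i ^ 2 / 4 := by
  obtain ⟨c, τ₀, hc, hτ₀, hcurv⟩ := exists_pair_curvature_le
  refine ⟨min (c / 8) (1 / τ₀), by positivity, ?_⟩
  intro n p θ μ ε X q i j hX h hij hi hji
  have hθ := hX.theta_pos
  have hμ := hX.mu_pos
  have hn : (0 : ℝ) < n := by exact_mod_cast hX.dim_pos
  by_contra! hj
  set m := |q i|
  have hm_sq : m ^ 2 = q i ^ 2 := sq_abs _
  have hm : 0 < m := abs_pos.2 fun h0 => by
    rw [h0] at hi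
    exact (one_div_pos.2 hn).not_ge (by simpa using hi)
  have hm_one : m ≤ 1 := abs_le_one_of_sum_sq_le_one h.sum_sq.le i
  have hμm : τ₀ * μ ≤ m := by
    have := (hX.mono (min_le_right _ _)).mu_le_mul_sq hi
    rw [div_mul_eq_mul_div, one_mul, le_div_iff₀ (by linarith)] at this
    nlinarith
  have hε : ε ≤ c / 8 * (μ * θ * m ^ 2) := by
    rw [hm_sq]
    exact (hX.mono (min_le_left _ _)).eps_le_mul_sq hi
  have hεm : ε * m ≤ c / 8 * (θ * m ^ 4) := by
    have : μ ≤ m := (le_mul_of_one_le_left hμ.le hτ₀).trans hμm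
    calc ε * m ≤ c / 8 * (m * θ * m ^ 2) * m := by grw [hε, this]
      _ = c / 8 * (θ * m ^ 4) := by ring
  have hcurv_err : ε * (2 * m ^ 2 / μ) ≤ c / 4 * (θ * m ^ 4) := by
    calc ε * (2 * m ^ 2 / μ) ≤ c / 8 * (μ * θ * m ^ 2) * (2 * m ^ 2 / μ) := by gcongr
      _ = c / 4 * (θ * m ^ 4) := by field_simp; ring
  have hpairSlope : m ^ 2 * pairSlope θ μ q i j ≤ 3 * (ε * m) := by
    have := h.sq_mul_pairSlope_le hX hij (abs_pos.1 hm) hji hj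
    rwa [← hm_sq] at this
  have hlower := h.neg_le_pair_curvature hX hij hji
  have hupper := hcurv hij hθ hX.theta_le_half hμ h.sum_sq.le hj hji hμm
  rw [← hm_sq, show q i ^ 4 = m ^ 4 by rw [← Even.pow_abs ⟨2, rfl⟩]] at hupper
  rw [← hm_sq] at hlower
  have : 0 < c * (θ * m ^ 4) := by positivity
  linarith

lemma exists_abs_le_mu_of_isSphereLocalMin : ∃ δ : ℝ, 0 < δ ∧
    ∀ {n p : ℕ} {θ μ ε : ℝ} {X : Fin p → Fin n → ℝ} {q : Fin n → ℝ} {i j : Fin n},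
      WellSampled δ θ μ ε X → IsSphereLocalMin μ X q → i ≠ j → 1 / (n : ℝ) ≤ q i ^ 2 →
      q j ^ 2 ≤ q i ^ 2 / 4 → |q j| ≤ μ := by
  obtain ⟨c, K, hc, hK, hslope⟩ := exists_pairSlope_ge
  refine ⟨min (c / 2) (1 / K), by positivity, ?_⟩
  intro n p θ μ ε X q i j hX h hij hi hji
  have hθ := hX.theta_pos
  have hμ := hX.mu_pos
  have hn : (0 : ℝ) < n := by exact_mod_cast hX.dim_pos
  have hqi : 0 < q i ^ 2 := (one_div_pos.2 hn).trans_le hi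
  have hμK : K * μ ^ 2 ≤ q i ^ 2 := by
    have hmono := hX.mono (min_le_right _ _)
    have hμ_one : μ ≤ 1 := hmono.mu_le_delta.trans (div_le_one_of_le₀ hK (by linarith))
    have hμ_le := hmono.mu_le_mul_sq hi
    rw [div_mul_eq_mul_div, one_mul, le_div_iff₀ (by linarith)] at hμ_le
    nlinarith
  have hε := (hX.mono (min_le_left _ _)).eps_le_mul_sq hi
  have hP := hslope hθ hX.theta_le_half hμ h.sum_sq.le hji hμK
  have hfirst := h.abs_mul_pairSlope_le hX hij (by simpa using hqi.ne') (by linarith)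
  have : 0 < c * θ * q i ^ 2 := by positivity
  refine le_of_mul_le_mul_left ?_ this
  calc c * θ * q i ^ 2 * |q j| ≤ |q j| * pairSlope θ μ q i j := by rw [mul_comm]; gcongr
    _ ≤ 3 / 2 * (c / 2 * (μ * θ * q i ^ 2)) := by linarith
    _ ≤ c * θ * q i ^ 2 * μ := by nlinarith

lemma exists_sum_compl_le_of_isSphereLocalMin {r₀ : ℝ} (hr₀ : 0 < r₀) : ∃ δ : ℝ, 0 < δ ∧
    ∀ {n p : ℕ} {θ μ ε : ℝ} {X : Fin p → Fin n → ℝ} {q : Fin n → ℝ},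
      WellSampled δ θ μ ε X → IsSphereLocalMin μ X q → ∃ i, ∑ k ∈ {i}ᶜ, q k ^ 2 ≤ r₀ ^ 2 := by
  obtain ⟨δ₁, hδ₁, hgap⟩ := exists_sq_lt_sq_div_four_of_isSphereLocalMin
  obtain ⟨δ₂, hδ₂, hsmall⟩ := exists_abs_le_mu_of_isSphereLocalMin
  refine ⟨min r₀ (min δ₁ δ₂), by positivity, ?_⟩
  intro n p θ μ ε X q hX h
  have hn : (0 : ℝ) < n := by exact_mod_cast hX.dim_pos
  have : Nonempty (Fin n) := ⟨⟨0, hX.dim_pos⟩⟩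
  obtain ⟨i, hmax, hcard⟩ := exists_forall_sq_le_sq q
  have hi : 1 / (n : ℝ) ≤ q i ^ 2 := by
    rwa [h.sum_sq, Fintype.card_fin, ← div_le_iff₀' hn] at hcard
  have hqj : ∀ j ∈ ({i}ᶜ : Finset (Fin n)), q j ^ 2 ≤ μ ^ 2 := by
    intro j hj
    have hij : i ≠ j := by simpa [eq_comm] using hj
    have hlt := hgap (hX.mono ((min_le_right _ _).trans (min_le_left _ _))) h hij hi (hmax j)
    rw [sq_le_sq, abs_of_pos hX.mu_pos]
    exact hsmall (hX.mono ((min_le_right _ _).trans (min_le_right _ _))) h hij hi hlt.le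
  have hμ := hX.mu_pos
  have hμr₀ : μ ≤ r₀ * (1 / n) := (hX.mono (min_le_left _ _)).mu_le_div
  refine ⟨i, (Finset.sum_le_card_nsmul _ _ _ hqj).trans ?_⟩
  calc ({i}ᶜ : Finset (Fin n)).card • μ ^ 2 ≤ (n : ℝ) * (r₀ * (1 / n)) ^ 2 := by
        rw [nsmul_eq_mul]
        gcongr
        exact (Finset.card_le_univ _).trans_eq (Fintype.card_fin n)
    _ = r₀ ^ 2 * (1 / n) := by field_simp
    _ ≤ r₀ ^ 2 := mul_le_of_le_one_right (sq_nonneg _) hX.one_div_dim_le_one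

end Localization

section GreatCircle

variable {ι : Type*} [Fintype ι] {q q' b : ι → ℝ}

lemma greatCircle_dotProduct_self (hq : q ⬝ᵥ q = 1) (hb : b ⬝ᵥ b = 1) (hqb : q ⬝ᵥ b = 0) (t : ℝ) :
    circleArc 0 q b t ⬝ᵥ circleArc 0 q b t = 1 := by
  rw [circleArc_dotProduct_self (zero_dotProduct _) (zero_dotProduct _) hqb (hq.trans hb.symm),
    zero_dotProduct, zero_add, hq]

lemma circleVelocity_dotProduct_self (hq : q ⬝ᵥ q = 1) (hb : b ⬝ᵥ b = 1) (hqb : q ⬝ᵥ b = 0)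
    (t : ℝ) : circleVelocity q b t ⬝ᵥ circleVelocity q b t = 1 := by
  simp only [circleVelocity, add_dotProduct, dotProduct_add, smul_dotProduct, dotProduct_smul, hq,
    hb, dotProduct_comm b q, hqb, smul_eq_mul]
  linear_combination Real.sin_sq_add_cos_sq t

lemma greatCircle_dotProduct_velocity (hq : q ⬝ᵥ q = 1) (hb : b ⬝ᵥ b = 1) (hqb : q ⬝ᵥ b = 0)
    (t : ℝ) : circleArc 0 q b t ⬝ᵥ circleVelocity q b t = 0 := by
  simp only [circleArc, circleVelocity, zero_add, add_dotProduct, dotProduct_add, smul_dotProduct,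
    dotProduct_smul, hq, hb, dotProduct_comm b q, hqb, smul_eq_mul]
  ring

lemma dotProduct_lt_one (hq : q ⬝ᵥ q = 1) (hq' : q' ⬝ᵥ q' = 1) (hne : q ≠ q') : q ⬝ᵥ q' < 1 := by
  have hpos : 0 < (q - q') ⬝ᵥ (q - q') :=
    lt_of_le_of_ne (Finset.sum_nonneg fun i _ => mul_self_nonneg _)
      fun h0 => hne (sub_eq_zero.1 (dotProduct_self_eq_zero.1 h0.symm))
  simp only [sub_dotProduct, dotProduct_sub, hq, hq', dotProduct_comm q' q] at hpos
  linarith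

lemma exists_greatCircle_eq (hq : q ⬝ᵥ q = 1) (hq' : q' ⬝ᵥ q' = 1) (hne : q ≠ q')
    (hne_neg : q ≠ -q') :
    ∃ b T, b ⬝ᵥ b = 1 ∧ q ⬝ᵥ b = 0 ∧ 0 < T ∧ T < π ∧ circleArc 0 q b T = q' := by
  have hlt : q ⬝ᵥ q' < 1 := dotProduct_lt_one hq hq' hne
  have hgt : -1 < q ⬝ᵥ q' := by
    have := dotProduct_lt_one hq (q' := -q') (by simpa using hq') hne_neg
    rw [dotProduct_neg] at this
    linarith
  set c := q ⬝ᵥ q' with hc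
  have hcos : cos (arccos c) = c := Real.cos_arccos hgt.le hlt.le
  have hT : 0 < arccos c := Real.arccos_pos.2 hlt
  have hTπ : arccos c < π := (Real.arccos_le_pi c).lt_of_ne fun h => by
    rw [h, Real.cos_pi] at hcos
    exact hgt.ne hcos
  have hsin : 0 < sin (arccos c) := Real.sin_pos_of_pos_of_lt_pi hT hTπ
  have hsin_sq : sin (arccos c) ^ 2 = 1 - c ^ 2 := by rw [Real.sin_sq, hcos]
  refine ⟨(sin (arccos c))⁻¹ • (q' - c • q), arccos c, ?_, ?_, hT, hTπ, ?_⟩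
  · simp only [smul_dotProduct, dotProduct_smul, sub_dotProduct, dotProduct_sub, hq, hq',
      dotProduct_comm q' q, ← hc, smul_eq_mul]
    field_simp
    linarith
  · simp only [dotProduct_smul, dotProduct_sub, hq, ← hc, smul_eq_mul]
    ring
  · rw [circleArc, hcos, smul_inv_smul₀ hsin.ne', zero_add, add_sub_cancel]

end GreatCircle

lemma sin_smul_circleArc {ι : Type*} (a b : ι → ℝ) (t T : ℝ) :
    sin T • circleArc 0 a b t = sin (T - t) • a + sin t • circleArc 0 a b T := by
  ext l
  simp only [circleArc, Pi.add_apply, Pi.smul_apply, Pi.zero_apply, smul_eq_mul, Real.sin_sub]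
  ring

lemma sin_le_sin_sub_add_sin {t T : ℝ} (h0 : 0 ≤ t) (htT : t ≤ T) (hT : T ≤ π) :
    sin T ≤ sin (T - t) + sin t := by
  have hsin_t : 0 ≤ sin t := Real.sin_nonneg_of_nonneg_of_le_pi h0 (htT.trans hT)
  have hsin_sub : 0 ≤ sin (T - t) :=
    Real.sin_nonneg_of_nonneg_of_le_pi (by linarith) (by linarith)
  calc sin T = sin (T - t) * cos t + cos (T - t) * sin t := by rw [← Real.sin_add, sub_add_cancel]
    _ ≤ sin (T - t) + sin t := add_le_add (mul_le_of_le_one_right hsin_sub (Real.cos_le_one t))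
      (mul_le_of_le_one_left hsin_t (Real.cos_le_one _))

lemma le_circleArc_apply {ι : Type*} {a b : ι → ℝ} {κ t T : ℝ} {l : ι} (hκ : 0 ≤ κ)
    (ha : κ ≤ a l) (hT_end : κ ≤ circleArc 0 a b T l) (h0 : 0 ≤ t) (htT : t ≤ T) (hT : 0 < T)
    (hTπ : T < π) : κ ≤ circleArc 0 a b t l := by
  have hsin_t : 0 ≤ sin t := Real.sin_nonneg_of_nonneg_of_le_pi h0 (htT.trans hTπ.le)
  have hsin_sub : 0 ≤ sin (T - t) :=
    Real.sin_nonneg_of_nonneg_of_le_pi (by linarith) (by linarith)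
  refine le_of_mul_le_mul_left ?_ (Real.sin_pos_of_pos_of_lt_pi hT hTπ)
  calc sin T * κ ≤ (sin (T - t) + sin t) * κ := by
        gcongr
        exact sin_le_sin_sub_add_sin h0 htT hTπ.le
    _ ≤ sin (T - t) * a l + sin t * circleArc 0 a b T l := by
      rw [add_mul]
      gcongr
    _ = sin T * circleArc 0 a b t l := (congrFun (sin_smul_circleArc a b t T) l).symm

section PolarCap

variable {ι : Type*} [Fintype ι] [DecidableEq ι] {q q' : ι → ℝ} {i : ι} {r : ℝ}

/-- The closed cap of the unit sphere around the pole `e_i` whose points are at Euclidean distance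
at most `r` from the axis through `e_i`. -/
def polarCap (i : ι) (r : ℝ) : Set (ι → ℝ) :=
  {q | q ⬝ᵥ q = 1 ∧ 0 ≤ q i ∧ ∑ k ∈ {i}ᶜ, q k ^ 2 ≤ r ^ 2}

lemma sq_add_sum_compl_eq_one (hq : q ⬝ᵥ q = 1) (i : ι) :
    q i ^ 2 + ∑ k ∈ {i}ᶜ, q k ^ 2 = 1 := by
  rw [sq_add_sum_compl, ← dotProduct_self_eq_sum_sq, hq]

lemma mem_polarCap_iff_sqrt_le (hq : q ⬝ᵥ q = 1) :
    q ∈ polarCap i r ↔ √(1 - r ^ 2) ≤ q i := by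
  rw [Real.sqrt_le_iff, ← sq_add_sum_compl_eq_one hq i, sub_le_iff_le_add, add_le_add_iff_left]
  exact and_iff_right hq

lemma polarCap_mono {r' : ℝ} (hr : 0 ≤ r) (hrr' : r ≤ r') : polarCap i r ⊆ polarCap i r' :=
  fun _ hq => ⟨hq.1, hq.2.1, hq.2.2.trans (by gcongr)⟩

lemma half_le_of_mem_polarCap (hr : 0 ≤ r) (hr_half : r ≤ 1 / 2) (hq : q ∈ polarCap i r) :
    1 / 2 ≤ q i ∧ 3 / 4 ≤ q i ^ 2 := by
  have hsq : 3 / 4 ≤ q i ^ 2 := by nlinarith [sq_add_sum_compl_eq_one hq.1 i, hq.2.2]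
  exact ⟨by nlinarith [hq.2.1], hsq⟩

lemma single_mem_polarCap (i : ι) (r : ℝ) : Pi.single i 1 ∈ polarCap i r := by
  rw [mem_polarCap_iff_sqrt_le (by simp), Pi.single_eq_same]
  exact Real.sqrt_le_one.2 (sub_le_self _ (sq_nonneg r))

lemma isCompact_polarCap (i : ι) (r : ℝ) : IsCompact (polarCap i r) := by
  refine (isCompact_closedBall (0 : ι → ℝ) 1).of_isClosed_subset ?_ fun q hq => ?_
  · have hsphere : IsClosed {q : ι → ℝ | q ⬝ᵥ q = 1} :=
      isClosed_eq (by unfold dotProduct; fun_prop) continuous_const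
    have hsum : IsClosed {q : ι → ℝ | ∑ k ∈ {i}ᶜ, q k ^ 2 ≤ r ^ 2} :=
      isClosed_le (by fun_prop) continuous_const
    exact hsphere.inter ((isClosed_le continuous_const (continuous_apply i)).inter hsum)
  · rw [mem_closedBall_zero_iff, pi_norm_le_iff_of_nonneg zero_le_one]
    have hsum : ∑ l, q l ^ 2 ≤ 1 := by rw [← dotProduct_self_eq_sum_sq, hq.1]
    exact fun l => abs_le_one_of_sum_sq_le_one hsum l

lemma greatCircle_mem_polarCap {b : ι → ℝ} {t T : ℝ} (hb : b ⬝ᵥ b = 1) (hqb : q ⬝ᵥ b = 0)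
    (hq : q ∈ polarCap i r) (hT_mem : circleArc 0 q b T ∈ polarCap i r) (h0 : 0 ≤ t) (htT : t ≤ T)
    (hT : 0 < T) (hTπ : T < π) : circleArc 0 q b t ∈ polarCap i r := by
  rw [mem_polarCap_iff_sqrt_le (greatCircle_dotProduct_self hq.1 hb hqb t)]
  exact le_circleArc_apply (Real.sqrt_nonneg _) ((mem_polarCap_iff_sqrt_le hq.1).1 hq)
    ((mem_polarCap_iff_sqrt_le hT_mem.1).1 hT_mem) h0 htT hT hTπ

lemma dotProduct_axisDir (q : ι → ℝ) (i : ι) : q ⬝ᵥ axisDir q i = 0 := by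
  unfold dotProduct
  rw [← Finset.sum_add_sum_compl {i}, Finset.sum_singleton]
  have hcompl : ∑ k ∈ {i}ᶜ, q k * axisDir q i k = q i * ∑ k ∈ {i}ᶜ, q k ^ 2 := by
    rw [Finset.mul_sum]
    refine Finset.sum_congr rfl fun k hk => ?_
    rw [axisDir, if_neg (by simpa using hk)]
    ring
  rw [hcompl, axisDir, if_pos rfl]
  ring

lemma sum_sq_axisDir (hq : q ⬝ᵥ q = 1) (i : ι) :
    ∑ l, axisDir q i l ^ 2 = ∑ k ∈ {i}ᶜ, q k ^ 2 := by
  have hcompl : ∑ k ∈ {i}ᶜ, axisDir q i k ^ 2 = q i ^ 2 * ∑ k ∈ {i}ᶜ, q k ^ 2 := by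
    rw [Finset.mul_sum]
    refine Finset.sum_congr rfl fun k hk => ?_
    rw [axisDir, if_neg (by simpa using hk)]
    ring
  rw [← sq_add_sum_compl _ i, hcompl, axisDir, if_pos rfl]
  linear_combination (∑ k ∈ {i}ᶜ, q k ^ 2) * sq_add_sum_compl_eq_one hq i

variable {p : ℕ} {μ : ℝ} {X : Fin p → ι → ℝ}

lemma eventually_lt_left_of_hasDerivAt_pos {g : ℝ → ℝ} {d x : ℝ} (hg : HasDerivAt g d x)
    (hd : 0 < d) : ∀ᶠ t in nhdsWithin x (Set.Iio x), g t < g x := by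
  have hslope := (hasDerivAt_iff_tendsto_slope.1 hg).eventually (lt_mem_nhds hd)
  filter_upwards [hslope.filter_mono (nhdsLT_le_nhdsNE x), self_mem_nhdsWithin] with t ht htx
  exact (slope_pos_iff_gt htx).1 ht

/-- Moving backwards along the great circle through `q` with velocity `axisDir q i` decreases the
objective and approaches the pole. -/
lemma exists_mem_polarCap_objective_lt (hμ : μ ≠ 0) (hr : 0 < r) (hq : q ⬝ᵥ q = 1)
    (hqi : 0 ≤ q i) (hboundary : ∑ k ∈ {i}ᶜ, q k ^ 2 = r ^ 2)
    (hslope : 0 < empSlope μ X q (axisDir q i)) :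
    ∃ q' ∈ polarCap i r, objective μ X q' < objective μ X q := by
  set v := r⁻¹ • axisDir q i with hv
  have hvv : v ⬝ᵥ v = 1 := by
    rw [hv, smul_dotProduct, dotProduct_smul, dotProduct_self_eq_sum_sq, sum_sq_axisDir hq,
      hboundary, smul_eq_mul, smul_eq_mul]
    field_simp
  have hqv : q ⬝ᵥ v = 0 := by rw [hv, dotProduct_smul, dotProduct_axisDir, smul_zero]
  have hvi : v i = -r := by
    rw [hv, Pi.smul_apply, axisDir, if_pos rfl, hboundary, smul_eq_mul]
    field_simp
  have hdescent := hasDerivAt_objective_circleArc X hμ 0 q v 0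
  have hpole := (hasDerivAt_circleArc_dotProduct 0 q v (Pi.single i 1) 0).neg
  simp only [circleArc_zero, circleVelocity_zero, zero_add] at hdescent hpole
  rw [hv, empSlope_smul, ← hv] at hdescent
  rw [dotProduct_single_one, hvi, neg_neg] at hpole
  obtain ⟨t, ht_obj, ht_pole⟩ :=
    ((eventually_lt_left_of_hasDerivAt_pos hdescent (by positivity)).and
      (eventually_lt_left_of_hasDerivAt_pos hpole hr)).exists
  simp only [dotProduct_single_one, Pi.neg_apply, circleArc_zero, zero_add, neg_lt_neg_iff]
    at ht_obj ht_pole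
  refine ⟨_, ?_, ht_obj⟩
  rw [mem_polarCap_iff_sqrt_le (greatCircle_dotProduct_self hq hvv hqv t)]
  exact ((mem_polarCap_iff_sqrt_le hq).1 ⟨hq, hqi, hboundary.le⟩).trans ht_pole.le

lemma exists_isSphereLocalMin_mem_polarCap_of_empSlope_pos (hμ : μ ≠ 0) (hr : 0 < r) (hr1 : r ≤ 1)
    (hslope : ∀ q ∈ polarCap i r, ∑ k ∈ {i}ᶜ, q k ^ 2 = r ^ 2 →
      0 < empSlope μ X q (axisDir q i)) :
    ∃ q ∈ polarCap i r, IsSphereLocalMin μ X q := by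
  obtain ⟨q, hq, hmin⟩ := (isCompact_polarCap i r).exists_isMinOn ⟨_, single_mem_polarCap i r⟩
    (continuous_objective (μ := μ) (X := X)).continuousOn
  refine ⟨q, hq, hq.1, ?_⟩
  rcases ((mem_polarCap_iff_sqrt_le hq.1).1 hq).lt_or_eq with hinterior | hboundary
  · filter_upwards [(continuous_apply i).continuousAt.eventually_const_lt hinterior]
      with q' hq' hunit
    exact hmin ((mem_polarCap_iff_sqrt_le hunit).2 hq'.le)
  · have hsum : ∑ k ∈ {i}ᶜ, q k ^ 2 = r ^ 2 := by
      have hr_sq : 0 ≤ 1 - r ^ 2 := by nlinarith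
      linarith [sq_add_sum_compl_eq_one hq.1 i, congrArg (· ^ 2) hboundary, Real.sq_sqrt hr_sq]
    obtain ⟨q', hq', hlt⟩ :=
      exists_mem_polarCap_objective_lt hμ hr hq.1 hq.2.1 hsum (hslope q hq hsum)
    exact absurd (hmin hq') hlt.not_ge

end PolarCap

section PolarCapMinimizers

variable {n p : ℕ} {δ θ μ ε ρ : ℝ} {X : Fin p → Fin n → ℝ} {q q' v : Fin n → ℝ} {i : Fin n}

namespace WellSampled

lemma eps_le_mul_theta (h : WellSampled δ θ μ ε X) : ε ≤ δ * (μ * θ) := by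
  have := h.theta_pos
  have := h.mu_pos
  have := h.delta_pos
  have hdiv : μ * θ / n ≤ μ * θ := by
    rw [← mul_one_div]
    exact mul_le_of_le_one_right (by positivity) h.one_div_dim_le_one
  exact h.eps_le.trans (by gcongr)

lemma eps_le_of_mu_le_one (h : WellSampled δ θ μ ε X) (hμ : μ ≤ 1) : ε ≤ δ * θ :=
  h.eps_le_mul_theta.trans
    (mul_le_mul_of_nonneg_left (mul_le_of_le_one_left h.theta_pos.le hμ) h.delta_pos.le)

lemma eps_mul_mu_div_le {c : ℝ} (h : WellSampled (c / 16) θ μ ε X) (hμ : μ ≤ 1) :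
    ε * μ / (c * θ) ≤ μ / 16 := by
  have hc : 0 < c := by linarith [h.delta_pos]
  have hμ_pos := h.mu_pos
  have hθ := h.theta_pos
  rw [div_le_iff₀ (by positivity)]
  calc ε * μ ≤ c / 16 * θ * μ := by
        gcongr
        exact h.eps_le_of_mu_le_one hμ
    _ = μ / 16 * (c * θ) := by ring

lemma mu_le_mul_theta (h : WellSampled δ θ μ ε X) : μ ≤ δ * θ := by
  have := h.delta_pos
  have hdiv : θ / n ≤ θ := by
    rw [← mul_one_div]
    exact mul_le_of_le_one_right h.theta_pos.le h.one_div_dim_le_one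
  exact h.mu_le.trans (by gcongr)

end WellSampled

lemma IsSphereLocalMin.meanSlope_axisDir_le (hclose : UniformlyClose θ μ ε X) (hμ : μ ≠ 0)
    (h : IsSphereLocalMin μ X q) (hρ : 0 ≤ ρ) (hsum : ∑ k ∈ {i}ᶜ, q k ^ 2 = ρ ^ 2) :
    meanSlope θ μ q (axisDir q i) ≤ ε * ρ := by
  have hslope := (hclose q (axisDir q i) ρ h.sum_sq.le hρ (by rw [sum_sq_axisDir h.1, hsum])).1
  rw [h.empSlope_eq_zero hμ (dotProduct_axisDir q i), zero_sub, abs_neg] at hslope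
  exact (le_abs_self _).trans hslope

lemma exists_polarCap_radius : ∃ δ r₀ c : ℝ, 0 < δ ∧ 0 < r₀ ∧ r₀ ≤ 1 / 2 ∧ 0 < c ∧
    ∀ {n p : ℕ} {θ μ ε : ℝ} {X : Fin p → Fin n → ℝ} {q : Fin n → ℝ} {i : Fin n},
      WellSampled δ θ μ ε X → IsSphereLocalMin μ X q → q ∈ polarCap i r₀ →
      q ∈ polarCap i (min (ε * μ / (c * θ)) (μ / 16)) := by
  obtain ⟨c, δ₀, hc, hδ₀, hslope⟩ := exists_meanSlope_axisDir_ge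
  refine ⟨min (c / 16) (min 1 δ₀), min δ₀ (1 / 2), c, by positivity, by positivity,
    min_le_right _ _, hc, ?_⟩
  intro n p θ μ ε X q i hX h hq
  have hθ := hX.theta_pos
  have hμ := hX.mu_pos
  have hε := hX.eps_nonneg
  have hμ_le : μ ≤ min 1 δ₀ := (hX.mono (min_le_right _ _)).mu_le_delta
  have hμ_one : μ ≤ 1 := hμ_le.trans (min_le_left _ _)
  have hε_le : ε ≤ c / 16 * θ := (hX.mono (min_le_left _ _)).eps_le_of_mu_le_one hμ_one
  obtain ⟨hqi, hqi_sq⟩ := half_le_of_mem_polarCap (by positivity) (min_le_right _ _) hq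
  set ρ := √(∑ k ∈ {i}ᶜ, q k ^ 2)
  have hρ : 0 ≤ ρ := Real.sqrt_nonneg _
  have hρ_sq : ∑ k ∈ {i}ᶜ, q k ^ 2 = ρ ^ 2 := (Real.sq_sqrt (by positivity)).symm
  have hρ_le : ρ ≤ δ₀ := (Real.sqrt_le_iff.2 ⟨by positivity, hq.2.2⟩).trans (min_le_left _ _)
  have hupper := h.meanSlope_axisDir_le hX.close hμ.ne' hρ hρ_sq
  obtain ⟨hnear, hfar⟩ := hslope hθ hX.theta_le_half hμ (hμ_le.trans (min_le_right _ _)) hqi hqi_sq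
    hρ hρ_sq hρ_le
  have hρ_bound : ρ ≤ ε * μ / (c * θ) := by
    rcases hρ.eq_or_lt with h0 | hpos
    · rw [← h0]
      positivity
    rcases le_total ρ μ with hρμ | hμρ
    · rw [le_div_iff₀ (by positivity)]
      have := (div_le_iff₀ hμ).1 ((hnear hρμ).trans hupper)
      exact le_of_mul_le_mul_left (by linarith) hpos
    · have : c * θ ≤ ε := le_of_mul_le_mul_right ((hfar hμρ).trans hupper) hpos
      have : 0 < c * θ := by positivity
      linarith
  have hratio := (hX.mono (min_le_left _ _)).eps_mul_mu_div_le hμ_one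
  refine ⟨hq.1, hq.2.1, ?_⟩
  rw [min_eq_left hratio, hρ_sq]
  gcongr

lemma exists_isSphereLocalMin_mem_polarCap {r₀ : ℝ} (hr₀ : 0 < r₀) : ∃ δ : ℝ, 0 < δ ∧
    ∀ {n p : ℕ} {θ μ ε : ℝ} {X : Fin p → Fin n → ℝ}, WellSampled δ θ μ ε X → ∀ i,
      ∃ q ∈ polarCap i r₀, IsSphereLocalMin μ X q := by
  obtain ⟨c, δ₀, hc, hδ₀, hslope⟩ := exists_meanSlope_axisDir_ge
  refine ⟨min (c / 2) (min (min (1 / 2) δ₀) r₀), by positivity, ?_⟩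
  intro n p θ μ ε X hX i
  have hθ := hX.theta_pos
  have hμ := hX.mu_pos
  have hμ_le : μ ≤ min (min (1 / 2) δ₀) r₀ := (hX.mono (min_le_right _ _)).mu_le_delta
  obtain ⟨⟨hμ_half, hμδ₀⟩, hμr₀⟩ : (μ ≤ 1 / 2 ∧ μ ≤ δ₀) ∧ μ ≤ r₀ := by simpa using hμ_le
  have hε : ε ≤ c / 2 * θ := (hX.mono (min_le_left _ _)).eps_le_of_mu_le_one (by linarith)
  obtain ⟨q, hq, h⟩ := exists_isSphereLocalMin_mem_polarCap_of_empSlope_pos (X := X) (i := i)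
    hμ.ne' hμ (by linarith) fun q hq hboundary => by
      obtain ⟨hqi, hqi_sq⟩ := half_le_of_mem_polarCap hμ.le hμ_half hq
      have hmean := (hslope hθ hX.theta_le_half hμ hμδ₀ hqi hqi_sq hμ.le hboundary hμδ₀).2 le_rfl
      have hclose := (hX.close q (axisDir q i) μ (by rw [← dotProduct_self_eq_sum_sq, hq.1]) hμ.le
        (by rw [sum_sq_axisDir hq.1, hboundary])).1
      have hgap : ε * μ < c * θ * μ := by
        gcongr
        have : 0 < c * θ := by positivity
        linarith
      linarith [(abs_le.1 hclose).1]
  exact ⟨q, polarCap_mono hμ.le hμr₀ hq, h⟩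

lemma three_quarters_le_sum_compl (hq : q ⬝ᵥ q = 1) (hv : v ⬝ᵥ v = 1) (hqv : q ⬝ᵥ v = 0)
    (hcap : ∑ k ∈ {i}ᶜ, q k ^ 2 ≤ 1 / 4) : 3 / 4 ≤ ∑ k ∈ {i}ᶜ, v k ^ 2 := by
  have hdot : q i * v i + ∑ k ∈ {i}ᶜ, q k * v k = 0 := by
    rw [← hqv, dotProduct, ← Finset.sum_add_sum_compl {i}, Finset.sum_singleton]
  have hcauchy := Finset.sum_mul_sq_le_sq_mul_sq ({i}ᶜ : Finset (Fin n)) q v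
  rw [eq_neg_of_add_eq_zero_right hdot, neg_sq, mul_pow] at hcauchy
  nlinarith [sq_add_sum_compl_eq_one hq i, sq_add_sum_compl_eq_one hv i]

lemma exists_le_empCurv : ∃ δ m : ℝ, 0 < δ ∧ 0 < m ∧
    ∀ {n p : ℕ} {θ μ ε : ℝ} {X : Fin p → Fin n → ℝ} {q v : Fin n → ℝ} {i : Fin n},
      WellSampled δ θ μ ε X → q ∈ polarCap i μ → v ⬝ᵥ v = 1 → q ⬝ᵥ v = 0 →
      m * θ ≤ empCurv μ X q v := by
  have hm : 0 < min (meanSech2 1) (meanSech2MulSq 1) :=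
    lt_min (meanSech2_pos 1) (meanSech2MulSq_pos 1)
  set m := min (meanSech2 1) (meanSech2MulSq 1)
  refine ⟨min (1 / 2) (m / 8), m / 4, by positivity, by positivity, ?_⟩
  intro n p θ μ ε X q v i hX hq hv hqv
  have hθ := hX.theta_pos
  have hμ := hX.mu_pos
  have hμ_half : μ ≤ 1 / 2 := (hX.mono (min_le_left _ _)).mu_le_delta
  have hε : ε ≤ m / 8 * θ := (hX.mono (min_le_right _ _)).eps_le_of_mu_le_one (by linarith)
  have hv_off : 3 / 4 ≤ ∑ k ∈ {i}ᶜ, v k ^ 2 :=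
    three_quarters_le_sum_compl hq.1 hv hqv (hq.2.2.trans (by nlinarith))
  have hmean : 3 / 8 * (m * θ) ≤ meanCurv θ μ q v := by
    calc 3 / 8 * (m * θ) = m * (θ * (1 - 1 / 2)) * (3 / 4) := by ring
      _ ≤ m * (θ * (1 - θ)) * ∑ k ∈ {i}ᶜ, v k ^ 2 := by
        have : 0 ≤ 1 - θ := sub_nonneg.2 hX.theta_le_one
        gcongr
        exact hX.theta_le_half
      _ ≤ meanCurv θ μ q v := le_meanCurv hμ hθ.le hX.theta_le_one v hq.2.2
  have hclose := (hX.close q v 1 (by rw [← dotProduct_self_eq_sum_sq, hq.1]) zero_le_one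
    (by rw [← dotProduct_self_eq_sum_sq, hv, one_pow])).2
  linarith [(abs_le.1 hclose).1]

lemma WellSampled.empSlope_self_le (hX : WellSampled 1 θ μ ε X) (hq : q ⬝ᵥ q = 1) :
    empSlope μ X q q ≤ sech2Mass + 1 := by
  have hq_sq : ∑ l, q l ^ 2 = 1 := by rw [← dotProduct_self_eq_sum_sq, hq]
  have hε : ε ≤ 1 := (hX.eps_le_of_mu_le_one hX.mu_le_delta).trans (by linarith [hX.theta_le_one])
  have hclose := (hX.close q q 1 hq_sq.le zero_le_one (by rw [hq_sq, one_pow])).1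
  have hmean := meanSlope_self_le hX.mu_pos hX.theta_pos.le hX.theta_le_one hq_sq.le
  linarith [(abs_le.1 hclose).2]

/-- The displayed quantity is the second derivative of the objective along the unit-speed great
circle leaving `q` in the direction `v`. -/
lemma exists_curvature_pos_of_mem_polarCap : ∃ δ : ℝ, 0 < δ ∧
    ∀ {n p : ℕ} {θ μ ε : ℝ} {X : Fin p → Fin n → ℝ} {q v : Fin n → ℝ} {i : Fin n},
      WellSampled δ θ μ ε X → q ∈ polarCap i μ → v ⬝ᵥ v = 1 → q ⬝ᵥ v = 0 →
      0 < empCurv μ X q v / μ - empSlope μ X q q := by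
  obtain ⟨δ₀, m, hδ₀, hm, hcurv⟩ := exists_le_empCurv
  have hmass : 0 < sech2Mass + 1 := by linarith [sech2Mass_nonneg]
  refine ⟨min δ₀ (min 1 (m / (2 * (sech2Mass + 1)))), by positivity, ?_⟩
  intro n p θ μ ε X q v i hX hq hv hqv
  have hcurv_le := hcurv (hX.mono (min_le_left _ _)) hq hv hqv
  have hX' := hX.mono (min_le_right _ _)
  have hslope_le := (hX'.mono (min_le_left _ _)).empSlope_self_le hq.1
  have hμ_le := (hX'.mono (min_le_right _ _)).mu_le_mul_theta
  rw [div_mul_eq_mul_div, le_div_iff₀ (by positivity)] at hμ_le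
  have : 2 * (sech2Mass + 1) ≤ empCurv μ X q v / μ := by
    rw [le_div_iff₀ hX.mu_pos]
    linarith
  linarith

/-- By Rolle's theorem, between two critical points on a great circle the second derivative of the
objective along the circle vanishes somewhere. -/
lemma exists_eq_of_mem_polarCap : ∃ δ : ℝ, 0 < δ ∧
    ∀ {n p : ℕ} {θ μ ε : ℝ} {X : Fin p → Fin n → ℝ} {q q' : Fin n → ℝ} {i : Fin n},
      WellSampled δ θ μ ε X → IsSphereLocalMin μ X q → IsSphereLocalMin μ X q' →
      q ∈ polarCap i μ → q' ∈ polarCap i μ → q = q' := by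
  obtain ⟨δ, hδ, hcurv⟩ := exists_curvature_pos_of_mem_polarCap
  refine ⟨min δ (1 / 2), by positivity, ?_⟩
  intro n p θ μ ε X q q' i hX h h' hq hq'
  by_contra hne
  have hμ := hX.mu_pos
  have hμ_half : μ ≤ 1 / 2 := (hX.mono (min_le_right _ _)).mu_le_delta
  have hne_neg : q ≠ -q' := fun heq => by
    have hqi := (half_le_of_mem_polarCap hμ.le hμ_half hq).1
    rw [heq, Pi.neg_apply] at hqi
    linarith [hq'.2.1]
  obtain ⟨b, T, hb, hqb, hT, hTπ, hend⟩ := exists_greatCircle_eq hq.1 hq'.1 hne hne_neg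
  have horth := greatCircle_dotProduct_velocity hq.1 hb hqb
  have hstart : circleArc 0 q b 0 = q := by rw [circleArc_zero, zero_add]
  have hslope_start : empSlope μ X (circleArc 0 q b 0) (circleVelocity q b 0) = 0 :=
    (hstart.symm ▸ h).empSlope_eq_zero hμ.ne' (horth 0)
  have hslope_end : empSlope μ X (circleArc 0 q b T) (circleVelocity q b T) = 0 :=
    (hend.symm ▸ h').empSlope_eq_zero hμ.ne' (horth T)
  have hderiv := hasDerivAt_empSlope_circleArc X μ 0 q b
  obtain ⟨t, ht, hzero⟩ := exists_hasDerivAt_eq_zero hT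
    (fun t _ => (hderiv t).continuousAt.continuousWithinAt) (hslope_start.trans hslope_end.symm)
    fun t _ => hderiv t
  have hcap : circleArc 0 q b t ∈ polarCap i μ :=
    greatCircle_mem_polarCap hb hqb hq (hend.symm ▸ hq') ht.1.le ht.2.le hT hTπ
  have hpos := hcurv (hX.mono (min_le_left _ _)) hcap
    (circleVelocity_dotProduct_self hq.1 hb hqb t) (horth t)
  have hradial : cos t • q + sin t • b = circleArc 0 q b t := by rw [circleArc, zero_add]
  rw [hradial] at hzero
  exact hpos.ne' hzero

end PolarCapMinimizers

section SignedBasis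

lemma exists_bijOn_range {κ α β : Type*} [Nonempty β] {g : κ → α} {e : κ → β}
    (hg : Function.Injective g) (he : Function.Injective e) :
    ∃ F : α → β, Set.BijOn F (Set.range g) (Set.range e) ∧ ∀ x, F (g x) = e x := by
  refine ⟨Function.extend g e fun _ => Classical.arbitrary β, ⟨?_, ?_, ?_⟩, hg.extend_apply e _⟩
  · rintro _ ⟨x, rfl⟩
    exact ⟨x, (hg.extend_apply e _ x).symm⟩
  · rintro _ ⟨x, rfl⟩ _ ⟨y, rfl⟩ hxy
    rw [hg.extend_apply, hg.extend_apply] at hxy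
    rw [he hxy]
  · rintro _ ⟨x, rfl⟩
    exact ⟨g x, ⟨x, rfl⟩, hg.extend_apply e _ x⟩

lemma injective_units_smul {ι : Type*} {g : ι → EuclideanSpace ℝ ι} (hpos : ∀ i, 0 < g i i)
    (hlt : ∀ i j, i ≠ j → |g i j| < g j j) :
    Function.Injective fun x : ι × ℤˣ => x.2 • g x.1 := by
  rintro ⟨i, s⟩ ⟨j, t⟩ (h : s • g i = t • g j)
  have hj : s • g i j = t • g j j := congrArg (fun q : EuclideanSpace ℝ ι => q j) h
  have hnorm : |g i j| = |g j j| := by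
    simpa only [norm_units_zsmul, Real.norm_eq_abs] using congrArg norm hj
  obtain rfl : i = j := by
    by_contra hne
    exact (hlt i j hne).ne (hnorm.trans (abs_of_pos (hpos j)))
  rw [Units.ext (smul_left_injective ℤ (hpos i).ne' hj)]

lemma signedBasis_eq_range (n : ℕ) :
    SignedBasis n = Set.range fun x : Fin n × ℤˣ => x.2 • EuclideanSpace.single x.1 (1 : ℝ) := by
  ext b
  constructor
  · rintro ⟨i, rfl | rfl⟩
    · exact ⟨(i, 1), one_smul _ _⟩
    · exact ⟨(i, -1), by simp⟩
  · rintro ⟨⟨i, s⟩, rfl⟩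
    rcases Int.units_eq_one_or s with rfl | rfl
    · exact ⟨i, Or.inl (one_smul _ _)⟩
    · exact ⟨i, Or.inr (by simp)⟩

lemma norm_sub_single_le {ι : Type*} [Fintype ι] [DecidableEq ι] {q : EuclideanSpace ℝ ι} {i : ι}
    {r : ℝ} (hr : 0 ≤ r) (hq : q.ofLp ∈ polarCap i r) :
    ‖q - EuclideanSpace.single i (1 : ℝ)‖ ≤ √2 * r := by
  obtain ⟨hunit, hqi, hcap⟩ := hq
  have hnorm : ‖q‖ ^ 2 = 1 := by
    simp only [EuclideanSpace.real_norm_sq_eq, ← dotProduct_self_eq_sum_sq, hunit]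
  have hdist : ‖q - EuclideanSpace.single i (1 : ℝ)‖ ^ 2 = 2 - 2 * q i := by
    rw [norm_sub_sq_real, hnorm, EuclideanSpace.inner_single_right, PiLp.norm_single,
      norm_one, one_mul]
    simp only [conj_trivial]
    ring
  refine (abs_le_of_sq_le_sq' ?_ (by positivity)).2
  rw [hdist, mul_pow, Real.sq_sqrt zero_le_two]
  nlinarith [sq_add_sum_compl_eq_one hunit i, sq_nonneg (1 - q i)]

lemma abs_lt_of_mem_polarCap {ι : Type*} [Fintype ι] [DecidableEq ι] {q q' : ι → ℝ} {i j : ι}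
    {r : ℝ} (hr : 0 ≤ r) (hr_half : r ≤ 1 / 2) (hq : q ∈ polarCap i r) (hq' : q' ∈ polarCap j r)
    (hij : i ≠ j) : |q j| < q' j := by
  have hj : q j ^ 2 ≤ r ^ 2 :=
    (Finset.single_le_sum (f := fun k => q k ^ 2) (fun _ _ => sq_nonneg _)
      (by simpa using hij.symm)).trans hq.2.2
  refine abs_lt_of_sq_lt_sq ?_ hq'.2.1
  nlinarith [(half_le_of_mem_polarCap hr hr_half hq').2]

lemma exists_bijOn_signedBasis {n : ℕ} {L : Set (EuclideanSpace ℝ (Fin n))} {r : ℝ} (hr : 0 ≤ r)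
    (hr_half : r ≤ 1 / 2) (hneg : ∀ q ∈ L, -q ∈ L)
    (hcover : ∀ q ∈ L, ∃ i, q.ofLp ∈ polarCap i r ∨ (-q).ofLp ∈ polarCap i r)
    (hunique : ∀ i, ∃! q, q ∈ L ∧ q.ofLp ∈ polarCap i r) :
    L.ncard = 2 * n ∧ ∃ F : EuclideanSpace ℝ (Fin n) → EuclideanSpace ℝ (Fin n),
      Set.BijOn F L (SignedBasis n) ∧ ∀ q ∈ L, ‖q - F q‖ ≤ √2 * r := by
  choose g hg hg_eq using hunique
  have hg_inj : Function.Injective fun x : Fin n × ℤˣ => x.2 • g x.1 :=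
    injective_units_smul
      (fun i => by linarith [(half_le_of_mem_polarCap hr hr_half (hg i).2).1])
      fun i j => abs_lt_of_mem_polarCap hr hr_half (hg i).2 (hg j).2
  have he_inj : Function.Injective fun x : Fin n × ℤˣ => x.2 • EuclideanSpace.single x.1 (1 : ℝ) :=
    injective_units_smul (g := fun i => EuclideanSpace.single i 1) (by simp)
      fun i j hij => by simp [hij.symm]
  have hL : L = Set.range fun x : Fin n × ℤˣ => x.2 • g x.1 := by
    refine Set.Subset.antisymm (fun q hq => ?_) ?_
    · obtain ⟨i, hcap | hcap⟩ := hcover q hq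
      · exact ⟨(i, 1), by simp [hg_eq i q ⟨hq, hcap⟩]⟩
      · exact ⟨(i, -1), by simp [← hg_eq i (-q) ⟨hneg q hq, hcap⟩]⟩
    · rintro _ ⟨⟨i, s⟩, rfl⟩
      rcases Int.units_eq_one_or s with rfl | rfl
      · simpa using (hg i).1
      · simpa using hneg _ (hg i).1
  obtain ⟨F, hF, hF_apply⟩ := exists_bijOn_range hg_inj he_inj
  rw [← hL, ← signedBasis_eq_range] at hF
  refine ⟨?_, F, hF, ?_⟩
  · rw [hL, Set.ncard_range_of_injective hg_inj]
    simp [mul_comm]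
  · rw [hL]
    rintro _ ⟨⟨i, s⟩, rfl⟩
    rw [hF_apply, ← smul_sub, norm_units_zsmul]
    exact norm_sub_single_le hr (hg i).2

end SignedBasis

lemma exists_bijOn_localMins : ∃ δ c : ℝ, 0 < δ ∧ 0 < c ∧
    ∀ {n p : ℕ} {θ μ ε : ℝ} {X : Fin p → Fin n → ℝ}, WellSampled δ θ μ ε X →
      (LocalMins n p μ (Matrix.of fun i k => X k i)).ncard = 2 * n ∧
      ∃ F : EuclideanSpace ℝ (Fin n) → EuclideanSpace ℝ (Fin n),
        Set.BijOn F (LocalMins n p μ (Matrix.of fun i k => X k i)) (SignedBasis n) ∧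
        ∀ q ∈ LocalMins n p μ (Matrix.of fun i k => X k i),
          ‖q - F q‖ ≤ √2 * min (ε * μ / (c * θ)) (μ / 16) := by
  obtain ⟨δ₁, r₀, c, hδ₁, hr₀, -, hc, hradius⟩ := exists_polarCap_radius
  obtain ⟨δ₂, hδ₂, hlocalize⟩ := exists_sum_compl_le_of_isSphereLocalMin hr₀
  obtain ⟨δ₃, hδ₃, hexists⟩ := exists_isSphereLocalMin_mem_polarCap hr₀
  obtain ⟨δ₄, hδ₄, hunique⟩ := exists_eq_of_mem_polarCap
  refine ⟨min (min δ₁ δ₂) (min (min δ₃ δ₄) 1), c, by positivity, hc, ?_⟩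
  intro n p θ μ ε X hX
  have hX₁ := hX.mono ((min_le_left _ _).trans (min_le_left _ _))
  have hX₂ := hX.mono ((min_le_left _ _).trans (min_le_right _ _))
  have hX₃₄ := hX.mono ((min_le_right _ _).trans (min_le_left _ _))
  have hμ_one := (hX.mono ((min_le_right _ _).trans (min_le_right _ _))).mu_le_delta
  have hθ := hX.theta_pos
  have hμ := hX.mu_pos
  have hε := hX.eps_nonneg
  set r := min (ε * μ / (c * θ)) (μ / 16)
  have hr : 0 ≤ r := by positivity
  have hrμ : r ≤ μ / 16 := min_le_right _ _
  have hmem := mem_localMins_iff (μ := μ) X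
  refine exists_bijOn_signedBasis hr (by linarith) (fun q hq => (hmem _).2 ((hmem q).1 hq).neg)
    (fun q hq => ?_) fun i => ?_
  · have h := (hmem q).1 hq
    obtain ⟨i, hcap⟩ := hlocalize hX₂ h
    refine ⟨i, (le_total 0 (q i)).imp (fun hqi => hradius hX₁ h ⟨h.1, hqi, hcap⟩) fun hqi => ?_⟩
    exact hradius hX₁ h.neg ⟨h.neg.1, by simpa using hqi, by simpa using hcap⟩
  · obtain ⟨q, hq, h⟩ := hexists (hX₃₄.mono (min_le_left _ _)) i
    have hmono : polarCap i r ⊆ polarCap i μ := polarCap_mono hr (by linarith)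
    have hcap := hradius hX₁ h hq
    refine ⟨WithLp.toLp 2 q, ⟨(hmem _).2 h, hcap⟩, fun q' ⟨hq'L, hq'⟩ => ?_⟩
    exact WithLp.ofLp_injective 2
      (hunique (hX₃₄.mono (min_le_right _ _)) ((hmem _).1 hq'L) h (hmono hq') (hmono hcap))

theorem statement1_general :
    ∃ C ca cb cc : ℝ, 0 < C ∧ 0 < ca ∧ 0 < cb ∧ 0 < cc ∧
      ∀ (n p : ℕ) (θ μ : ℝ), 2 ≤ n → 0 < θ → θ ≤ 1 / 2 → 0 < μ → μ ≤ ca * (θ / n) →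
        C / (μ ^ 2 * θ ^ 2) * (n : ℝ) ^ 3 * Real.log ((n : ℝ) / (μ * θ)) ≤ (p : ℝ) →
        ENNReal.ofReal (1 - cb / (p : ℝ) ^ 5) ≤
          bgMatrix θ n p
            {X | (LocalMins n p μ (Matrix.of X)).ncard = 2 * n ∧
                 ∃ F : EuclideanSpace ℝ (Fin n) → EuclideanSpace ℝ (Fin n),
                   Set.BijOn F (LocalMins n p μ (Matrix.of X)) (SignedBasis n) ∧
                   ∀ q ∈ LocalMins n p μ (Matrix.of X),
                     ‖q - F q‖ ≤ Real.sqrt 2 *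
                       min (cc * μ / θ * Real.sqrt ((n : ℝ) * Real.log p / p)) (μ / 16)} := by
  obtain ⟨δ, c, hδ, hc, hbij⟩ := exists_bijOn_localMins
  obtain ⟨C, hC, hsize⟩ := exists_sample_size (δ := min 1 δ) (by positivity)
  have hproxy : 0 < statProxy := by linarith [le_statProxy, one_le_gaussianExpSqMoment]
  refine ⟨C, min 1 δ, 5, 640 * statProxy / c, hC, by positivity, by norm_num, by positivity, ?_⟩
  intro n p θ μ hn hθ hθ_half hμ hμ_le hp
  have hθn : θ / n ≤ 1 :=
    div_le_one_of_le₀ (by linarith [show (2 : ℝ) ≤ n by exact_mod_cast hn]) (by positivity)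
  have hμ_one : μ ≤ 1 := hμ_le.trans (mul_le_one₀ (min_le_left _ _) (by positivity) hθn)
  obtain ⟨hdev, hnp, hp3, hpμ⟩ := hsize n p θ μ hn hθ hθ_half hμ hμ_one hp
  have hdev_one : devLevel n p ≤ 1 := hdev.trans
    (mul_le_one₀ (min_le_left _ _) (by positivity)
      (by rw [mul_div_assoc]; exact mul_le_one₀ hμ_one (by positivity) hθn))
  refine le_bgMatrix_of_uniformlyClose hθ.le (by linarith) (by omega) hnp hp3 hμ hμ_one hpμ
    hdev_one fun X hX => ?_
  have hwell : WellSampled (min 1 δ) θ μ (devLevel n p) X :=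
    ⟨by omega, hθ, hθ_half, hμ, hμ_le, devLevel_nonneg n p, hdev, hX⟩
  have hradius : 640 * statProxy / c * μ / θ * √((n : ℝ) * Real.log p / p) =
      devLevel n p * μ / (c * θ) := by
    unfold devLevel
    field_simp
  rw [hradius]
  exact hbij (hwell.mono (min_le_right _ _))

/-- Corollary: 2n local minimizers on the sphere, orthogonal dictionary. -/
theorem statement1 :
    ∃ C ca cb cc : ℝ, 0 < C ∧ 0 < ca ∧ 0 < cb ∧ 0 < cc ∧
      ∀ (n p : ℕ) (θ μ : ℝ), 2 ≤ n → θ ∈ Set.Ioo (0 : ℝ) (1 / 2) → 0 < μ →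
        μ < ca * min (θ / n) ((n : ℝ) ^ (-(5 : ℝ) / 4)) →
        C / (μ ^ 2 * θ ^ 2) * (n : ℝ) ^ 3 * Real.log ((n : ℝ) / (μ * θ)) ≤ (p : ℝ) →
        ENNReal.ofReal (1 - cb / (p : ℝ) ^ 5) ≤
          bgMatrix θ n p
            {X | (LocalMins n p μ (Matrix.of X)).ncard = 2 * n ∧
                 ∃ F : EuclideanSpace ℝ (Fin n) → EuclideanSpace ℝ (Fin n),
                   Set.BijOn F (LocalMins n p μ (Matrix.of X)) (SignedBasis n) ∧
                   ∀ q ∈ LocalMins n p μ (Matrix.of X),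
                     ‖q - F q‖ ≤ Real.sqrt 2 *
                       min (cc * μ / θ * Real.sqrt ((n : ℝ) * Real.log p / p)) (μ / 16)} := by
  obtain ⟨C, ca, cb, cc, hC, hca, hcb, hcc, h⟩ := statement1_general
  exact ⟨C, ca, cb, cc, hC, hca, hcb, hcc, fun n p θ μ hn hθ hμ hμ_lt hp =>
    h n p θ μ hn hθ.1 hθ.2.le hμ (hμ_lt.le.trans (by gcongr; exact min_le_left _ _)) hp⟩

end
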